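/- Let u ∈ H¹(ℝ²) and let a* = ‖Q‖²_{L²}, where Q is the unique positive radial H¹ solution of −ΔQ + Q − Q³ = 0 on ℝ². Then ∫_{ℝ²}|u|⁴ ≤ (2/a*) (∫_{ℝ²}|∇u|²)(∫_{ℝ²}|u|²), and the constant is sharp. -/

import Mathlib

open MeasureTheory

/-- The Laplacian on ℝ², as the trace of the second derivative. -/
noncomputable def lap2 (f : EuclideanSpace ℝ (Fin 2) → ℝ)
    (x : EuclideanSpace ℝ (Fin 2)) : ℝ :=
  ∑ i : Fin 2,
    fderiv ℝ (fun y => fderiv ℝ f y (EuclideanSpace.single i (1 : ℝ))) x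
      (EuclideanSpace.single i (1 : ℝ))

/-!
Call `C` admissible if `∫ r f⁴ ≤ C ∫ r f'² ∫ r f²` on `(0, ∞)` for all nonincreasing, compactly
supported, Lipschitz profiles `f`. The Pólya–Szegő inequality, obtained from Brunn–Minkowski by
comparing the Hopf–Lax evolutions of a function and of its symmetric rearrangement, turns an
admissible `C` into the planar inequality with constant `C / 2π`. Normalized profiles decay
uniformly because they are monotone, which gives compactness; hence, if some constant is not
admissible, the optimal one is attained, at a limit which, after scaling, is a positive radial
ground state `u` of `-Δu + u - u³ = 0`. The Pohozaev identities `∫ r u⁴ = 2 ∫ r u²` and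
`∫ r u'² = ∫ r u²` show that its quotient is `2 / ∫ r u²`. By Yanagida's uniqueness argument, in
which the Wronskian of two ground states is controlled through a Pohozaev functional, `u` is the
profile of `Q`, so `2 / ∫ r Q²` is admissible, and the Pohozaev identities for `Q` give equality.
-/

open Filter Set Topology
open scoped Convolution NNReal

local notation "ℝ²" => EuclideanSpace ℝ (Fin 2)

section BrunnMinkowski

open scoped Pointwise

theorem volume_add_volume_le_volume_add_of_isCompact {K L : Set ℝ} (hK : IsCompact K)
    (hL : IsCompact L) (hK₀ : K.Nonempty) (hL₀ : L.Nonempty) :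
    volume K + volume L ≤ volume (K + L) := by
  obtain ⟨a, haK, ha⟩ := hK.exists_isGreatest hK₀
  obtain ⟨b, hbL, hb⟩ := hL.exists_isLeast hL₀
  -- The translates `K + b` and `a + L` lie in `K + L` and overlap only at `a + b`.
  have hdisj : AEDisjoint volume (K + {b}) ({a} + L) := by
    refine measure_mono_null (t := {a + b}) ?_ (measure_singleton _)
    simp only [add_singleton, singleton_add]
    rintro x ⟨⟨k, hk, rfl⟩, ⟨l, hl, hkl⟩⟩
    have hka : k ≤ a := ha hk
    have hbl : b ≤ l := hb hl
    exact le_antisymm (add_le_add_left hka b) ((add_le_add_right hbl a).trans_eq hkl)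
  calc volume K + volume L = volume (K + {b}) + volume ({a} + L) := by
        simp only [add_singleton, singleton_add, image_add_right, image_add_left,
          measure_preimage_add_right, measure_preimage_add]
    _ = volume ((K + {b}) ∪ ({a} + L)) :=
        (measure_union₀ (isCompact_singleton.add hL).measurableSet.nullMeasurableSet hdisj).symm
    _ ≤ volume (K + L) := measure_mono <|
        union_subset (add_subset_add_left (singleton_subset_iff.2 hbL))
          (add_subset_add_right (singleton_subset_iff.2 haK))

theorem volume_add_volume_le_volume_add {s t : Set ℝ} (hs : MeasurableSet s)
    (ht : MeasurableSet t) (hs₀ : s.Nonempty) (ht₀ : t.Nonempty) :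
    volume s + volume t ≤ volume (s + t) := by
  obtain ⟨x, hx⟩ := hs₀
  obtain ⟨y, hy⟩ := ht₀
  rw [hs.measure_eq_iSup_isCompact, ht.measure_eq_iSup_isCompact]
  simp only [iSup_and']
  refine ENNReal.biSup_add_biSup_le' ⟨∅, empty_subset _, isCompact_empty⟩
    ⟨∅, empty_subset _, isCompact_empty⟩ ?_
  rintro K ⟨hKs, hK⟩ L ⟨hLt, hL⟩
  calc volume K + volume L ≤ volume (insert x K) + volume (insert y L) := by
        gcongr <;> exact subset_insert _ _
    _ ≤ volume (insert x K + insert y L) :=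
        volume_add_volume_le_volume_add_of_isCompact (hK.insert x) (hL.insert y)
          (insert_nonempty _ _) (insert_nonempty _ _)
    _ ≤ volume (s + t) :=
        measure_mono (add_subset_add (insert_subset hx hKs) (insert_subset hy hLt))

/- Both suprema being equal to `1`, the superlevel sets of `f` and `g` at a given height are either
both nonempty or both empty, so the one-dimensional inequality applies at every height. -/
theorem lintegral_add_lintegral_le_of_superlevel_add_subset {f g h : ℝ → ℝ} (hf : Measurable f)
    (hg : Measurable g) (hh : Measurable h) (hf₀ : 0 ≤ f) (hg₀ : 0 ≤ g) (hh₀ : 0 ≤ h)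
    (hf₁ : IsLUB (range f) 1) (hg₁ : IsLUB (range g) 1)
    (hsub : ∀ s, 0 < s → {x | s < f x} + {x | s < g x} ⊆ {x | s < h x}) :
    (∫⁻ x, ENNReal.ofReal (f x)) + ∫⁻ x, ENNReal.ofReal (g x) ≤ ∫⁻ x, ENNReal.ofReal (h x) := by
  have hmeas : Measurable fun s => volume {x | s < f x} :=
    Antitone.measurable fun s t hst => measure_mono fun x hx => lt_of_le_of_lt hst hx
  rw [lintegral_eq_lintegral_meas_lt volume (.of_forall hf₀) hf.aemeasurable,
    lintegral_eq_lintegral_meas_lt volume (.of_forall hg₀) hg.aemeasurable,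
    lintegral_eq_lintegral_meas_lt volume (.of_forall hh₀) hh.aemeasurable,
    ← lintegral_add_left hmeas]
  refine setLIntegral_mono' measurableSet_Ioi fun s (hs : 0 < s) => ?_
  rcases lt_or_ge s 1 with hs1 | hs1
  · obtain ⟨_, ⟨x, rfl⟩, hx, -⟩ := hf₁.exists_between hs1
    obtain ⟨_, ⟨y, rfl⟩, hy, -⟩ := hg₁.exists_between hs1
    exact (volume_add_volume_le_volume_add (measurableSet_lt measurable_const hf)
      (measurableSet_lt measurable_const hg) ⟨x, hx⟩ ⟨y, hy⟩).trans (measure_mono (hsub s hs))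
  · have hf_empty : {x | s < f x} = ∅ :=
      eq_empty_of_forall_notMem fun x => ((hf₁.1 ⟨x, rfl⟩).trans hs1).not_gt
    have hg_empty : {x | s < g x} = ∅ :=
      eq_empty_of_forall_notMem fun x => ((hg₁.1 ⟨x, rfl⟩).trans hs1).not_gt
    simp only [hf_empty, hg_empty, measure_empty, add_zero, zero_le]

theorem isLUB_range_div_ciSup {ι : Type*} [Nonempty ι] {f : ι → ℝ} (hf : BddAbove (range f))
    (hpos : 0 < ⨆ i, f i) : IsLUB (range fun i => f i / ⨆ j, f j) 1 := by
  have h := (isLUB_ciSup hf).mul_left (inv_nonneg.2 hpos.le)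
  simpa only [div_eq_inv_mul, inv_mul_cancel₀ hpos.ne', ← range_comp, Function.comp_def] using h

/-- The length of the vertical slice of a plane set over the abscissa `x`. -/
noncomputable def sliceLength (A : Set (ℝ × ℝ)) (x : ℝ) : ℝ := volume.real (Prod.mk x ⁻¹' A)

variable {A B : Set (ℝ × ℝ)}

theorem sliceLength_nonneg (A : Set (ℝ × ℝ)) (x : ℝ) : 0 ≤ sliceLength A x := measureReal_nonneg

theorem measurable_sliceLength (hA : IsOpen A) : Measurable (sliceLength A) :=
  (measurable_measure_prodMk_left hA.measurableSet).ennreal_toReal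

theorem exists_slice_subset_closedBall (hA : Bornology.IsBounded A) :
    ∃ R, ∀ x, Prod.mk x ⁻¹' A ⊆ Metric.closedBall (0 : ℝ) R := by
  obtain ⟨R, hR⟩ := hA.subset_closedBall 0
  refine ⟨R, fun x y hy => ?_⟩
  have hxy : ‖(x, y)‖ ≤ R := mem_closedBall_zero_iff.1 (hR hy)
  exact mem_closedBall_zero_iff.2 ((le_max_right ‖x‖ ‖y‖).trans hxy)

theorem volume_slice_ne_top (hA : Bornology.IsBounded A) (x : ℝ) :
    volume (Prod.mk x ⁻¹' A) ≠ ⊤ :=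
  let ⟨_, hR⟩ := exists_slice_subset_closedBall hA
  measure_ne_top_of_subset (hR x) measure_closedBall_lt_top.ne

theorem bddAbove_range_sliceLength (hA : Bornology.IsBounded A) :
    BddAbove (range (sliceLength A)) := by
  obtain ⟨R, hR⟩ := exists_slice_subset_closedBall hA
  refine ⟨volume.real (Metric.closedBall (0 : ℝ) R), forall_mem_range.2 fun x => ?_⟩
  exact measureReal_mono (hR x) measure_closedBall_lt_top.ne

theorem ciSup_sliceLength_pos (hA : IsOpen A) (hA₀ : A.Nonempty) (hAb : Bornology.IsBounded A) :
    0 < ⨆ x, sliceLength A x := by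
  obtain ⟨⟨x, y⟩, hxy⟩ := hA₀
  have hpos : 0 < volume (Prod.mk x ⁻¹' A) :=
    (hA.preimage (Continuous.prodMk_right x)).measure_pos volume ⟨y, hxy⟩
  exact (ENNReal.toReal_pos hpos.ne' (volume_slice_ne_top hAb x)).trans_le
    (le_ciSup (bddAbove_range_sliceLength hAb) x)

theorem lintegral_ofReal_sliceLength_div (hA : IsOpen A) (hAb : Bornology.IsBounded A) {c : ℝ}
    (hc : 0 < c) :
    ∫⁻ x, ENNReal.ofReal (sliceLength A x / c) = ENNReal.ofReal (volume.real A / c) := by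
  simp only [ENNReal.ofReal_mul' (inv_nonneg.2 hc.le), div_eq_mul_inv]
  rw [lintegral_mul_const _ (measurable_sliceLength hA).ennreal_ofReal, Measure.real,
    ENNReal.ofReal_toReal hAb.measure_lt_top.ne, Measure.volume_eq_prod,
    Measure.prod_apply hA.measurableSet]
  simp only [sliceLength, Measure.real, ENNReal.ofReal_toReal (volume_slice_ne_top hAb _)]

theorem sliceLength_add_le (hA : IsOpen A) (hB : IsOpen B) (hAb : Bornology.IsBounded A)
    (hBb : Bornology.IsBounded B) {x y : ℝ} (hx : 0 < sliceLength A x)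
    (hy : 0 < sliceLength B y) :
    sliceLength A x + sliceLength B y ≤ sliceLength (A + B) (x + y) := by
  have hsub : Prod.mk x ⁻¹' A + Prod.mk y ⁻¹' B ⊆ Prod.mk (x + y) ⁻¹' (A + B) := by
    rintro _ ⟨a, ha, b, hb, rfl⟩
    exact ⟨(x, a), ha, (y, b), hb, rfl⟩
  have hle := (volume_add_volume_le_volume_add
    (hA.preimage (Continuous.prodMk_right x)).measurableSet
    (hB.preimage (Continuous.prodMk_right y)).measurableSet
    (nonempty_of_measureReal_ne_zero hx.ne') (nonempty_of_measureReal_ne_zero hy.ne')).trans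
    (measure_mono hsub)
  have := ENNReal.toReal_mono (volume_slice_ne_top (hAb.add hBb) (x + y)) hle
  rwa [ENNReal.toReal_add (volume_slice_ne_top hAb x) (volume_slice_ne_top hBb y)] at this

theorem measureReal_div_add_le_measureReal_add_div (hA : IsOpen A) (hB : IsOpen B)
    (hA₀ : A.Nonempty) (hB₀ : B.Nonempty) (hAb : Bornology.IsBounded A)
    (hBb : Bornology.IsBounded B) :
    volume.real A / (⨆ x, sliceLength A x) + volume.real B / (⨆ x, sliceLength B x) ≤
      volume.real (A + B) / ((⨆ x, sliceLength A x) + ⨆ x, sliceLength B x) := by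
  have hF := ciSup_sliceLength_pos hA hA₀ hAb
  have hG := ciSup_sliceLength_pos hB hB₀ hBb
  have hF₁ := isLUB_range_div_ciSup (bddAbove_range_sliceLength hAb) hF
  have hG₁ := isLUB_range_div_ciSup (bddAbove_range_sliceLength hBb) hG
  set F := ⨆ x, sliceLength A x
  set G := ⨆ x, sliceLength B x
  have key := lintegral_add_lintegral_le_of_superlevel_add_subset
    ((measurable_sliceLength hA).div_const F) ((measurable_sliceLength hB).div_const G)
    ((measurable_sliceLength (hB.add_left (s := A))).div_const (F + G))
    (fun x => div_nonneg (sliceLength_nonneg A x) hF.le)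
    (fun x => div_nonneg (sliceLength_nonneg B x) hG.le)
    (fun x => div_nonneg (sliceLength_nonneg _ x) (add_pos hF hG).le) hF₁ hG₁ (by
      rintro s hs _ ⟨x, hx : s < _ / F, y, hy : s < _ / G, rfl⟩
      rw [lt_div_iff₀ hF] at hx
      rw [lt_div_iff₀ hG] at hy
      change s < _ / (F + G)
      rw [lt_div_iff₀ (add_pos hF hG)]
      have := sliceLength_add_le hA hB hAb hBb ((mul_pos hs hF).trans hx) ((mul_pos hs hG).trans hy)
      linarith)
  rwa [lintegral_ofReal_sliceLength_div hA hAb hF, lintegral_ofReal_sliceLength_div hB hBb hG,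
    lintegral_ofReal_sliceLength_div hB.add_left (hAb.add hBb) (add_pos hF hG),
    ← ENNReal.ofReal_add (by positivity) (by positivity),
    ENNReal.ofReal_le_ofReal_iff (by positivity)] at key

theorem sqrt_measureReal_add_le_sqrt_measureReal_add (hA : IsOpen A) (hB : IsOpen B)
    (hA₀ : A.Nonempty) (hB₀ : B.Nonempty) (hAb : Bornology.IsBounded A)
    (hBb : Bornology.IsBounded B) :
    √(volume.real A) + √(volume.real B) ≤ √(volume.real (A + B)) := by
  have hF := ciSup_sliceLength_pos hA hA₀ hAb
  have hG := ciSup_sliceLength_pos hB hB₀ hBb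
  have hslice := measureReal_div_add_le_measureReal_add_div hA hB hA₀ hB₀ hAb hBb
  set F := ⨆ x, sliceLength A x
  set G := ⨆ x, sliceLength B x
  have htitu : (√(volume.real A) + √(volume.real B)) ^ 2 / (F + G) ≤
      √(volume.real A) ^ 2 / F + √(volume.real B) ^ 2 / G := by
    simpa [Fin.sum_univ_two] using Finset.sq_sum_div_le_sum_sq_div Finset.univ
      ![√(volume.real A), √(volume.real B)] (g := ![F, G]) (by simp [Fin.forall_fin_two, hF, hG])
  rw [Real.sq_sqrt measureReal_nonneg, Real.sq_sqrt measureReal_nonneg] at htitu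
  exact Real.le_sqrt_of_sq_le
    ((div_le_div_iff_of_pos_right (add_pos hF hG)).1 (htitu.trans hslice))

/-- The measure-preserving linear identification of the Euclidean plane with `ℝ × ℝ`. -/
noncomputable def planeEquivProd : ℝ² ≃L[ℝ] ℝ × ℝ :=
  (EuclideanSpace.equiv (Fin 2) ℝ).trans (ContinuousLinearEquiv.finTwoArrow ℝ ℝ)

theorem measureReal_image_planeEquivProd (S : Set ℝ²) :
    volume.real (planeEquivProd '' S) = volume.real S := by
  have hmp : MeasurePreserving planeEquivProd :=
    (volume_preserving_finTwoArrow ℝ).comp (PiLp.volume_preserving_ofLp (Fin 2))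
  rw [measureReal_def, measureReal_def, ← hmp.measure_preimage_emb
    planeEquivProd.toHomeomorph.measurableEmbedding, preimage_image_eq _ planeEquivProd.injective]

theorem brunnMinkowski_plane {A B : Set ℝ²} (hA : IsOpen A) (hB : IsOpen B) (hA₀ : A.Nonempty)
    (hB₀ : B.Nonempty) (hAb : Bornology.IsBounded A) (hBb : Bornology.IsBounded B) :
    √(volume.real A) + √(volume.real B) ≤ √(volume.real (A + B)) := by
  have hopen : ∀ {S : Set ℝ²}, IsOpen S → IsOpen (planeEquivProd '' S) :=
    fun h => planeEquivProd.toHomeomorph.isOpenMap _ h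
  have hbdd : ∀ {S : Set ℝ²}, Bornology.IsBounded S → Bornology.IsBounded (planeEquivProd '' S) :=
    fun h => planeEquivProd.lipschitz.isBounded_image h
  have := sqrt_measureReal_add_le_sqrt_measureReal_add (hopen hA) (hopen hB) (hA₀.image _)
    (hB₀.image _) (hbdd hAb) (hbdd hBb)
  rwa [← image_add, measureReal_image_planeEquivProd, measureReal_image_planeEquivProd,
    measureReal_image_planeEquivProd] at this

end BrunnMinkowski

section SupConvolution

variable {V : Type*} [NormedAddCommGroup V] {w : V → ℝ} {t : ℝ}

/-- The sup-convolution of `w` with the paraboloid of opening `1 / (4 * t)`: the Hopf–Lax solution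
at time `t` of `∂ₜ W = ‖∇ W‖ ^ 2` with initial datum `w`. -/
noncomputable def supConv (t : ℝ) (w : V → ℝ) (x : V) : ℝ := ⨆ y, (w y - ‖x - y‖ ^ 2 / (4 * t))

theorem bddAbove_range_sub_sq_norm_div (ht : 0 < t) (hw : BddAbove (range w)) (x : V) :
    BddAbove (range fun y => w y - ‖x - y‖ ^ 2 / (4 * t)) := by
  obtain ⟨M, hM⟩ := hw
  exact ⟨M, forall_mem_range.2 fun y =>
    (sub_le_self _ (by positivity)).trans (forall_mem_range.1 hM y)⟩

theorem lt_supConv_iff (ht : 0 < t) (hw : BddAbove (range w)) {x : V} {s : ℝ} :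
    s < supConv t w x ↔ ∃ y, s < w y - ‖x - y‖ ^ 2 / (4 * t) :=
  lt_ciSup_iff (bddAbove_range_sub_sq_norm_div ht hw x)

theorem le_supConv (ht : 0 < t) (hw : BddAbove (range w)) (x y : V) :
    w y - ‖x - y‖ ^ 2 / (4 * t) ≤ supConv t w x :=
  le_ciSup (bddAbove_range_sub_sq_norm_div ht hw x) y

theorem self_le_supConv (ht : 0 < t) (hw : BddAbove (range w)) (x : V) : w x ≤ supConv t w x := by
  simpa using le_supConv ht hw x x

theorem measurable_supConv [MeasurableSpace V] [BorelSpace V] (ht : 0 < t)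
    (hw : BddAbove (range w)) : Measurable (supConv t w) := by
  refine measurable_of_Ioi fun s => IsOpen.measurableSet ?_
  have hunion : supConv t w ⁻¹' Ioi s = ⋃ y, {x | s < w y - ‖x - y‖ ^ 2 / (4 * t)} := by
    ext x
    simp [lt_supConv_iff ht hw]
  rw [hunion]
  exact isOpen_iUnion fun y => isOpen_lt continuous_const (by fun_prop)

theorem mul_le_sq_div_add_sq_mul (ht : 0 < t) (a d : ℝ) : a * d ≤ d ^ 2 / (4 * t) + a ^ 2 * t := by
  have hsq : d ^ 2 / (4 * t) + a ^ 2 * t - a * d = (d - 2 * t * a) ^ 2 / (4 * t) := by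
    field_simp
    ring
  have : 0 ≤ (d - 2 * t * a) ^ 2 / (4 * t) := by positivity
  linarith

theorem supConv_sub_div_le_sq_of_local {K G δ : ℝ} (ht : 0 < t) (hδ : t * (4 * K) ≤ δ) {x : V}
    (hK : ∀ y, w y - w x ≤ K * ‖x - y‖) (hG : ∀ y, ‖x - y‖ < δ → w y - w x ≤ G * ‖x - y‖) :
    (supConv t w x - w x) / t ≤ G ^ 2 := by
  rw [div_le_iff₀ ht, sub_le_iff_le_add]
  refine ciSup_le fun y => ?_
  rcases lt_or_ge ‖x - y‖ δ with hy | hy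
  · linarith [hG y hy, mul_le_sq_div_add_sq_mul ht G ‖x - y‖]
  · have hfar : K * ‖x - y‖ ≤ ‖x - y‖ ^ 2 / (4 * t) := by
      rw [le_div_iff₀ (by positivity)]
      nlinarith [mul_le_mul_of_nonneg_right (hδ.trans hy) (norm_nonneg (x - y))]
    have : 0 ≤ G ^ 2 * t := by positivity
    linarith [hK y]

theorem sub_le_mul_norm_sub_of_lipschitzWith {K : ℝ≥0} (hw : LipschitzWith K w) (x y : V) :
    w y - w x ≤ K * ‖x - y‖ := by
  rw [norm_sub_rev, ← dist_eq_norm]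
  exact (le_abs_self _).trans (hw.dist_le_mul y x)

theorem supConv_sub_div_le_sq {K : ℝ≥0} (ht : 0 < t) (hw : LipschitzWith K w) (x : V) :
    (supConv t w x - w x) / t ≤ K ^ 2 :=
  supConv_sub_div_le_sq_of_local ht le_rfl (sub_le_mul_norm_sub_of_lipschitzWith hw x)
    fun y _ => sub_le_mul_norm_sub_of_lipschitzWith hw x y

theorem supConv_eq_zero_of_lt_norm {M R : ℝ} (ht : 0 < t) (ht₁ : t ≤ 1) (hw₀ : 0 ≤ w)
    (hM : ∀ x, w x ≤ M) (hR : ∀ x, R < ‖x‖ → w x = 0) {x : V} (hx : R + (4 * M + 1) < ‖x‖) :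
    supConv t w x = 0 := by
  have hM₀ : 0 ≤ M := (hw₀ x).trans (hM x)
  have hwx : w x = 0 := hR x (by linarith)
  refine le_antisymm (ciSup_le fun y => sub_nonpos.2 ?_)
    (hwx.ge.trans (self_le_supConv ht ⟨M, forall_mem_range.2 hM⟩ x))
  rcases lt_or_ge R ‖y‖ with hy | hy
  · rw [hR y hy]
    positivity
  · have hxy : 4 * M + 1 ≤ ‖x - y‖ := by linarith [norm_sub_norm_le x y]
    refine (hM y).trans ((le_div_iff₀ (by positivity)).2 ?_)
    nlinarith

theorem exists_closedBall_forall_supConv_eq_zero (hw : Continuous w) (hcs : HasCompactSupport w)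
    (hw₀ : 0 ≤ w) :
    ∃ R, ∀ x ∉ Metric.closedBall (0 : V) R,
      w x = 0 ∧ ∀ t, 0 < t → t ≤ 1 → supConv t w x = 0 := by
  obtain ⟨M, hM⟩ := hw.bddAbove_range_of_hasCompactSupport hcs
  rw [mem_upperBounds, forall_mem_range] at hM
  obtain ⟨R, hR⟩ := hcs.isCompact.isBounded.subset_closedBall 0
  have hzero : ∀ x, R < ‖x‖ → w x = 0 := fun x hx =>
    image_eq_zero_of_notMem_tsupport fun h => hx.not_ge (mem_closedBall_zero_iff.1 (hR h))
  refine ⟨R + (4 * M + 1), fun x hx => ?_⟩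
  rw [mem_closedBall_zero_iff, not_le] at hx
  have hM₀ : 0 ≤ M := (hw₀ x).trans (hM x)
  exact ⟨hzero x (by linarith), fun t ht ht₁ => supConv_eq_zero_of_lt_norm ht ht₁ hw₀ hM hzero hx⟩

end SupConvolution

section HopfLax

theorem eventually_sub_le_mul_norm_sub {V : Type*} [NormedAddCommGroup V] [NormedSpace ℝ V]
    {w : V → ℝ} {x : V} (hd : DifferentiableAt ℝ w x) {ε : ℝ} (hε : 0 < ε) :
    ∀ᶠ y in 𝓝 x, ‖w y - w x‖ ≤ (‖fderiv ℝ w x‖ + ε) * ‖y - x‖ := by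
  filter_upwards [(hasFDerivAt_iff_isLittleO.1 hd.hasFDerivAt).def hε] with y hy
  calc ‖w y - w x‖ ≤ ‖fderiv ℝ w x (y - x)‖ + ‖w y - w x - fderiv ℝ w x (y - x)‖ :=
        norm_le_norm_add_norm_sub' _ _
    _ ≤ ‖fderiv ℝ w x‖ * ‖y - x‖ + ε * ‖y - x‖ :=
        add_le_add (ContinuousLinearMap.le_opNorm _ _) hy
    _ = (‖fderiv ℝ w x‖ + ε) * ‖y - x‖ := (add_mul _ _ _).symm

variable {E : Type*} [NormedAddCommGroup E] [InnerProductSpace ℝ E] {w : E → ℝ}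

theorem norm_gradient_eq_norm_fderiv [CompleteSpace E] (w : E → ℝ) (x : E) :
    ‖gradient w x‖ = ‖fderiv ℝ w x‖ :=
  (InnerProductSpace.toDual ℝ E).symm.norm_map _

theorem eventually_supConv_sub_div_lt {K : ℝ≥0} (hw : LipschitzWith K w) {x : E}
    (hd : DifferentiableAt ℝ w x) {a : ℝ} (ha : ‖fderiv ℝ w x‖ ^ 2 < a) :
    ∀ᶠ t in 𝓝[>] (0 : ℝ), (supConv t w x - w x) / t < a := by
  have hcont : Tendsto (fun ε => (‖fderiv ℝ w x‖ + ε) ^ 2) (𝓝[>] 0) (𝓝 (‖fderiv ℝ w x‖ ^ 2)) := by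
    have h : Continuous fun ε : ℝ => (‖fderiv ℝ w x‖ + ε) ^ 2 := by fun_prop
    simpa using (h.tendsto 0).mono_left (nhdsWithin_le_nhds (s := Ioi 0))
  obtain ⟨ε, hεa, hε⟩ := ((hcont.eventually_lt_const ha).and self_mem_nhdsWithin).exists
  obtain ⟨δ, hδ, hslope⟩ := Metric.eventually_nhds_iff.1 (eventually_sub_le_mul_norm_sub hd hε)
  have hsmall : Tendsto (fun t : ℝ => t * (4 * K)) (𝓝[>] 0) (𝓝 0) := by
    have h : Continuous fun t : ℝ => t * (4 * K) := by fun_prop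
    simpa using (h.tendsto 0).mono_left (nhdsWithin_le_nhds (s := Ioi 0))
  filter_upwards [self_mem_nhdsWithin, hsmall.eventually_lt_const hδ] with t ht htδ
  refine (supConv_sub_div_le_sq_of_local ht htδ.le (sub_le_mul_norm_sub_of_lipschitzWith hw x)
    fun y hy => ?_).trans_lt hεa
  rw [norm_sub_rev] at hy ⊢
  exact (le_abs_self _).trans (hslope (by rwa [dist_eq_norm]))

/- The supremum defining `supConv t w x` is tested at the point `x + 2 t ∇w(x)`. -/
theorem eventually_lt_supConv_sub_div [CompleteSpace E] (hw : BddAbove (range w)) {x : E}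
    (hd : DifferentiableAt ℝ w x) {a : ℝ} (ha : a < ‖fderiv ℝ w x‖ ^ 2) :
    ∀ᶠ t in 𝓝[>] (0 : ℝ), a < (supConv t w x - w x) / t := by
  set g := gradient w x with hg
  rw [← norm_gradient_eq_norm_fderiv, ← hg] at ha
  have hderiv : HasDerivAt (fun t : ℝ => w (x + t • (2 : ℝ) • g)) (2 * ‖g‖ ^ 2) 0 := by
    have hline : HasDerivAt (fun t : ℝ => x + t • (2 : ℝ) • g) ((2 : ℝ) • g) 0 := by
      simpa using ((hasDerivAt_id (0 : ℝ)).smul_const ((2 : ℝ) • g)).const_add x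
    have hgrad : HasFDerivAt w (InnerProductSpace.toDual ℝ E g) (x + (0 : ℝ) • (2 : ℝ) • g) := by
      rw [zero_smul, add_zero]
      exact hd.hasGradientAt.hasFDerivAt
    refine (hgrad.comp_hasDerivAt (0 : ℝ) hline).congr_deriv ?_
    rw [InnerProductSpace.toDual_apply_apply, inner_smul_right, real_inner_self_eq_norm_sq]
  have hlim := (hderiv.tendsto_slope_zero.mono_left
    (nhdsWithin_mono 0 fun t (ht : 0 < t) => ht.ne')).sub_const (‖g‖ ^ 2)
  filter_upwards [self_mem_nhdsWithin, hlim.eventually_const_lt (u := a) (by linarith)]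
    with t ht hat
  refine hat.trans_le ?_
  have hstep : ‖x - (x + t • (2 : ℝ) • g)‖ ^ 2 / (4 * t) = t * ‖g‖ ^ 2 := by
    have ht₀ : t ≠ 0 := ne_of_gt ht
    rw [sub_add_cancel_left, norm_neg, norm_smul, norm_smul, mul_pow, mul_pow, Real.norm_eq_abs,
      sq_abs, Real.norm_ofNat]
    field_simp
    ring
  have htest := le_supConv ht hw x (x + t • (2 : ℝ) • g)
  rw [hstep] at htest
  rw [le_div_iff₀ ht, zero_add, zero_smul, add_zero, sub_mul, smul_eq_mul, mul_right_comm,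
    inv_mul_cancel₀ (ne_of_gt ht)]
  linarith

theorem tendsto_supConv_sub_div [CompleteSpace E] {K : ℝ≥0} (hL : LipschitzWith K w)
    (hw : BddAbove (range w)) {x : E} (hd : DifferentiableAt ℝ w x) :
    Tendsto (fun t => (supConv t w x - w x) / t) (𝓝[>] 0) (𝓝 (‖fderiv ℝ w x‖ ^ 2)) :=
  tendsto_order.2 ⟨fun _ ha => eventually_lt_supConv_sub_div hw hd ha,
    fun _ ha => eventually_supConv_sub_div_lt hL hd ha⟩

variable [FiniteDimensional ℝ E] [MeasurableSpace E] [BorelSpace E] {μ : Measure E}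

theorem integrable_supConv [IsFiniteMeasureOnCompacts μ] (hw : Continuous w)
    (hcs : HasCompactSupport w) (hw₀ : 0 ≤ w) {t : ℝ} (ht : 0 < t) (ht₁ : t ≤ 1) :
    Integrable (supConv t w) μ := by
  obtain ⟨R, hR⟩ := exists_closedBall_forall_supConv_eq_zero hw hcs hw₀
  have hbdd := hw.bddAbove_range_of_hasCompactSupport hcs
  obtain ⟨M, hM⟩ := id hbdd
  rw [mem_upperBounds, forall_mem_range] at hM
  refine IntegrableOn.integrable_of_forall_notMem_eq_zero (s := Metric.closedBall 0 R) ?_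
    fun x hx => (hR x hx).2 t ht ht₁
  refine Measure.integrableOn_of_bounded (M := M) measure_closedBall_lt_top.ne ?_ ?_
  · exact (measurable_supConv ht hbdd).aestronglyMeasurable
  · refine .of_forall fun x => ?_
    rw [Real.norm_of_nonneg ((hw₀ x).trans (self_le_supConv ht hbdd x))]
    exact ciSup_le fun y => (sub_le_self _ (by positivity)).trans (hM y)

theorem tendsto_integral_supConv_sub_div [μ.IsAddHaarMeasure] {K : ℝ≥0} (hL : LipschitzWith K w)
    (hcs : HasCompactSupport w) (hw₀ : 0 ≤ w) :
    Tendsto (fun t => ∫ x, (supConv t w x - w x) / t ∂μ) (𝓝[>] 0)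
      (𝓝 (∫ x, ‖fderiv ℝ w x‖ ^ 2 ∂μ)) := by
  have hbdd := hL.continuous.bddAbove_range_of_hasCompactSupport hcs
  obtain ⟨R, hR⟩ := exists_closedBall_forall_supConv_eq_zero hL.continuous hcs hw₀
  refine tendsto_integral_filter_of_dominated_convergence
    ((Metric.closedBall (0 : E) R).indicator fun _ => (K : ℝ) ^ 2) ?_ ?_ ?_ ?_
  · filter_upwards [self_mem_nhdsWithin] with t ht
    exact (((measurable_supConv ht hbdd).sub hL.continuous.measurable).div_const
      t).aestronglyMeasurable
  · filter_upwards [self_mem_nhdsWithin, nhdsWithin_le_nhds (Iic_mem_nhds one_pos)] with t ht ht₁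
    refine .of_forall fun x => ?_
    have hquot : 0 ≤ (supConv t w x - w x) / t :=
      div_nonneg (sub_nonneg.2 (self_le_supConv ht hbdd x)) (le_of_lt ht)
    rw [Real.norm_of_nonneg hquot]
    by_cases hx : x ∈ Metric.closedBall (0 : E) R
    · exact (supConv_sub_div_le_sq ht hL x).trans_eq (indicator_of_mem hx fun _ => (K : ℝ) ^ 2).symm
    · rw [(hR x hx).1, (hR x hx).2 t ht ht₁, sub_zero, zero_div, indicator_of_notMem hx]
  · exact (integrable_indicator_iff Metric.isClosed_closedBall.measurableSet).2
      (integrableOn_const measure_closedBall_lt_top.ne)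
  · filter_upwards [hL.ae_differentiableAt] with x hx
    exact tendsto_supConv_sub_div hL hbdd hx

end HopfLax

section Equimeasurable

variable {α : Type*} {m : MeasurableSpace α} {μ : Measure α} {u v : α → ℝ}

theorem lintegral_ofReal_le_of_superlevel_le (hu : AEMeasurable u μ) (hv : AEMeasurable v μ)
    (hu₀ : 0 ≤ u) (hv₀ : 0 ≤ v) (h : ∀ s, 0 < s → μ {x | s < u x} ≤ μ {x | s < v x}) :
    ∫⁻ x, ENNReal.ofReal (u x) ∂μ ≤ ∫⁻ x, ENNReal.ofReal (v x) ∂μ := by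
  rw [lintegral_eq_lintegral_meas_lt μ (.of_forall hu₀) hu,
    lintegral_eq_lintegral_meas_lt μ (.of_forall hv₀) hv]
  exact setLIntegral_mono' measurableSet_Ioi h

theorem integral_le_of_superlevel_le (hu : AEMeasurable u μ) (hv : Integrable v μ)
    (hu₀ : 0 ≤ u) (hv₀ : 0 ≤ v) (h : ∀ s, 0 < s → μ {x | s < u x} ≤ μ {x | s < v x}) :
    ∫ x, u x ∂μ ≤ ∫ x, v x ∂μ := by
  rw [integral_eq_lintegral_of_nonneg_ae (.of_forall hu₀) hu.aestronglyMeasurable,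
    integral_eq_lintegral_of_nonneg_ae (.of_forall hv₀) hv.aestronglyMeasurable]
  exact ENNReal.toReal_mono hv.lintegral_lt_top.ne
    (lintegral_ofReal_le_of_superlevel_le hu hv.aemeasurable hu₀ hv₀ h)

theorem superlevel_pow {p : ℕ} (hp : p ≠ 0) (hu₀ : 0 ≤ u) {s : ℝ} (hs : 0 ≤ s) :
    {x | s < u x ^ p} = {x | s ^ (p⁻¹ : ℝ) < u x} := by
  ext x
  rw [mem_ofPred_eq, mem_ofPred_eq, ← pow_lt_pow_iff_left₀ (by positivity) (hu₀ x) hp,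
    Real.rpow_inv_natCast_pow hs hp]

theorem integral_pow_eq_of_superlevel_eq {p : ℕ} (hp : p ≠ 0) (hu : AEMeasurable u μ)
    (hv : AEMeasurable v μ) (hu₀ : 0 ≤ u) (hv₀ : 0 ≤ v)
    (h : ∀ s, 0 ≤ s → μ {x | s < u x} = μ {x | s < v x}) :
    ∫ x, u x ^ p ∂μ = ∫ x, v x ^ p ∂μ := by
  have hup : 0 ≤ fun x => u x ^ p := fun x => pow_nonneg (hu₀ x) p
  have hvp : 0 ≤ fun x => v x ^ p := fun x => pow_nonneg (hv₀ x) p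
  have hlevel : ∀ s, 0 < s → μ {x | s < u x ^ p} = μ {x | s < v x ^ p} := fun s hs => by
    rw [superlevel_pow hp hu₀ hs.le, superlevel_pow hp hv₀ hs.le, h _ (by positivity)]
  rw [integral_eq_lintegral_of_nonneg_ae (.of_forall hup) (hu.pow_const p).aestronglyMeasurable,
    integral_eq_lintegral_of_nonneg_ae (.of_forall hvp) (hv.pow_const p).aestronglyMeasurable,
    le_antisymm
      (lintegral_ofReal_le_of_superlevel_le (hu.pow_const p) (hv.pow_const p) hup hvp
        fun s hs => (hlevel s hs).le)
      (lintegral_ofReal_le_of_superlevel_le (hv.pow_const p) (hu.pow_const p) hvp hup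
        fun s hs => (hlevel s hs).ge)]

end Equimeasurable

section AreaRadius

/-- The radius of the discs having the same area as `S`. -/
noncomputable def areaRadius (S : Set ℝ²) : ℝ := √(volume.real S / Real.pi)

variable {A T : Set ℝ²} {d : ℝ}

theorem areaRadius_nonneg (S : Set ℝ²) : 0 ≤ areaRadius S := Real.sqrt_nonneg _

theorem areaRadius_mono (hAT : A ⊆ T) (hT : volume T ≠ ⊤) : areaRadius A ≤ areaRadius T :=
  Real.sqrt_le_sqrt (div_le_div_of_nonneg_right (measureReal_mono hAT hT) Real.pi_pos.le)

theorem measureReal_ball_plane {r : ℝ} (hr : 0 ≤ r) (x : ℝ²) :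
    volume.real (Metric.ball x r) = r ^ 2 * Real.pi := by
  rw [measureReal_def, EuclideanSpace.volume_ball_fin_two, ENNReal.toReal_mul, ENNReal.toReal_pow,
    ENNReal.toReal_ofReal hr, ENNReal.toReal_ofReal Real.pi_pos.le]

theorem volume_ball_areaRadius (hA : volume A ≠ ⊤) (x : ℝ²) :
    volume (Metric.ball x (areaRadius A)) = volume A := by
  rw [← ENNReal.toReal_eq_toReal_iff' measure_ball_lt_top.ne hA, ← measureReal_def,
    measureReal_ball_plane (areaRadius_nonneg A), areaRadius,
    Real.sq_sqrt (div_nonneg measureReal_nonneg Real.pi_pos.le), div_mul_cancel₀ _ Real.pi_ne_zero,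
    measureReal_def]

theorem areaRadius_add_le_areaRadius_thickening (hA : IsOpen A) (hA₀ : A.Nonempty)
    (hAb : Bornology.IsBounded A) (hd : 0 < d) :
    areaRadius A + d ≤ areaRadius (Metric.thickening d A) := by
  have hbm := brunnMinkowski_plane hA (Metric.isOpen_ball (x := (0 : ℝ²)) (ε := d)) hA₀
    (Metric.nonempty_ball.2 hd) hAb Metric.isBounded_ball
  rw [measureReal_ball_plane hd.le, Real.sqrt_mul (sq_nonneg d), Real.sqrt_sq hd.le,
    add_ball_zero] at hbm
  have hpi := Real.sqrt_pos.2 Real.pi_pos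
  rwa [areaRadius, areaRadius, Real.sqrt_div measureReal_nonneg, Real.sqrt_div measureReal_nonneg,
    div_add' _ _ _ hpi.ne', div_le_div_iff_of_pos_right hpi]

theorem areaRadius_add_le_areaRadius (hA : IsOpen A) (hA₀ : A.Nonempty)
    (hAb : Bornology.IsBounded A) (hd : 0 ≤ d) (hT : volume T ≠ ⊤)
    (hAT : ∀ y ∈ A, Metric.closedBall y d ⊆ T) : areaRadius A + d ≤ areaRadius T := by
  rcases hd.eq_or_lt with rfl | hd
  · rw [add_zero]
    exact areaRadius_mono (fun y hy => hAT y hy (Metric.mem_closedBall_self le_rfl)) hT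
  · refine (areaRadius_add_le_areaRadius_thickening hA hA₀ hAb hd).trans (areaRadius_mono ?_ hT)
    rw [Metric.thickening_eq_biUnion_ball]
    exact iUnion₂_subset fun y hy => Metric.ball_subset_closedBall.trans (hAT y hy)

end AreaRadius

section Rearrangement

/-- The radius of the discs having the same area as the superlevel set `{u > s}`. -/
noncomputable def levelRadius (u : ℝ² → ℝ) (s : ℝ) : ℝ := areaRadius {x | s < u x}

/-- The profile of the symmetric decreasing rearrangement of `u`, extended to negative radii by its
value at the origin. -/
noncomputable def rearrProfile (u : ℝ² → ℝ) (r : ℝ) : ℝ :=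
  sSup {s | 0 ≤ s ∧ max 0 r < levelRadius u s}

/-- The symmetric decreasing rearrangement of `u`. -/
noncomputable def symmRearr (u : ℝ² → ℝ) (x : ℝ²) : ℝ := rearrProfile u ‖x‖

/-- The profiles of the radially nonincreasing, nonnegative, compactly supported Lipschitz functions
on the plane. -/
structure IsProfile (f : ℝ → ℝ) : Prop where
  antitone : Antitone f
  nonneg : ∀ r, 0 ≤ f r
  lipschitz : ∃ K : ℝ≥0, LipschitzWith K f
  vanishing : ∃ R, ∀ r, R ≤ r → f r = 0

variable {u : ℝ² → ℝ} {r s d : ℝ}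

theorem isBounded_superlevel (hcs : HasCompactSupport u) (hs : 0 ≤ s) :
    Bornology.IsBounded {x | s < u x} :=
  hcs.isCompact.isBounded.subset fun _ hx =>
    subset_tsupport u (Function.mem_support.2 (hs.trans_lt hx).ne')

theorem volume_superlevel_ne_top (hcs : HasCompactSupport u) (hs : 0 ≤ s) :
    volume {x | s < u x} ≠ ⊤ := (isBounded_superlevel hcs hs).measure_lt_top.ne

theorem levelRadius_anti (hcs : HasCompactSupport u) (hs : 0 ≤ s) {s' : ℝ} (h : s ≤ s') :
    levelRadius u s' ≤ levelRadius u s :=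
  areaRadius_mono (fun _ hx => h.trans_lt hx) (volume_superlevel_ne_top hcs hs)

theorem nonempty_superlevel_of_levelRadius_pos (h : 0 < levelRadius u s) :
    {x | s < u x}.Nonempty := by
  rw [nonempty_iff_ne_empty]
  rintro hempty
  rw [levelRadius, hempty, areaRadius, measureReal_empty, zero_div, Real.sqrt_zero] at h
  exact h.false

theorem superlevel_eq_iUnion (u : ℝ² → ℝ) (s : ℝ) :
    {x | s < u x} = ⋃ n : ℕ, {x | s + 1 / ((n : ℝ) + 1) < u x} := by
  ext x
  rw [mem_iUnion]
  refine ⟨fun (hx : s < u x) => ?_, fun ⟨n, hn⟩ =>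
    (lt_add_of_pos_right s Nat.one_div_pos_of_nat).trans hn⟩
  obtain ⟨n, hn⟩ := exists_nat_one_div_lt (sub_pos.2 hx)
  exact ⟨n, lt_sub_iff_add_lt'.1 hn⟩

theorem exists_gt_lt_levelRadius (hcs : HasCompactSupport u) (hs : 0 ≤ s)
    (h : r < levelRadius u s) : ∃ s' > s, r < levelRadius u s' := by
  have hmono : Monotone fun n : ℕ => {x | s + 1 / ((n : ℝ) + 1) < u x} := fun n k hnk x hx =>
    (add_le_add_right (Nat.one_div_le_one_div hnk) s).trans_lt hx
  have hvol := tendsto_measure_iUnion_atTop (μ := volume) hmono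
  rw [← superlevel_eq_iUnion] at hvol
  have hlim : Tendsto (fun n : ℕ => levelRadius u (s + 1 / ((n : ℝ) + 1))) atTop
      (𝓝 (levelRadius u s)) :=
    (((ENNReal.tendsto_toReal (volume_superlevel_ne_top hcs hs)).comp hvol).div_const _).sqrt
  obtain ⟨n, hn⟩ := (hlim.eventually_const_lt h).exists
  exact ⟨_, lt_add_of_pos_right s Nat.one_div_pos_of_nat, hn⟩

theorem rearrProfile_nonneg (u : ℝ² → ℝ) (r : ℝ) : 0 ≤ rearrProfile u r :=
  Real.sSup_nonneg fun _ h => h.1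

theorem rearrProfile_max_zero (u : ℝ² → ℝ) (r : ℝ) :
    rearrProfile u (max 0 r) = rearrProfile u r := by
  rw [rearrProfile, rearrProfile, max_eq_right (le_max_left 0 r)]

theorem bddAbove_setOf_lt_levelRadius (hu : Continuous u) (hcs : HasCompactSupport u) (r : ℝ) :
    BddAbove {s | 0 ≤ s ∧ max 0 r < levelRadius u s} := by
  obtain ⟨M, hM⟩ := hu.bddAbove_range_of_hasCompactSupport hcs
  refine ⟨M, fun s hs => ?_⟩
  obtain ⟨x, hx⟩ := nonempty_superlevel_of_levelRadius_pos ((le_max_left _ _).trans_lt hs.2)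
  exact (le_of_lt hx).trans (hM (mem_range_self x))

theorem lt_rearrProfile_iff (hu : Continuous u) (hcs : HasCompactSupport u) (hs : 0 ≤ s)
    (hr : 0 ≤ r) : s < rearrProfile u r ↔ r < levelRadius u s := by
  have hbdd := bddAbove_setOf_lt_levelRadius hu hcs r
  rw [rearrProfile]
  rw [max_eq_right hr] at hbdd ⊢
  refine ⟨fun h => ?_, fun h => ?_⟩
  · have hne : {s | 0 ≤ s ∧ r < levelRadius u s}.Nonempty := by
      rw [nonempty_iff_ne_empty]
      intro hempty
      rw [hempty, Real.sSup_empty] at h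
      exact h.not_ge hs
    obtain ⟨s', hs', hlt⟩ := exists_lt_of_lt_csSup hne h
    exact hs'.2.trans_le (levelRadius_anti hcs hs hlt.le)
  · obtain ⟨s', hs', hrs'⟩ := exists_gt_lt_levelRadius hcs hs h
    exact hs'.trans_le (le_csSup hbdd ⟨hs.trans (le_of_lt hs'), hrs'⟩)

theorem antitone_rearrProfile (hu : Continuous u) (hcs : HasCompactSupport u) :
    Antitone (rearrProfile u) := fun r _ h =>
  Real.sSup_le (fun _ hs => le_csSup (bddAbove_setOf_lt_levelRadius hu hcs r)
    ⟨hs.1, (max_le_max_left 0 h).trans_lt hs.2⟩) (rearrProfile_nonneg u r)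

theorem rearrProfile_le_add {K : ℝ≥0} (hL : LipschitzWith K u) (hcs : HasCompactSupport u)
    (hr : 0 ≤ r) (hd : 0 ≤ d) : rearrProfile u r ≤ rearrProfile u (r + d) + K * d := by
  have hu := hL.continuous
  by_contra! h
  set s := rearrProfile u (r + d) with hs
  have hs₀ : 0 ≤ s := rearrProfile_nonneg u _
  rw [lt_rearrProfile_iff hu hcs (by positivity) hr] at h
  have hadd : levelRadius u (s + K * d) + d ≤ levelRadius u s := by
    refine areaRadius_add_le_areaRadius (isOpen_lt continuous_const hu)
      (nonempty_superlevel_of_levelRadius_pos (hr.trans_lt h))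
      (isBounded_superlevel hcs (by positivity)) hd (volume_superlevel_ne_top hcs hs₀) ?_
    intro y (hy : s + K * d < u y) x hx
    have hyx : u y - u x ≤ K * d := (sub_le_mul_norm_sub_of_lipschitzWith hL x y).trans
      (mul_le_mul_of_nonneg_left (mem_closedBall_iff_norm.1 hx) K.2)
    rw [mem_ofPred_eq]
    linarith
  have hlt : s < rearrProfile u (r + d) :=
    (lt_rearrProfile_iff hu hcs hs₀ (by positivity)).2 (by linarith)
  exact hlt.ne hs

theorem isProfile_rearrProfile {K : ℝ≥0} (hL : LipschitzWith K u) (hcs : HasCompactSupport u) :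
    IsProfile (rearrProfile u) where
  antitone := antitone_rearrProfile hL.continuous hcs
  nonneg := rearrProfile_nonneg u
  lipschitz := by
    refine ⟨K, LipschitzWith.of_le_add_mul K fun r r' => ?_⟩
    rw [← rearrProfile_max_zero u r]
    refine (rearrProfile_le_add hL hcs (le_max_left 0 r) dist_nonneg).trans
      (add_le_add_left (antitone_rearrProfile hL.continuous hcs ?_) _)
    rw [Real.dist_eq]
    linarith [neg_abs_le (r - r'), le_max_right 0 r]
  vanishing := ⟨levelRadius u 0, fun r hr => le_antisymm
    (not_lt.1 fun h => hr.not_gt ((lt_rearrProfile_iff hL.continuous hcs le_rfl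
      ((areaRadius_nonneg _).trans hr)).1 h)) (rearrProfile_nonneg u r)⟩

theorem volume_superlevel_symmRearr (hu : Continuous u) (hcs : HasCompactSupport u) (hs : 0 ≤ s) :
    volume {x | s < symmRearr u x} = volume {x | s < u x} := by
  have hball : {x | s < symmRearr u x} = Metric.ball 0 (levelRadius u s) := by
    ext x
    rw [mem_ball_zero_iff]
    exact lt_rearrProfile_iff hu hcs hs (norm_nonneg x)
  rw [hball]
  exact volume_ball_areaRadius (volume_superlevel_ne_top hcs hs) 0

end Rearrangement

section PolyaSzego

variable {f : ℝ → ℝ} {u : ℝ² → ℝ} {K : ℝ≥0}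

theorem lipschitzWith_comp_norm (hf : LipschitzWith K f) : LipschitzWith K fun x : ℝ² => f ‖x‖ := by
  have hcomp := hf.comp (lipschitzWith_one_norm (E := ℝ²))
  rwa [mul_one] at hcomp

theorem hasCompactSupport_comp_norm {R : ℝ} (hR : ∀ r, R ≤ r → f r = 0) :
    HasCompactSupport fun x : ℝ² => f ‖x‖ :=
  HasCompactSupport.intro (isCompact_closedBall 0 R) fun _ hx =>
    hR _ (not_le.1 fun h => hx (mem_closedBall_zero_iff.2 h)).le

theorem volume_superlevel_supConv_symmRearr_le (hu : Continuous u) (hcs : HasCompactSupport u)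
    (hv : BddAbove (range (symmRearr u))) {t s : ℝ} (ht : 0 < t) (hs : 0 ≤ s)
    (hfin : volume {x | s < supConv t u x} ≠ ⊤) :
    volume {x | s < supConv t (symmRearr u) x} ≤ volume {x | s < supConv t u x} := by
  rw [← volume_ball_areaRadius hfin 0]
  refine measure_mono fun x hx => mem_ball_zero_iff.2 ?_
  obtain ⟨y, hy⟩ := (lt_supConv_iff ht hv).1 hx
  set a := s + ‖x - y‖ ^ 2 / (4 * t)
  have ha₀ : 0 ≤ a := by positivity
  have hya : ‖y‖ < levelRadius u a :=
    (lt_rearrProfile_iff hu hcs ha₀ (norm_nonneg y)).1 (lt_sub_iff_add_lt.1 hy)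
  have hadd : levelRadius u a + ‖x - y‖ ≤ areaRadius {x | s < supConv t u x} := by
    refine areaRadius_add_le_areaRadius (isOpen_lt continuous_const hu)
      (nonempty_superlevel_of_levelRadius_pos ((norm_nonneg y).trans_lt hya))
      (isBounded_superlevel hcs ha₀) (norm_nonneg _) hfin ?_
    intro z (hz : a < u z) w hw
    refine (lt_supConv_iff ht (hu.bddAbove_range_of_hasCompactSupport hcs)).2 ⟨z, ?_⟩
    have hwz : ‖w - z‖ ^ 2 / (4 * t) ≤ ‖x - y‖ ^ 2 / (4 * t) := by
      gcongr
      exact mem_closedBall_iff_norm.1 hw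
    linarith
  linarith [norm_le_norm_add_norm_sub' x y]

theorem integral_supConv_symmRearr_le (hL : LipschitzWith K u) (hcs : HasCompactSupport u)
    (hu₀ : 0 ≤ u) {t : ℝ} (ht : 0 < t) (ht₁ : t ≤ 1) :
    ∫ x, supConv t (symmRearr u) x ≤ ∫ x, supConv t u x := by
  have hprof := isProfile_rearrProfile hL hcs
  have hbu := hL.continuous.bddAbove_range_of_hasCompactSupport hcs
  have hbv : BddAbove (range (symmRearr u)) :=
    ⟨rearrProfile u 0, forall_mem_range.2 fun x => hprof.antitone (norm_nonneg x)⟩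
  have hint := integrable_supConv (μ := volume) hL.continuous hcs hu₀ ht ht₁
  have hpos : 0 ≤ supConv t u := fun x => (hu₀ x).trans (self_le_supConv ht hbu x)
  refine integral_le_of_superlevel_le (measurable_supConv ht hbv).aemeasurable hint
    (fun x => (rearrProfile_nonneg u _).trans (self_le_supConv ht hbv x)) hpos fun s hs =>
    volume_superlevel_supConv_symmRearr_le hL.continuous hcs hbv ht hs.le
      (hint.measure_gt_lt_top hs).ne

/-- The **Pólya–Szegő inequality** in the plane. -/
theorem integral_sq_norm_fderiv_symmRearr_le (hL : LipschitzWith K u) (hcs : HasCompactSupport u)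
    (hu₀ : 0 ≤ u) :
    ∫ x, ‖fderiv ℝ (symmRearr u) x‖ ^ 2 ≤ ∫ x, ‖fderiv ℝ u x‖ ^ 2 := by
  have hprof := isProfile_rearrProfile hL hcs
  obtain ⟨K', hK'⟩ := hprof.lipschitz
  obtain ⟨R, hR⟩ := hprof.vanishing
  have hLv : LipschitzWith K' (symmRearr u) := lipschitzWith_comp_norm hK'
  have hcsv : HasCompactSupport (symmRearr u) := hasCompactSupport_comp_norm hR
  have hv₀ : 0 ≤ symmRearr u := fun x => hprof.nonneg _
  have hmass : ∫ x, symmRearr u x = ∫ x, u x := by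
    simpa only [pow_one] using integral_pow_eq_of_superlevel_eq one_ne_zero
      hLv.continuous.aemeasurable hL.continuous.aemeasurable hv₀ hu₀
      fun s hs => volume_superlevel_symmRearr hL.continuous hcs hs
  refine le_of_tendsto_of_tendsto (tendsto_integral_supConv_sub_div hLv hcsv hv₀)
    (tendsto_integral_supConv_sub_div hL hcs hu₀) ?_
  filter_upwards [self_mem_nhdsWithin, nhdsWithin_le_nhds (Iic_mem_nhds one_pos)] with t ht ht₁
  rw [integral_div, integral_div,
    integral_sub (integrable_supConv hLv.continuous hcsv hv₀ ht ht₁)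
      (hLv.continuous.integrable_of_hasCompactSupport hcsv),
    integral_sub (integrable_supConv hL.continuous hcs hu₀ ht ht₁)
      (hL.continuous.integrable_of_hasCompactSupport hcs), hmass]
  exact div_le_div_of_nonneg_right
    (sub_le_sub_right (integral_supConv_symmRearr_le hL hcs hu₀ ht ht₁) _) (le_of_lt ht)

end PolyaSzego

section FDeriv

variable {E : Type*}

theorem norm_fderiv_abs_le [NormedAddCommGroup E] [NormedSpace ℝ E] {u : E → ℝ} {x : E}
    (hd : DifferentiableAt ℝ u x) : ‖fderiv ℝ (fun y => |u y|) x‖ ≤ ‖fderiv ℝ u x‖ := by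
  by_cases habs : DifferentiableAt ℝ (fun y => |u y|) x
  · refine le_of_forall_pos_le_add fun ε hε => habs.hasFDerivAt.le_of_lip' (by positivity) ?_
    filter_upwards [eventually_sub_le_mul_norm_sub hd hε] with y hy
    exact (abs_abs_sub_abs_le_abs_sub _ _).trans hy
  · rw [fderiv_zero_of_not_differentiableAt habs, norm_zero]
    exact norm_nonneg _

variable [NormedAddCommGroup E] [InnerProductSpace ℝ E] {f : ℝ → ℝ} {x : E}

theorem differentiableAt_norm_of_comp_norm (hx : x ≠ 0)
    (h : DifferentiableAt ℝ (fun y : E => f ‖y‖) x) : DifferentiableAt ℝ f ‖x‖ := by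
  have hr : 0 < ‖x‖ := norm_pos_iff.2 hx
  have hray : DifferentiableAt ℝ (fun r : ℝ => (r / ‖x‖) • x) ‖x‖ := by fun_prop
  have hx₁ : (‖x‖ / ‖x‖) • x = x := by rw [div_self hr.ne', one_smul]
  refine ((hx₁.symm ▸ h).comp ‖x‖ hray).congr_of_eventuallyEq ?_
  filter_upwards [lt_mem_nhds hr] with r hr₀
  rw [Function.comp_apply, norm_smul, Real.norm_of_nonneg (by positivity),
    div_mul_cancel₀ _ hr.ne']

theorem norm_fderiv_comp_norm (hx : x ≠ 0) (f : ℝ → ℝ) :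
    ‖fderiv ℝ (fun y : E => f ‖y‖) x‖ = |deriv f ‖x‖| := by
  by_cases hd : DifferentiableAt ℝ f ‖x‖
  · have hnorm : DifferentiableAt ℝ (fun y : E => ‖y‖) x := differentiableAt_id.norm ℝ hx
    have := nontrivial_of_ne x 0 hx
    have hcomp : HasFDerivAt (fun y : E => f ‖y‖) (deriv f ‖x‖ • fderiv ℝ (fun y => ‖y‖) x) x :=
      hd.hasDerivAt.comp_hasFDerivAt x hnorm.hasFDerivAt
    rw [hcomp.fderiv, norm_smul,
      norm_fderiv_norm hnorm, mul_one, Real.norm_eq_abs]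
  · rw [deriv_zero_of_not_differentiableAt hd, abs_zero, norm_eq_zero]
    exact fderiv_zero_of_not_differentiableAt (mt (differentiableAt_norm_of_comp_norm hx) hd)

end FDeriv

section Radial

theorem integral_radial (g : ℝ → ℝ) :
    ∫ x : ℝ², g ‖x‖ = 2 * Real.pi * ∫ r in Ioi (0 : ℝ), r * g r := by
  rw [integral_fun_norm_addHaar volume g, measureReal_ball_plane zero_le_one]
  simp [mul_assoc]

theorem integrable_radial_iff (g : ℝ → ℝ) :
    Integrable (fun x : ℝ² => g ‖x‖) ↔ IntegrableOn (fun r => r * g r) (Ioi 0) := by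
  rw [integrable_fun_norm_addHaar volume (f := g)]
  simp

theorem integral_sq_norm_fderiv_radial (g : ℝ → ℝ) :
    ∫ x : ℝ², ‖fderiv ℝ (fun y : ℝ² => g ‖y‖) x‖ ^ 2 =
      2 * Real.pi * ∫ r in Ioi (0 : ℝ), r * deriv g r ^ 2 := by
  rw [← integral_radial fun r => deriv g r ^ 2]
  refine integral_congr_ae ?_
  filter_upwards [compl_mem_ae_iff.2 (measure_singleton (0 : ℝ²))] with x hx
  rw [norm_fderiv_comp_norm hx, sq_abs]

theorem integrable_sq_norm_fderiv {u : ℝ² → ℝ} {K : ℝ≥0} (hL : LipschitzWith K u)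
    (hcs : HasCompactSupport u) : Integrable fun x => ‖fderiv ℝ u x‖ ^ 2 := by
  have hcomp := hcs.fderiv (𝕜 := ℝ)
  refine (integrableOn_iff_integrable_of_support_subset (s := tsupport (fderiv ℝ u)) ?_).1 ?_
  · exact (Function.support_comp_subset (g := fun L : ℝ² →L[ℝ] ℝ => ‖L‖ ^ 2) (by simp) _).trans
      (subset_tsupport _)
  · refine Measure.integrableOn_of_bounded (M := K ^ 2) hcomp.isCompact.measure_lt_top.ne
      ((measurable_fderiv ℝ u).norm.pow_const 2).aestronglyMeasurable (.of_forall fun x => ?_)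
    rw [norm_pow, norm_norm]
    gcongr
    exact norm_fderiv_le_of_lipschitz ℝ hL

end Radial

section ProfileGN

/-- The radial Gagliardo–Nirenberg inequality with constant `C` for nonincreasing profiles. -/
def ProfileGN (C : ℝ) : Prop := ∀ f, IsProfile f →
  ∫ r in Ioi (0 : ℝ), r * f r ^ 4 ≤
    C * (∫ r in Ioi (0 : ℝ), r * deriv f r ^ 2) * ∫ r in Ioi (0 : ℝ), r * f r ^ 2

theorem ProfileGN.integral_comp_norm_le {C : ℝ} (hC : ProfileGN C) {f : ℝ → ℝ} (hf : IsProfile f) :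
    ∫ x : ℝ², f ‖x‖ ^ 4 ≤ C / (2 * Real.pi) *
      (∫ x : ℝ², ‖fderiv ℝ (fun y : ℝ² => f ‖y‖) x‖ ^ 2) * ∫ x : ℝ², f ‖x‖ ^ 2 := by
  rw [integral_sq_norm_fderiv_radial, integral_radial fun r => f r ^ 4,
    integral_radial fun r => f r ^ 2]
  calc _ ≤ 2 * Real.pi * (C * (∫ r in Ioi (0 : ℝ), r * deriv f r ^ 2) *
        ∫ r in Ioi (0 : ℝ), r * f r ^ 2) := by
        gcongr
        exact hC f hf
    _ = _ := by field_simp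

/-- Symmetrization removes both the radial symmetry and the monotonicity from `ProfileGN`. -/
theorem ProfileGN.integral_le_of_lipschitz {C : ℝ} (hC : ProfileGN C) (hC₀ : 0 ≤ C) {u : ℝ² → ℝ}
    {K : ℝ≥0} (hL : LipschitzWith K u) (hcs : HasCompactSupport u) :
    ∫ x, u x ^ 4 ≤ C / (2 * Real.pi) * (∫ x, ‖fderiv ℝ u x‖ ^ 2) * ∫ x, u x ^ 2 := by
  set v : ℝ² → ℝ := fun x => |u x|
  have hv₀ : 0 ≤ v := fun x => abs_nonneg _
  have hLv : LipschitzWith K v := LipschitzWith.of_dist_le_mul fun x y =>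
    (abs_abs_sub_abs_le_abs_sub _ _).trans (hL.dist_le_mul x y)
  have hcsv : HasCompactSupport v := hcs.norm
  have hprof := isProfile_rearrProfile hLv hcsv
  obtain ⟨K', hK'⟩ := hprof.lipschitz
  have hpow : ∀ p : ℕ, p ≠ 0 → ∫ x, symmRearr v x ^ p = ∫ x, v x ^ p := fun p hp =>
    integral_pow_eq_of_superlevel_eq hp (lipschitzWith_comp_norm hK').continuous.aemeasurable
      hLv.continuous.aemeasurable (fun x => hprof.nonneg _) hv₀
      fun s hs => volume_superlevel_symmRearr hLv.continuous hcsv hs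
  have hgrad : ∫ x, ‖fderiv ℝ (symmRearr v) x‖ ^ 2 ≤ ∫ x, ‖fderiv ℝ u x‖ ^ 2 := by
    refine (integral_sq_norm_fderiv_symmRearr_le hLv hcsv hv₀).trans (integral_mono_of_nonneg
      (.of_forall fun x => by positivity) (integrable_sq_norm_fderiv hL hcs) ?_)
    filter_upwards [hL.ae_differentiableAt] with x hx
    exact pow_le_pow_left₀ (norm_nonneg _) (norm_fderiv_abs_le hx) 2
  have habs : (∀ x, v x ^ 4 = u x ^ 4) ∧ ∀ x, v x ^ 2 = u x ^ 2 :=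
    ⟨fun x => Even.pow_abs (by decide) _, fun x => sq_abs _⟩
  have hsymm := hC.integral_comp_norm_le hprof
  simp only [← symmRearr.eq_1, hpow 4 four_ne_zero, hpow 2 two_ne_zero, habs] at hsymm
  refine hsymm.trans ?_
  gcongr

theorem ProfileGN.of_lipschitz {C : ℝ} (hC : ProfileGN C) (hC₀ : 0 ≤ C) {g : ℝ → ℝ} {K : ℝ≥0}
    (hK : LipschitzWith K g) {R : ℝ} (hR : ∀ r, R ≤ r → g r = 0) :
    ∫ r in Ioi (0 : ℝ), r * g r ^ 4 ≤
      C * (∫ r in Ioi (0 : ℝ), r * deriv g r ^ 2) * ∫ r in Ioi (0 : ℝ), r * g r ^ 2 := by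
  have h := hC.integral_le_of_lipschitz hC₀ (lipschitzWith_comp_norm hK)
    (hasCompactSupport_comp_norm hR)
  rw [integral_sq_norm_fderiv_radial, integral_radial fun r => g r ^ 4,
    integral_radial fun r => g r ^ 2] at h
  refine le_of_mul_le_mul_left (h.trans_eq ?_) Real.two_pi_pos
  field_simp

end ProfileGN

section WeightedIntegral

variable {g : ℝ → ℝ} {R : ℝ}

theorem integrableOn_mul_of_vanishing (hR : ∀ r, R ≤ r → g r = 0) {C : ℝ}
    (hC : ∀ r, 0 < r → |g r| ≤ C) (hm : Measurable g) :
    IntegrableOn (fun r => r * g r) (Ioi 0) := by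
  have hmaj : IntegrableOn ((Ioo 0 R).indicator fun _ => R * C) (Ioi 0) :=
    ((integrable_indicator_iff measurableSet_Ioo).2
      (integrableOn_const measure_Ioo_lt_top.ne)).integrableOn
  refine hmaj.mono' (measurable_id.mul hm).aestronglyMeasurable ?_
  filter_upwards [ae_restrict_mem measurableSet_Ioi] with r (hr : 0 < r)
  rcases lt_or_ge r R with h | h
  · rw [indicator_of_mem (show r ∈ Ioo 0 R from ⟨hr, h⟩), norm_mul, Real.norm_of_nonneg hr.le,
      Real.norm_eq_abs]
    exact mul_le_mul h.le (hC r hr) (abs_nonneg _) (hr.trans h).le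
  · rw [hR r h, indicator_of_notMem fun h' => h.not_gt h'.2, mul_zero, norm_zero]

theorem deriv_eq_zero_of_vanishing (hR : ∀ r, R ≤ r → g r = 0) {r : ℝ} (hr : R < r) :
    deriv g r = 0 := by
  have h : g =ᶠ[𝓝 r] fun _ => 0 := by
    filter_upwards [lt_mem_nhds hr] with s hs using hR s hs.le
  rw [h.deriv_eq, deriv_const]

theorem integrableOn_mul_sq_deriv (hR : ∀ r, R ≤ r → g r = 0) {K : ℝ≥0}
    (hK : LipschitzWith K g) : IntegrableOn (fun r => r * deriv g r ^ 2) (Ioi 0) := by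
  refine integrableOn_mul_of_vanishing (R := R + 1) (C := K ^ 2) (fun r hr => ?_) (fun r _ => ?_)
    ((measurable_deriv g).pow_const 2)
  · rw [deriv_eq_zero_of_vanishing hR (by linarith), zero_pow two_ne_zero]
  · rw [abs_pow]
    exact pow_le_pow_left₀ (abs_nonneg _) (norm_deriv_le_of_lipschitz hK) 2

theorem integral_mul_comp_mul (g : ℝ → ℝ) {b : ℝ} (hb : 0 < b) :
    ∫ r in Ioi (0 : ℝ), r * g (b * r) = (b ^ 2)⁻¹ * ∫ r in Ioi (0 : ℝ), r * g r := by
  have h := integral_comp_mul_left_Ioi (fun r => r * g r) 0 hb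
  simp only [mul_zero, smul_eq_mul, mul_assoc] at h
  rw [integral_const_mul] at h
  rw [sq, mul_inv, mul_assoc, ← h, inv_mul_cancel_left₀ hb.ne']

theorem integral_mul_pow_const_mul_comp_mul (g : ℝ → ℝ) (a : ℝ) {b : ℝ} (hb : 0 < b) (p : ℕ) :
    ∫ r in Ioi (0 : ℝ), r * (a * g (b * r)) ^ p =
      a ^ p / b ^ 2 * ∫ r in Ioi (0 : ℝ), r * g r ^ p := by
  simp only [mul_pow, mul_left_comm _ (a ^ p)]
  rw [integral_const_mul, integral_mul_comp_mul (fun r => g r ^ p) hb, ← mul_assoc,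
    div_eq_mul_inv]

theorem integral_mul_sq_deriv_const_mul_comp_mul (g : ℝ → ℝ) (a : ℝ) {b : ℝ} (hb : 0 < b) :
    ∫ r in Ioi (0 : ℝ), r * deriv (fun r => a * g (b * r)) r ^ 2 =
      a ^ 2 * ∫ r in Ioi (0 : ℝ), r * deriv g r ^ 2 := by
  have hd (r : ℝ) : deriv (fun r => a * g (b * r)) r = a * b * deriv g (b * r) := by
    rw [deriv_const_mul_field, deriv_comp_mul_left, smul_eq_mul, mul_assoc]
  simp only [hd]
  rw [integral_mul_pow_const_mul_comp_mul (deriv g) (a * b) hb, mul_pow,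
    mul_div_cancel_right₀ _ (pow_ne_zero 2 hb.ne')]

theorem setIntegral_mul_nonneg (hg : ∀ r, 0 < r → 0 ≤ g r) :
    0 ≤ ∫ r in Ioi (0 : ℝ), r * g r :=
  setIntegral_nonneg measurableSet_Ioi fun r (hr : 0 < r) => mul_nonneg hr.le (hg r hr)

end WeightedIntegral

section Profiles

variable {f : ℝ → ℝ}

namespace IsProfile

theorem abs_le (hf : IsProfile f) {r : ℝ} (hr : 0 ≤ r) : |f r| ≤ f 0 := by
  rw [abs_of_nonneg (hf.nonneg r)]
  exact hf.antitone hr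

theorem continuous (hf : IsProfile f) : Continuous f :=
  let ⟨_, hK⟩ := hf.lipschitz
  hK.continuous

theorem integrableOn_pow (hf : IsProfile f) {p : ℕ} (hp : p ≠ 0) :
    IntegrableOn (fun r => r * f r ^ p) (Ioi 0) := by
  obtain ⟨R, hR⟩ := hf.vanishing
  refine integrableOn_mul_of_vanishing (C := f 0 ^ p)
    (fun r hr => by rw [hR _ hr, zero_pow hp]) (fun r hr => ?_)
    (hf.continuous.measurable.pow_const p)
  rw [abs_pow]
  exact pow_le_pow_left₀ (abs_nonneg _) (hf.abs_le hr.le) p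

theorem integrableOn_sq_deriv (hf : IsProfile f) :
    IntegrableOn (fun r => r * deriv f r ^ 2) (Ioi 0) :=
  let ⟨_, hR⟩ := hf.vanishing
  let ⟨_, hK⟩ := hf.lipschitz
  integrableOn_mul_sq_deriv hR hK

theorem sub_le (hf : IsProfile f) {a b ε : ℝ} (ha : 0 < a) (hab : a ≤ b) (hε : 0 < ε) :
    f a - f b ≤
      ε / 2 * (∫ r in Ioi (0 : ℝ), r * deriv f r ^ 2) + Real.log (b / a) / (2 * ε) := by
  obtain ⟨K, hK⟩ := hf.lipschitz
  have hac : AbsolutelyContinuousOnInterval f a b :=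
    hK.lipschitzOnWith.absolutelyContinuousOnInterval
  have hsub : Ioc a b ⊆ Ioi 0 := fun r hr => ha.trans hr.1
  have hinv : IntervalIntegrable (fun r : ℝ => r⁻¹) volume a b :=
    intervalIntegral.intervalIntegrable_inv
      (fun x hx => (ha.trans_le (uIcc_of_le hab ▸ hx).1).ne') continuousOn_id
  have henergy : IntervalIntegrable (fun r => ε / 2 * (r * deriv f r ^ 2)) volume a b :=
    ((intervalIntegrable_iff_integrableOn_Ioc_of_le hab).2
      (hf.integrableOn_sq_deriv.mono_set hsub)).const_mul _
  calc f a - f b = ∫ r in a..b, -deriv f r := by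
        rw [intervalIntegral.integral_neg, hac.integral_deriv_eq_sub, neg_sub]
    _ ≤ ∫ r in a..b, (ε / 2 * (r * deriv f r ^ 2) + (1 / (2 * ε)) * r⁻¹) := by
        refine intervalIntegral.integral_mono_on hab hac.intervalIntegrable_deriv.neg
          (henergy.add (hinv.const_mul _)) fun r hr => ?_
        have hr₀ : 0 < r := ha.trans_le hr.1
        have hsq : ε / 2 * (r * deriv f r ^ 2) + (1 / (2 * ε)) * r⁻¹ + deriv f r
            = (ε * r * deriv f r + 1) ^ 2 / (2 * ε * r) := by
          field_simp
          ring
        have hsq₀ : 0 ≤ (ε * r * deriv f r + 1) ^ 2 / (2 * ε * r) := by positivity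
        linarith
    _ = ε / 2 * (∫ r in Ioc a b, r * deriv f r ^ 2) + Real.log (b / a) / (2 * ε) := by
        rw [intervalIntegral.integral_add henergy (hinv.const_mul _),
          intervalIntegral.integral_const_mul, intervalIntegral.integral_const_mul,
          integral_inv_of_pos ha (ha.trans_le hab), intervalIntegral.integral_of_le hab]
        ring
    _ ≤ _ := by
        gcongr
        · filter_upwards [ae_restrict_mem measurableSet_Ioi] with r (hr : 0 < r)
          positivity
        · exact hf.integrableOn_sq_deriv

theorem sq_mul_sq_le (hf : IsProfile f) {r : ℝ} (hr : 0 < r) :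
    f r ^ 2 * r ^ 2 ≤ 2 * ∫ r in Ioi (0 : ℝ), r * f r ^ 2 := by
  have hcont := hf.continuous
  have hdisc : ∫ s in (0 : ℝ)..r, s * f r ^ 2 ≤ ∫ s in (0 : ℝ)..r, s * f s ^ 2 := by
    refine intervalIntegral.integral_mono_on hr.le
      (Continuous.intervalIntegrable (by fun_prop) _ _)
      (Continuous.intervalIntegrable (by fun_prop) _ _) fun s hs => ?_
    exact mul_le_mul_of_nonneg_left (pow_le_pow_left₀ (hf.nonneg r) (hf.antitone hs.2) 2) hs.1
  have htotal : ∫ s in (0 : ℝ)..r, s * f s ^ 2 ≤ ∫ s in Ioi (0 : ℝ), s * f s ^ 2 := by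
    rw [intervalIntegral.integral_of_le hr.le]
    refine setIntegral_mono_set (hf.integrableOn_pow two_ne_zero) ?_
      (Eventually.of_forall fun s hs => hs.1)
    filter_upwards [ae_restrict_mem measurableSet_Ioi] with r (hr : 0 < r)
    positivity
  rw [intervalIntegral.integral_mul_const, integral_id] at hdisc
  linarith

theorem comp_mul (hf : IsProfile f) {a b : ℝ} (ha : 0 ≤ a) (hb : 0 < b) :
    IsProfile fun r => a * f (b * r) := by
  obtain ⟨K, hK⟩ := hf.lipschitz
  obtain ⟨R, hR⟩ := hf.vanishing
  have hscale : LipschitzWith (‖b‖₊) fun r : ℝ => b * r := lipschitzWith_smul b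
  exact
    { antitone := fun r s h =>
        mul_le_mul_of_nonneg_left (hf.antitone (mul_le_mul_of_nonneg_left h hb.le)) ha
      nonneg := fun r => mul_nonneg ha (hf.nonneg _)
      lipschitz := ⟨_, (lipschitzWith_smul a).comp (hK.comp hscale)⟩
      vanishing := ⟨R / b, fun r hr => by rw [hR _ ((div_le_iff₀' hb).1 hr), mul_zero]⟩ }

theorem mass_pos (hf : IsProfile f) {r : ℝ} (hr : 0 < r) (hfr : f r ≠ 0) :
    0 < ∫ r in Ioi (0 : ℝ), r * f r ^ 2 := by
  have h := hf.sq_mul_sq_le hr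
  have : 0 < f r ^ 2 * r ^ 2 := by positivity
  linarith

theorem energy_pos (hf : IsProfile f) {r : ℝ} (hr : 0 < r) (hfr : f r ≠ 0) :
    0 < ∫ r in Ioi (0 : ℝ), r * deriv f r ^ 2 := by
  refine (setIntegral_mul_nonneg fun _ _ => sq_nonneg _).lt_of_ne fun h₀ => hfr ?_
  obtain ⟨R, hR⟩ := hf.vanishing
  refine le_antisymm (le_of_forall_pos_le_add fun η hη => ?_) (hf.nonneg r)
  have hb := hf.sub_le hr (le_max_left r R)
    (ε := (|Real.log (max r R / r)| + 1) / (2 * η)) (by positivity)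
  rw [← h₀, hR _ (le_max_right r R)] at hb
  have hη' : Real.log (max r R / r) / (2 * ((|Real.log (max r R / r)| + 1) / (2 * η))) ≤ η := by
    rw [div_le_iff₀ (by positivity)]
    field_simp
    linarith [le_abs_self (Real.log (max r R / r))]
  linarith

end IsProfile

/-- Profiles with unit mass and unit gradient norm. The scalings `r ↦ a f (b r)` bring every
nonzero profile to this form and leave the Gagliardo–Nirenberg quotient unchanged. -/
structure IsNormalized (f : ℝ → ℝ) : Prop extends IsProfile f where
  mass : ∫ r in Ioi (0 : ℝ), r * f r ^ 2 = 1
  energy : ∫ r in Ioi (0 : ℝ), r * deriv f r ^ 2 = 1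

theorem IsProfile.exists_normalized (hf : IsProfile f) {r : ℝ} (hr : 0 < r) (hfr : f r ≠ 0) :
    ∃ g, IsNormalized g ∧ ∫ r in Ioi (0 : ℝ), r * f r ^ 4 =
      (∫ r in Ioi (0 : ℝ), r * g r ^ 4) * (∫ r in Ioi (0 : ℝ), r * deriv f r ^ 2) *
        ∫ r in Ioi (0 : ℝ), r * f r ^ 2 := by
  have hM := hf.mass_pos hr hfr
  have hD := hf.energy_pos hr hfr
  set M := ∫ r in Ioi (0 : ℝ), r * f r ^ 2
  set D := ∫ r in Ioi (0 : ℝ), r * deriv f r ^ 2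
  have hb : 0 < √(M / D) := Real.sqrt_pos.2 (by positivity)
  have ha : (√D)⁻¹ ^ 2 = D⁻¹ := by rw [inv_pow, Real.sq_sqrt hD.le]
  have hb₂ : √(M / D) ^ 2 = M / D := Real.sq_sqrt (by positivity)
  refine ⟨fun r => (√D)⁻¹ * f (√(M / D) * r), ⟨hf.comp_mul (by positivity) hb, ?_, ?_⟩, ?_⟩
  · rw [integral_mul_pow_const_mul_comp_mul f _ hb, ha, hb₂]
    change D⁻¹ / (M / D) * M = 1
    field_simp
  · rw [integral_mul_sq_deriv_const_mul_comp_mul f _ hb, ha]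
    exact inv_mul_cancel₀ hD.ne'
  · rw [integral_mul_pow_const_mul_comp_mul f _ hb, hb₂, show (√D)⁻¹ ^ 4 = D⁻¹ ^ 2 by
      rw [← ha]; ring]
    field_simp

end Profiles

section Maximizing

variable {f : ℝ → ℝ}

/-- An integrable majorant of `r * f r ^ 4`, uniform over normalized profiles `f`. -/
noncomputable def quarticMajorant (r : ℝ) : ℝ := if r ≤ 1 then 16 else 4 * r ^ (-3 : ℝ)

theorem integrableOn_quarticMajorant : IntegrableOn quarticMajorant (Ioi 0) := by
  rw [← Ioc_union_Ioi_eq_Ioi zero_le_one]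
  refine IntegrableOn.union ?_ ?_
  · refine (integrableOn_const (C := (16 : ℝ)) measure_Ioc_lt_top.ne).congr_fun (fun r hr => ?_)
      measurableSet_Ioc
    rw [quarticMajorant, if_pos hr.2]
  · have h : IntegrableOn (fun r : ℝ => 4 * r ^ (-3 : ℝ)) (Ioi 1) :=
      (integrableOn_Ioi_rpow_of_lt (by norm_num) one_pos).const_mul 4
    refine h.congr_fun (fun r (hr : 1 < r) => ?_) measurableSet_Ioi
    rw [quarticMajorant, if_neg hr.not_ge]

theorem quarticMajorant_le (r : ℝ) : quarticMajorant r ≤ 16 := by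
  rw [quarticMajorant]
  split_ifs with h
  · exact le_rfl
  · have : r ^ (-3 : ℝ) ≤ 1 := Real.rpow_le_one_of_one_le_of_nonpos (not_le.1 h).le (by norm_num)
    linarith

/-- The pointwise bounds shared by normalized profiles that survive pointwise limits. -/
structure HasProfileBounds (f : ℝ → ℝ) : Prop where
  nonneg : ∀ r, 0 < r → 0 ≤ f r
  le : ∀ r, 0 < r → r * f r ≤ 2
  quartic : ∀ r, 0 < r → r * f r ^ 4 ≤ quarticMajorant r
  anti : ∀ r s, 0 < r → r ≤ s → f s ≤ f r
  osc : ∀ a b ε, 0 < a → a ≤ b → 0 < ε → f a - f b ≤ ε / 2 + Real.log (b / a) / (2 * ε)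

namespace IsNormalized

theorem sq_mul_sq_le_two (hf : IsNormalized f) {r : ℝ} (hr : 0 < r) :
    f r ^ 2 * r ^ 2 ≤ 2 := by
  simpa only [hf.mass, mul_one] using hf.sq_mul_sq_le hr

theorem mul_le (hf : IsNormalized f) {r : ℝ} (hr : 0 < r) : r * f r ≤ 3 / 2 := by
  nlinarith [hf.sq_mul_sq_le_two hr, hf.nonneg r]

theorem osc_le (hf : IsNormalized f) {a b ε : ℝ} (ha : 0 < a) (hab : a ≤ b) (hε : 0 < ε) :
    f a - f b ≤ ε / 2 + Real.log (b / a) / (2 * ε) := by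
  simpa only [hf.energy, mul_one] using hf.sub_le ha hab hε

theorem mul_pow_four_le_of_le_one (hf : IsNormalized f) {r : ℝ} (hr : 0 < r) (hr₁ : r ≤ 1) :
    r * f r ^ 4 ≤ 16 := by
  obtain ⟨s, hs, rfl⟩ : ∃ s : ℝ, 0 < s ∧ s ^ 4 = r :=
    ⟨r ^ (1 / 4 : ℝ), Real.rpow_pos_of_pos hr _, by
      rw [← Real.rpow_natCast, ← Real.rpow_mul hr.le]; norm_num⟩
  have hlog : Real.log (1 / s ^ 4) = 4 * Real.log (1 / s) := by
    rw [one_div, one_div, Real.log_inv, Real.log_inv, Real.log_pow]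
    push_cast
    ring
  have hle : f (s ^ 4) ≤ 2 / s := by
    have hosc := hf.osc_le hr hr₁ one_pos
    have hone := hf.mul_le one_pos
    have hlog_le := Real.log_le_sub_one_of_pos (show 0 < 1 / s by positivity)
    have : 2 / s = 2 * (1 / s) := by ring
    linarith
  have hf₀ := hf.nonneg (s ^ 4)
  calc s ^ 4 * f (s ^ 4) ^ 4 = (f (s ^ 4) * s) ^ 4 := by ring
    _ ≤ 2 ^ 4 := by
      gcongr
      exact (le_div_iff₀ hs).1 hle
    _ = 16 := by norm_num

theorem mul_pow_four_le (hf : IsNormalized f) {r : ℝ} (hr : 0 < r) :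
    r * f r ^ 4 ≤ 4 * r ^ (-3 : ℝ) := by
  have h := hf.sq_mul_sq_le_two hr
  rw [Real.rpow_neg hr.le, ← div_eq_mul_inv, le_div_iff₀ (by positivity)]
  calc r * f r ^ 4 * r ^ (3 : ℝ) = (f r ^ 2 * r ^ 2) ^ 2 := by
        rw [show (3 : ℝ) = (3 : ℕ) by norm_num, Real.rpow_natCast]
        ring
    _ ≤ 2 ^ 2 := by gcongr
    _ = 4 := by norm_num

theorem hasProfileBounds (hf : IsNormalized f) : HasProfileBounds f where
  nonneg r _ := hf.nonneg r
  le r hr := (hf.mul_le hr).trans (by norm_num)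
  quartic r hr := by
    rw [quarticMajorant]
    split_ifs with h
    exacts [hf.mul_pow_four_le_of_le_one hr h, hf.mul_pow_four_le hr]
  anti _ _ _ h := hf.antitone h
  osc _ _ _ := hf.osc_le

end IsNormalized

namespace HasProfileBounds

theorem of_tendsto {F : ℕ → ℝ → ℝ} (hF : ∀ n, HasProfileBounds (F n))
    (h : ∀ r, 0 < r → Tendsto (fun n => F n r) atTop (𝓝 (f r))) : HasProfileBounds f where
  nonneg r hr := ge_of_tendsto' (h r hr) fun n => (hF n).nonneg r hr
  le r hr := le_of_tendsto' ((h r hr).const_mul r) fun n => (hF n).le r hr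
  quartic r hr := le_of_tendsto' (((h r hr).pow 4).const_mul r) fun n => (hF n).quartic r hr
  anti r s hr hrs := le_of_tendsto_of_tendsto' (h s (hr.trans_le hrs)) (h r hr) fun n =>
    (hF n).anti r s hr hrs
  osc a b ε ha hab hε := le_of_tendsto' ((h a ha).sub (h b (ha.trans_le hab))) fun n =>
    (hF n).osc a b ε ha hab hε

theorem norm_quartic_le (hf : HasProfileBounds f) {r : ℝ} (hr : 0 < r) :
    ‖r * f r ^ 4‖ ≤ quarticMajorant r := by
  rw [Real.norm_of_nonneg (by positivity)]
  exact hf.quartic r hr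

theorem abs_sub_le (hf : HasProfileBounds f) {a b ε : ℝ} (ha : 0 < a) (hab : a ≤ b) (hε : 0 < ε)
    (hb : b ≤ a * (1 + ε ^ 2)) : |f a - f b| ≤ ε := by
  rw [abs_of_nonneg (sub_nonneg.2 (hf.anti a b ha hab))]
  have hlog : Real.log (b / a) / (2 * ε) ≤ ε / 2 := by
    have hlog_le := Real.log_le_sub_one_of_pos (div_pos (ha.trans_le hab) ha)
    have hdiv : b / a ≤ 1 + ε ^ 2 := (div_le_iff₀' ha).2 hb
    rw [div_le_iff₀ (by positivity)]
    linarith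
  linarith [hf.osc a b ε ha hab hε]

theorem continuousOn (hf : HasProfileBounds f) : ContinuousOn f (Ioi 0) := by
  refine fun x (hx : 0 < x) => ContinuousAt.continuousWithinAt (Metric.continuousAt_iff'.2 ?_)
  intro ε hε
  have hfactor : 1 < 1 + (ε / 2) ^ 2 := lt_add_of_pos_right 1 (by positivity)
  have hright : ∀ᶠ y in 𝓝 x, y < x * (1 + (ε / 2) ^ 2) :=
    gt_mem_nhds (lt_mul_of_one_lt_right hx hfactor)
  have hleft : ∀ᶠ y in 𝓝 x, x < y * (1 + (ε / 2) ^ 2) :=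
    (continuous_mul_const _).continuousAt.eventually_const_lt (lt_mul_of_one_lt_right hx hfactor)
  filter_upwards [hright, hleft, lt_mem_nhds hx] with y hyr hyl hy
  rw [Real.dist_eq]
  refine lt_of_le_of_lt ?_ (half_lt_self hε)
  rcases le_total y x with h | h
  · exact hf.abs_sub_le hy h (half_pos hε) hyl.le
  · rw [abs_sub_comm]
    exact hf.abs_sub_le hx h (half_pos hε) hyr.le

end HasProfileBounds

theorem cauchySeq_of_hasProfileBounds {F : ℕ → ℝ → ℝ} (hF : ∀ n, HasProfileBounds (F n))
    (h : ∀ q : ℚ, 0 < q → CauchySeq fun n => F n q) {r : ℝ} (hr : 0 < r) :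
    CauchySeq fun n => F n r := by
  refine Metric.cauchySeq_iff'.2 fun η hη => ?_
  have hη₄ : 0 < η / 4 := by positivity
  obtain ⟨q, hrq, hqr⟩ := exists_rat_btwn
    (lt_mul_of_one_lt_right hr (lt_add_of_pos_right 1 (show 0 < (η / 4) ^ 2 by positivity)))
  have hnear (n : ℕ) : |F n r - F n q| ≤ η / 4 := (hF n).abs_sub_le hr hrq.le hη₄ hqr.le
  obtain ⟨N, hN⟩ := Metric.cauchySeq_iff'.1 (h q (by exact_mod_cast hr.trans hrq)) (η / 4) hη₄
  refine ⟨N, fun n hn => ?_⟩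
  have hq := hN n hn
  simp only [Real.dist_eq] at hq ⊢
  calc |F n r - F N r|
      = |(F n r - F n q) + (F n q - F N q) + (F N q - F N r)| := by ring_nf
    _ ≤ |F n r - F n q| + |F n q - F N q| + |F N q - F N r| := abs_add_three _ _ _
    _ < η := by linarith [hnear n, hnear N, abs_sub_comm (F N q) (F N r)]

theorem exists_subseq_tendsto_of_hasProfileBounds {F : ℕ → ℝ → ℝ}
    (hF : ∀ n, HasProfileBounds (F n)) :
    ∃ φ : ℕ → ℕ, StrictMono φ ∧ ∃ f : ℝ → ℝ, ∀ r, 0 < r →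
      Tendsto (fun n => F (φ n) r) atTop (𝓝 (f r)) := by
  have hmem (n : ℕ) : (fun q : {q : ℚ // 0 < q} => F n q) ∈
      Set.pi univ fun q : {q : ℚ // 0 < q} => Icc (0 : ℝ) (2 / (q : ℚ)) := fun q _ => by
    have hq : (0 : ℝ) < (q : ℚ) := by exact_mod_cast q.2
    exact ⟨(hF n).nonneg _ hq, (le_div_iff₀' hq).2 ((hF n).le _ hq)⟩
  obtain ⟨g, -, φ, hφ, hg⟩ := (isCompact_univ_pi fun _ => isCompact_Icc).tendsto_subseq hmem
  rw [tendsto_pi_nhds] at hg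
  choose! f hf using fun r hr => cauchySeq_tendsto_of_complete <|
    cauchySeq_of_hasProfileBounds (fun n => hF (φ n)) (fun q hq => (hg ⟨q, hq⟩).cauchySeq)
      (r := r) hr
  exact ⟨φ, hφ, f, hf⟩

theorem ProfileGN.of_isNormalized {C : ℝ} (hC₀ : 0 ≤ C)
    (hC : ∀ g, IsNormalized g → ∫ r in Ioi (0 : ℝ), r * g r ^ 4 ≤ C) : ProfileGN C := by
  intro f hf
  have hM : 0 ≤ ∫ r in Ioi (0 : ℝ), r * f r ^ 2 := setIntegral_mul_nonneg fun _ _ => sq_nonneg _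
  have hD : 0 ≤ ∫ r in Ioi (0 : ℝ), r * deriv f r ^ 2 :=
    setIntegral_mul_nonneg fun _ _ => sq_nonneg _
  by_cases hf₀ : ∃ r, 0 < r ∧ f r ≠ 0
  · obtain ⟨r, hr, hfr⟩ := hf₀
    obtain ⟨g, hg, hgf⟩ := hf.exists_normalized hr hfr
    rw [hgf]
    gcongr
    exact hC g hg
  · push Not at hf₀
    rw [setIntegral_congr_fun (g := fun _ => 0) measurableSet_Ioi fun r (hr : 0 < r) => by
      simp only [hf₀ r hr, zero_pow four_ne_zero, mul_zero]]
    simp only [integral_zero]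
    positivity

theorem exists_maximizing_sequence {C₁ : ℝ} (hC₁ : 0 < C₁) (h : ¬ ProfileGN C₁) :
    ∃ L, C₁ < L ∧ ProfileGN L ∧ ∃ F : ℕ → ℝ → ℝ, (∀ n, IsNormalized (F n)) ∧
      Tendsto (fun n => ∫ r in Ioi (0 : ℝ), r * F n r ^ 4) atTop (𝓝 L) := by
  set S : Set ℝ := (fun f : ℝ → ℝ => ∫ r in Ioi (0 : ℝ), r * f r ^ 4) '' {f | IsNormalized f}
  have hbdd : BddAbove S := by
    refine ⟨∫ r in Ioi (0 : ℝ), quarticMajorant r, ?_⟩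
    rintro _ ⟨f, hf : IsNormalized f, rfl⟩
    exact setIntegral_mono_on (hf.integrableOn_pow four_ne_zero) integrableOn_quarticMajorant
      measurableSet_Ioi fun r hr => hf.hasProfileBounds.quartic r hr
  obtain ⟨g, hg, hgC₁⟩ : ∃ g, IsNormalized g ∧ C₁ < ∫ r in Ioi (0 : ℝ), r * g r ^ 4 := by
    contrapose! h
    exact ProfileGN.of_isNormalized hC₁.le h
  have hlt : C₁ < sSup S := hgC₁.trans_le (le_csSup hbdd ⟨g, hg, rfl⟩)
  obtain ⟨w, -, hw, hwS⟩ := exists_seq_tendsto_sSup (S := S) ⟨_, g, hg, rfl⟩ hbdd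
  choose F hF hFw using hwS
  refine ⟨sSup S, hlt, ProfileGN.of_isNormalized (hC₁.trans hlt).le fun f hf =>
    le_csSup hbdd ⟨f, hf, rfl⟩, F, hF, ?_⟩
  simpa only [hFw] using hw

end Maximizing

section LogTest

variable {a b : ℝ}

/-- The truncated fundamental solution of the planar Laplacian, equal to `log (b / r)` on `[a, b]`
and constant outside. Testing a radial equation against it integrates the equation twice. -/
noncomputable def logTest (a b r : ℝ) : ℝ := Real.log b - Real.log (min b (max a r))

theorem logTest_of_le (hab : a < b) {r : ℝ} (hr : r ≤ a) :
    logTest a b r = Real.log b - Real.log a := by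
  rw [logTest, max_eq_left hr, min_eq_right hab.le]

theorem logTest_of_mem {r : ℝ} (hr : r ∈ Icc a b) :
    logTest a b r = Real.log b - Real.log r := by
  rw [logTest, max_eq_right hr.1, min_eq_right hr.2]

theorem logTest_of_ge {r : ℝ} (hr : b ≤ r) : logTest a b r = 0 := by
  rw [logTest, min_eq_left (hr.trans (le_max_right _ _)), sub_self]

theorem abs_logTest_le (ha : 0 < a) (hab : a < b) (r : ℝ) :
    |logTest a b r| ≤ Real.log b - Real.log a := by
  have hle : a ≤ min b (max a r) := le_min hab.le (le_max_left _ _)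
  rw [logTest, abs_of_nonneg (sub_nonneg.2 (Real.log_le_log (ha.trans_le hle) (min_le_left _ _)))]
  exact sub_le_sub_left (Real.log_le_log ha hle) _

theorem lipschitzOnWith_log (ha : 0 < a) : LipschitzOnWith a⁻¹.toNNReal Real.log (Ici a) := by
  refine (convex_Ici a).lipschitzOnWith_of_nnnorm_deriv_le
    (fun x hx => Real.differentiableAt_log (ha.trans_le hx).ne') fun x (hx : a ≤ x) => ?_
  rw [Real.deriv_log, ← NNReal.coe_le_coe, coe_nnnorm, Real.coe_toNNReal _ (inv_nonneg.2 ha.le),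
    Real.norm_of_nonneg (inv_nonneg.2 (ha.trans_le hx).le)]
  exact inv_anti₀ ha hx

theorem lipschitzWith_logTest (ha : 0 < a) (hab : a < b) :
    LipschitzWith a⁻¹.toNNReal (logTest a b) := by
  have hclamp : LipschitzWith 1 fun r => min b (max a r) :=
    (LipschitzWith.id.const_max a).const_min b
  have hmem (x : ℝ) : min b (max a x) ∈ Ici a := le_min hab.le (le_max_left _ _)
  refine LipschitzWith.of_dist_le_mul fun x y => ?_
  simp only [logTest, dist_sub_left]
  refine ((lipschitzOnWith_log ha).dist_le_mul _ (hmem x) _ (hmem y)).trans ?_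
  gcongr
  simpa only [NNReal.coe_one, one_mul] using hclamp.dist_le_mul x y

theorem deriv_logTest (ha : 0 < a) (hab : a < b) {r : ℝ} (hra : r ≠ a) (hrb : r ≠ b) :
    deriv (logTest a b) r = (Ioo a b).indicator (fun r => -r⁻¹) r := by
  rcases hra.lt_or_gt with h | h
  · rw [indicator_of_notMem fun h' => h.not_gt h'.1]
    have : logTest a b =ᶠ[𝓝 r] fun _ => Real.log b - Real.log a := by
      filter_upwards [gt_mem_nhds h] with s hs using logTest_of_le hab hs.le
    rw [this.deriv_eq, deriv_const]
  rcases hrb.lt_or_gt with h' | h'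
  · rw [indicator_of_mem (show r ∈ Ioo a b from ⟨h, h'⟩)]
    have : logTest a b =ᶠ[𝓝 r] fun s => Real.log b - Real.log s := by
      filter_upwards [Ioo_mem_nhds h h'] with s hs using logTest_of_mem (Ioo_subset_Icc_self hs)
    rw [this.deriv_eq]
    exact ((Real.hasDerivAt_log (ha.trans h).ne').const_sub _).deriv
  · rw [indicator_of_notMem fun h'' => h'.not_gt h''.2]
    exact deriv_eq_zero_of_vanishing (fun _ => logTest_of_ge) h'

theorem integral_deriv_mul_deriv_logTest (ha : 0 < a) (hab : a < b) {f : ℝ → ℝ} {K : ℝ≥0}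
    (hK : LipschitzWith K f) :
    ∫ r in Ioi (0 : ℝ), r * (deriv f r * deriv (logTest a b) r) = f a - f b := by
  have hne (c : ℝ) : ∀ᵐ r : ℝ ∂volume.restrict (Ioi 0), r ≠ c :=
    ae_restrict_of_ae (Measure.ae_ne volume c)
  calc ∫ r in Ioi (0 : ℝ), r * (deriv f r * deriv (logTest a b) r)
      = ∫ r in Ioi (0 : ℝ), (Ioo a b).indicator (fun r => -deriv f r) r := by
        refine integral_congr_ae ?_
        filter_upwards [hne a, hne b, ae_restrict_mem measurableSet_Ioi] with r hra hrb hr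
        have hr₀ : r ≠ 0 := (show 0 < r from hr).ne'
        rw [deriv_logTest ha hab hra hrb]
        by_cases h : r ∈ Ioo a b
        · rw [indicator_of_mem h, indicator_of_mem h]
          field_simp
        · rw [indicator_of_notMem h, indicator_of_notMem h, mul_zero, mul_zero]
    _ = ∫ r in a..b, -deriv f r := by
        rw [setIntegral_indicator measurableSet_Ioo, intervalIntegral.integral_of_le hab.le,
          integral_Ioc_eq_integral_Ioo, inter_eq_self_of_subset_right]
        exact fun r hr => ha.trans hr.1
    _ = f a - f b := by
        rw [intervalIntegral.integral_neg,
          hK.lipschitzOnWith.absolutelyContinuousOnInterval.integral_deriv_eq_sub, neg_sub]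

end LogTest

section FirstVariation

theorem integral_add_mul_add_mul {α : Type*} [MeasurableSpace α] {μ : Measure α} {f g h : α → ℝ}
    (hf : Integrable f μ) (hg : Integrable g μ) (hh : Integrable h μ) (c d : ℝ) :
    ∫ x, (f x + c * g x + d * h x) ∂μ
      = ∫ x, f x ∂μ + c * ∫ x, g x ∂μ + d * ∫ x, h x ∂μ := by
  have hfg : Integrable (fun x => f x + c * g x) μ := hf.add (hg.const_mul c)
  rw [integral_add hfg (hh.const_mul d), integral_add hf (hg.const_mul c), integral_const_mul,
    integral_const_mul]

variable {f φ : ℝ → ℝ} {K : ℝ≥0} {R : ℝ}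

theorem integrableOn_mul_of_continuous (hφ : Continuous φ) (hR : ∀ r, R ≤ r → φ r = 0) :
    IntegrableOn (fun r => r * φ r) (Ioi 0) := by
  obtain ⟨C, hC⟩ := isCompact_Icc.exists_bound_of_continuousOn (hφ.continuousOn (s := Icc 0 R))
  refine integrableOn_mul_of_vanishing (C := max C 0) hR (fun r hr => ?_) hφ.measurable
  rcases le_total R r with h | h
  · rw [hR r h, abs_zero]
    exact le_max_right _ _
  · exact (hC r ⟨hr.le, h⟩).trans (le_max_left _ _)

theorem integrableOn_mul_deriv_mul_deriv {K' : ℝ≥0} (hf : LipschitzWith K' f)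
    (hφ : LipschitzWith K φ) (hR : ∀ r, R ≤ r → φ r = 0) :
    IntegrableOn (fun r => r * (deriv f r * deriv φ r)) (Ioi 0) := by
  refine integrableOn_mul_of_vanishing (R := R + 1) (C := K' * K)
    (fun r hr => by rw [deriv_eq_zero_of_vanishing hR (by linarith), mul_zero])
    (fun r _ => ?_) ((measurable_deriv f).mul (measurable_deriv φ))
  rw [abs_mul]
  exact mul_le_mul (norm_deriv_le_of_lipschitz hf) (norm_deriv_le_of_lipschitz hφ)
    (abs_nonneg _) K'.2

theorem IsProfile.energy_add_mul (hf : IsProfile f) (hK : LipschitzWith K φ)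
    (hR : ∀ r, R ≤ r → φ r = 0) (ε : ℝ) :
    ∫ r in Ioi (0 : ℝ), r * deriv (fun r => f r + ε * φ r) r ^ 2 =
      (∫ r in Ioi (0 : ℝ), r * deriv f r ^ 2) +
        2 * ε * (∫ r in Ioi (0 : ℝ), r * (deriv f r * deriv φ r)) +
        ε ^ 2 * ∫ r in Ioi (0 : ℝ), r * deriv φ r ^ 2 := by
  obtain ⟨K', hK'⟩ := hf.lipschitz
  rw [← integral_add_mul_add_mul hf.integrableOn_sq_deriv
    (integrableOn_mul_deriv_mul_deriv hK' hK hR) (integrableOn_mul_sq_deriv hR hK)]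
  refine integral_congr_ae ?_
  filter_upwards [ae_restrict_of_ae hK'.ae_differentiableAt_of_real,
    ae_restrict_of_ae hK.ae_differentiableAt_of_real] with r hf' hφ'
  have hderiv : deriv (fun r => f r + ε * φ r) r = deriv f r + ε * deriv φ r :=
    (hf'.hasDerivAt.add (hφ'.hasDerivAt.const_mul ε)).deriv
  rw [hderiv]
  ring

theorem IsProfile.mass_add_mul (hf : IsProfile f) (hφ : Continuous φ)
    (hR : ∀ r, R ≤ r → φ r = 0) (ε : ℝ) :
    ∫ r in Ioi (0 : ℝ), r * (f r + ε * φ r) ^ 2 =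
      (∫ r in Ioi (0 : ℝ), r * f r ^ 2) + 2 * ε * (∫ r in Ioi (0 : ℝ), r * (f r * φ r)) +
        ε ^ 2 * ∫ r in Ioi (0 : ℝ), r * φ r ^ 2 := by
  have hfc := hf.continuous
  rw [← integral_add_mul_add_mul (hf.integrableOn_pow two_ne_zero)
    (integrableOn_mul_of_continuous (φ := fun r => f r * φ r) (by fun_prop) fun r hr => by
      rw [hR r hr, mul_zero])
    (integrableOn_mul_of_continuous (φ := fun r => φ r ^ 2) (by fun_prop) fun r hr => by
      rw [hR r hr, zero_pow two_ne_zero])]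
  congr 1 with r
  ring

theorem IsProfile.quartic_add_mul_le (hf : IsProfile f) (hφ : Continuous φ)
    (hR : ∀ r, R ≤ r → φ r = 0) (ε : ℝ) :
    (∫ r in Ioi (0 : ℝ), r * f r ^ 4) + 4 * ε * (∫ r in Ioi (0 : ℝ), r * (f r ^ 3 * φ r)) ≤
      ∫ r in Ioi (0 : ℝ), r * (f r + ε * φ r) ^ 4 := by
  have hfc := hf.continuous
  obtain ⟨R', hR'⟩ := hf.vanishing
  have hcubic : IntegrableOn (fun r => r * (f r ^ 3 * φ r)) (Ioi 0) :=
    integrableOn_mul_of_continuous (by fun_prop) fun r hr => by rw [hR r hr, mul_zero]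
  have hquartic : IntegrableOn (fun r => r * (f r + ε * φ r) ^ 4) (Ioi 0) :=
    integrableOn_mul_of_continuous (R := max R R') (by fun_prop) fun r hr => by
      rw [hR r ((le_max_left _ _).trans hr), hR' r ((le_max_right _ _).trans hr), mul_zero,
        add_zero, zero_pow four_ne_zero]
  have hf₄ := hf.integrableOn_pow four_ne_zero
  rw [← integral_const_mul, ← integral_add hf₄ (hcubic.const_mul _)]
  refine setIntegral_mono_on (hf₄.add (hcubic.const_mul _)) hquartic
    measurableSet_Ioi fun r (hr : 0 < r) => ?_
  have htangent : 0 ≤ (f r + ε * φ r) ^ 4 - f r ^ 4 - 4 * ε * (f r ^ 3 * φ r) := by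
    calc 0 ≤ (ε * φ r) ^ 2 * ((ε * φ r + 2 * f r) ^ 2 + 2 * f r ^ 2) := by positivity
      _ = _ := by ring
  nlinarith

theorem IsNormalized.variation_le {L : ℝ} (hL : ProfileGN L) (hL₀ : 0 ≤ L)
    (hf : IsNormalized f) (hK : LipschitzWith K φ) (hR : ∀ r, R ≤ r → φ r = 0) (ε : ℝ) :
    (∫ r in Ioi (0 : ℝ), r * f r ^ 4) + 4 * ε * (∫ r in Ioi (0 : ℝ), r * (f r ^ 3 * φ r)) ≤
      L * (1 + 2 * ε * (∫ r in Ioi (0 : ℝ), r * (deriv f r * deriv φ r))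
          + ε ^ 2 * ∫ r in Ioi (0 : ℝ), r * deriv φ r ^ 2)
        * (1 + 2 * ε * (∫ r in Ioi (0 : ℝ), r * (f r * φ r))
          + ε ^ 2 * ∫ r in Ioi (0 : ℝ), r * φ r ^ 2) := by
  obtain ⟨K', hK'⟩ := hf.lipschitz
  obtain ⟨R', hR'⟩ := hf.vanishing
  have hg : LipschitzWith _ fun r => f r + ε * φ r :=
    hK'.add ((lipschitzWith_smul ε).comp hK)
  have hgR : ∀ r, max R R' ≤ r → f r + ε * φ r = 0 := fun r hr => by
    rw [hR' r ((le_max_right _ _).trans hr), hR r ((le_max_left _ _).trans hr), mul_zero, add_zero]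
  have henergy := hf.toIsProfile.energy_add_mul hK hR ε
  have hmass := hf.toIsProfile.mass_add_mul hK.continuous hR ε
  rw [hf.energy] at henergy
  rw [hf.mass] at hmass
  rw [← henergy, ← hmass]
  exact (hf.toIsProfile.quartic_add_mul_le hK.continuous hR ε).trans (hL.of_lipschitz hL₀ hg hgR)

theorem eq_of_forall_le_mul {L A B C D M : ℝ}
    (h : ∀ ε : ℝ, L + 4 * ε * A ≤ L * (1 + 2 * ε * B + ε ^ 2 * D) * (1 + 2 * ε * C + ε ^ 2 * M)) :
    2 * A = L * (B + C) := by
  set gap : ℝ → ℝ := fun ε =>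
    L * (1 + 2 * ε * B + ε ^ 2 * D) * (1 + 2 * ε * C + ε ^ 2 * M) - (L + 4 * ε * A) with hgap
  have hquad (b d : ℝ) : HasDerivAt (fun ε : ℝ => 1 + 2 * ε * b + ε ^ 2 * d) (2 * b) 0 := by
    refine (((((hasDerivAt_id (0 : ℝ)).const_mul 2).mul_const b).const_add 1).add
      (((hasDerivAt_id (0 : ℝ)).pow 2).mul_const d)).congr_deriv ?_
    simp
  have hlin : HasDerivAt (fun ε : ℝ => L + 4 * ε * A) (4 * A) 0 := by
    simpa using (((hasDerivAt_id (0 : ℝ)).const_mul 4).mul_const A).const_add L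
  have hderiv : HasDerivAt gap (2 * L * (B + C) - 4 * A) 0 := by
    refine ((((hquad B D).const_mul L).mul (hquad C M)).sub hlin).congr_deriv ?_
    ring
  have hmin : IsLocalMin gap 0 := Eventually.of_forall fun ε => by
    have hgap₀ : gap 0 = 0 := by simp only [hgap]; ring
    rw [hgap₀]
    exact sub_nonneg.2 (h ε)
  linarith [hmin.hasDerivAt_eq_zero hderiv]

end FirstVariation

section Maximizer

variable {F : ℕ → ℝ → ℝ} {f φ : ℝ → ℝ} {C R : ℝ}

theorem integral_le_of_tendsto_of_nonneg {α : Type*} [MeasurableSpace α] {μ : Measure α}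
    {G : ℕ → α → ℝ} {g : α → ℝ} (hG : ∀ n, Integrable (G n) μ) (hG₀ : ∀ n, 0 ≤ᵐ[μ] G n)
    (hlim : ∀ᵐ x ∂μ, Tendsto (fun n => G n x) atTop (𝓝 (g x))) {c : ℕ → ℝ} {C : ℝ}
    (hle : ∀ n, ∫ x, G n x ∂μ ≤ c n) (hc : Tendsto c atTop (𝓝 C)) :
    Integrable g μ ∧ ∫ x, g x ∂μ ≤ C := by
  have hg₀ : 0 ≤ᵐ[μ] g := by
    filter_upwards [hlim, ae_all_iff.2 hG₀] with x hx hx₀ using ge_of_tendsto' hx hx₀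
  have hfatou : ∫⁻ x, ENNReal.ofReal (g x) ∂μ ≤ ENNReal.ofReal C :=
    calc ∫⁻ x, ENNReal.ofReal (g x) ∂μ
        = ∫⁻ x, liminf (fun n => ENNReal.ofReal (G n x)) atTop ∂μ :=
          lintegral_congr_ae (hlim.mono fun x hx => (ENNReal.tendsto_ofReal hx).liminf_eq.symm)
      _ ≤ liminf (fun n => ∫⁻ x, ENNReal.ofReal (G n x) ∂μ) atTop :=
          lintegral_liminf_le' fun n => (hG n).aemeasurable.ennreal_ofReal
      _ = liminf (fun n => ENNReal.ofReal (∫ x, G n x ∂μ)) atTop := by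
          simp only [ofReal_integral_eq_lintegral_ofReal (hG _) (hG₀ _)]
      _ ≤ liminf (fun n => ENNReal.ofReal (c n)) atTop :=
          liminf_le_liminf (Eventually.of_forall fun n => ENNReal.ofReal_le_ofReal (hle n))
      _ = ENNReal.ofReal C := (ENNReal.tendsto_ofReal hc).liminf_eq
  have hg : Integrable g μ := (lintegral_ofReal_ne_top_iff_integrable
    (aestronglyMeasurable_of_tendsto_ae atTop (fun n => (hG n).aestronglyMeasurable) hlim) hg₀).1
    (hfatou.trans_lt ENNReal.ofReal_lt_top).ne
  have hC₀ : 0 ≤ C := ge_of_tendsto' hc fun n => (integral_nonneg_of_ae (hG₀ n)).trans (hle n)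
  refine ⟨hg, (ENNReal.ofReal_le_ofReal_iff hC₀).1 ?_⟩
  rwa [ofReal_integral_eq_lintegral_ofReal hg hg₀]

namespace HasProfileBounds

theorem norm_mul_pow_mul_le (hf : HasProfileBounds f) (hC : ∀ r, |φ r| ≤ C)
    (hR : ∀ r, R ≤ r → φ r = 0) {p : ℕ} (hp : p ≤ 4) {r : ℝ} (hr : 0 < r) :
    ‖r * (f r ^ p * φ r)‖ ≤ C * ((Ioo 0 R).indicator (fun _ => R) r + quarticMajorant r) := by
  have hC₀ : 0 ≤ C := (abs_nonneg _).trans (hC 0)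
  have hf₀ := hf.nonneg r hr
  have hquartic₀ : 0 ≤ quarticMajorant r := le_trans (by positivity) (hf.quartic r hr)
  rcases lt_or_ge r R with h | h
  · have hpow : f r ^ p ≤ 1 + f r ^ 4 := by
      rcases le_total (f r) 1 with h₁ | h₁
      · exact (pow_le_one₀ hf₀ h₁).trans (le_add_of_nonneg_right (by positivity))
      · exact (pow_le_pow_right₀ h₁ hp).trans (le_add_of_nonneg_left zero_le_one)
    rw [indicator_of_mem (show r ∈ Ioo 0 R from ⟨hr, h⟩), norm_mul, norm_mul,
      Real.norm_of_nonneg hr.le, Real.norm_of_nonneg (pow_nonneg hf₀ p)]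
    calc r * (f r ^ p * |φ r|) ≤ r * ((1 + f r ^ 4) * C) := by
          gcongr
          exact hC r
      _ = C * (r + r * f r ^ 4) := by ring
      _ ≤ C * (R + quarticMajorant r) := by
          gcongr
          exact hf.quartic r hr
  · rw [hR r h, mul_zero, mul_zero, norm_zero, indicator_of_notMem fun h' => h.not_gt h'.2,
      zero_add]
    positivity

theorem integrableOn_majorant (C R : ℝ) :
    IntegrableOn (fun r => C * ((Ioo 0 R).indicator (fun _ => R) r + quarticMajorant r))
      (Ioi 0) := by
  have hconst : Integrable ((Ioo 0 R).indicator fun _ => R) :=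
    (integrable_indicator_iff measurableSet_Ioo).2 (integrableOn_const measure_Ioo_lt_top.ne)
  exact (hconst.integrableOn.add integrableOn_quarticMajorant).const_mul C

theorem integrableOn_mul_pow_mul (hf : HasProfileBounds f) (hφ : Continuous φ)
    (hC : ∀ r, |φ r| ≤ C) (hR : ∀ r, R ≤ r → φ r = 0) {p : ℕ} (hp : p ≤ 4) :
    IntegrableOn (fun r => r * (f r ^ p * φ r)) (Ioi 0) := by
  have hcont : ContinuousOn (fun r => r * (f r ^ p * φ r)) (Ioi 0) :=
    continuousOn_id.mul ((hf.continuousOn.pow p).mul hφ.continuousOn)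
  refine (integrableOn_majorant C R).mono' (hcont.aestronglyMeasurable measurableSet_Ioi) ?_
  filter_upwards [ae_restrict_mem measurableSet_Ioi] with r hr
    using hf.norm_mul_pow_mul_le hC hR hp hr

theorem integrableOn_mul_pow_four (hf : HasProfileBounds f) :
    IntegrableOn (fun r => r * f r ^ 4) (Ioi 0) := by
  refine integrableOn_quarticMajorant.mono'
    ((continuousOn_id.mul (hf.continuousOn.pow 4)).aestronglyMeasurable measurableSet_Ioi) ?_
  filter_upwards [ae_restrict_mem measurableSet_Ioi] with r hr using hf.norm_quartic_le hr

theorem tendsto_integral_mul_pow_mul (hF : ∀ n, HasProfileBounds (F n))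
    (h : ∀ r, 0 < r → Tendsto (fun n => F n r) atTop (𝓝 (f r))) (hφ : Continuous φ)
    (hC : ∀ r, |φ r| ≤ C) (hR : ∀ r, R ≤ r → φ r = 0) {p : ℕ} (hp : p ≤ 4) :
    Tendsto (fun n => ∫ r in Ioi (0 : ℝ), r * (F n r ^ p * φ r)) atTop
      (𝓝 (∫ r in Ioi (0 : ℝ), r * (f r ^ p * φ r))) := by
  have hpos : ∀ᵐ r : ℝ ∂volume.restrict (Ioi 0), 0 < r := ae_restrict_mem measurableSet_Ioi
  exact tendsto_integral_of_dominated_convergence _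
    (fun n => ((hF n).integrableOn_mul_pow_mul hφ hC hR hp).aestronglyMeasurable)
    (integrableOn_majorant C R)
    (fun n => hpos.mono fun r hr => (hF n).norm_mul_pow_mul_le hC hR hp hr)
    (hpos.mono fun r hr => (((h r hr).pow p).mul_const _).const_mul _)

theorem tendsto_integral_mul_pow_four (hF : ∀ n, HasProfileBounds (F n))
    (h : ∀ r, 0 < r → Tendsto (fun n => F n r) atTop (𝓝 (f r))) :
    Tendsto (fun n => ∫ r in Ioi (0 : ℝ), r * F n r ^ 4) atTop
      (𝓝 (∫ r in Ioi (0 : ℝ), r * f r ^ 4)) := by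
  have hpos : ∀ᵐ r : ℝ ∂volume.restrict (Ioi 0), 0 < r := ae_restrict_mem measurableSet_Ioi
  exact tendsto_integral_of_dominated_convergence _
    (fun n => (hF n).integrableOn_mul_pow_four.aestronglyMeasurable)
    integrableOn_quarticMajorant (fun n => hpos.mono fun r hr => (hF n).norm_quartic_le hr)
    (hpos.mono fun r hr => ((h r hr).pow 4).const_mul _)

end HasProfileBounds

theorem integral_mul_sq_le_of_isNormalized (hF : ∀ n, IsNormalized (F n))
    (h : ∀ r, 0 < r → Tendsto (fun n => F n r) atTop (𝓝 (f r))) :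
    IntegrableOn (fun r => r * f r ^ 2) (Ioi 0) ∧ ∫ r in Ioi (0 : ℝ), r * f r ^ 2 ≤ 1 := by
  have hpos : ∀ᵐ r : ℝ ∂volume.restrict (Ioi 0), 0 < r := ae_restrict_mem measurableSet_Ioi
  exact integral_le_of_tendsto_of_nonneg (G := fun n r => r * F n r ^ 2)
    (fun n => (hF n).integrableOn_pow two_ne_zero)
    (fun n => hpos.mono fun r hr => mul_nonneg hr.le (sq_nonneg _))
    (hpos.mono fun r hr => ((h r hr).pow 2).const_mul r) (fun n => (hF n).mass.le)
    tendsto_const_nhds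

theorem integral_quartic_of_maximizing {L : ℝ} (hL₀ : 0 ≤ L) (hL : ProfileGN L)
    (hF : ∀ n, IsNormalized (F n))
    (hmax : Tendsto (fun n => ∫ r in Ioi (0 : ℝ), r * F n r ^ 4) atTop (𝓝 L))
    (h : ∀ r, 0 < r → Tendsto (fun n => F n r) atTop (𝓝 (f r))) {a b : ℝ} (ha : 0 < a)
    (hab : a < b) :
    2 * ∫ r in Ioi (0 : ℝ), r * (f r ^ 3 * logTest a b r) =
      L * (f a - f b + ∫ r in Ioi (0 : ℝ), r * (f r * logTest a b r)) := by
  have hφ := lipschitzWith_logTest ha hab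
  have hR : ∀ r, b ≤ r → logTest a b r = 0 := fun _ => logTest_of_ge
  have hF' (n : ℕ) : HasProfileBounds (F n) := (hF n).hasProfileBounds
  have hcubic := HasProfileBounds.tendsto_integral_mul_pow_mul hF' h hφ.continuous
    (abs_logTest_le ha hab) hR (p := 3) (by norm_num)
  have hlinear := HasProfileBounds.tendsto_integral_mul_pow_mul hF' h hφ.continuous
    (abs_logTest_le ha hab) hR (p := 1) (by norm_num)
  simp only [pow_one] at hlinear
  have henergy : Tendsto (fun n => ∫ r in Ioi (0 : ℝ),
      r * (deriv (F n) r * deriv (logTest a b) r)) atTop (𝓝 (f a - f b)) := by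
    refine ((h a ha).sub (h b (ha.trans hab))).congr fun n => ?_
    obtain ⟨K, hK⟩ := (hF n).lipschitz
    exact (integral_deriv_mul_deriv_logTest ha hab hK).symm
  exact eq_of_forall_le_mul fun ε => le_of_tendsto_of_tendsto'
    (hmax.add (hcubic.const_mul (4 * ε)))
    (((((henergy.const_mul (2 * ε)).const_add 1).add_const (ε ^ 2 *
      ∫ r in Ioi (0 : ℝ), r * deriv (logTest a b) r ^ 2)).const_mul L).mul
      (((hlinear.const_mul (2 * ε)).const_add 1).add_const (ε ^ 2 *
      ∫ r in Ioi (0 : ℝ), r * logTest a b r ^ 2)))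
    fun n => (hF n).variation_le hL hL₀ hφ hR ε

/-- The radial equation `-(r f')' = r (κ f³ - f)`, integrated against `logTest`. -/
def SolvesIntegrated (κ : ℝ) (f : ℝ → ℝ) : Prop := ∀ a b, 0 < a → a < b →
  f a - f b = ∫ r in Ioi (0 : ℝ), (r * (κ * f r ^ 3 - f r)) * logTest a b r

theorem exists_maximizer {C₁ : ℝ} (hC₁ : 0 < C₁) (hnot : ¬ ProfileGN C₁) :
    ∃ L, C₁ < L ∧ ∃ f, HasProfileBounds f ∧ IntegrableOn (fun r => r * f r ^ 2) (Ioi 0) ∧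
      ∫ r in Ioi (0 : ℝ), r * f r ^ 2 ≤ 1 ∧ ∫ r in Ioi (0 : ℝ), r * f r ^ 4 = L ∧
      SolvesIntegrated (2 / L) f := by
  obtain ⟨L, hL, hGN, F, hF, hmax⟩ := exists_maximizing_sequence hC₁ hnot
  have hL₀ : 0 < L := hC₁.trans hL
  obtain ⟨ψ, hψ, f, hf⟩ := exists_subseq_tendsto_of_hasProfileBounds
    fun n => (hF n).hasProfileBounds
  have hFψ (n : ℕ) : IsNormalized (F (ψ n)) := hF _
  have hbound (n : ℕ) : HasProfileBounds (F (ψ n)) := (hFψ n).hasProfileBounds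
  have hmaxψ := hmax.comp hψ.tendsto_atTop
  have hfb := HasProfileBounds.of_tendsto hbound hf
  obtain ⟨hint, hmass⟩ := integral_mul_sq_le_of_isNormalized hFψ hf
  refine ⟨L, hL, f, hfb, hint, hmass, tendsto_nhds_unique
    (HasProfileBounds.tendsto_integral_mul_pow_four hbound hf) hmaxψ, fun a b ha hab => ?_⟩
  have hcubic := hfb.integrableOn_mul_pow_mul (lipschitzWith_logTest ha hab).continuous
    (abs_logTest_le ha hab) (fun _ => logTest_of_ge) (p := 3) (by norm_num)
  have hlinear := hfb.integrableOn_mul_pow_mul (lipschitzWith_logTest ha hab).continuous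
    (abs_logTest_le ha hab) (fun _ => logTest_of_ge) (p := 1) (by norm_num)
  simp only [pow_one] at hlinear
  have hEL := integral_quartic_of_maximizing hL₀.le hGN hFψ hmaxψ hf ha hab
  calc f a - f b = 2 / L * (∫ r in Ioi (0 : ℝ), r * (f r ^ 3 * logTest a b r))
        - ∫ r in Ioi (0 : ℝ), r * (f r * logTest a b r) := by
        rw [div_mul_eq_mul_div, hEL, mul_div_cancel_left₀ _ hL₀.ne', add_sub_cancel_right]
    _ = _ := by
        rw [← integral_const_mul, ← integral_sub (hcubic.const_mul _) hlinear]
        congr 1 with r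
        ring

end Maximizer

section IntegratedEquation

variable {h : ℝ → ℝ}

theorem hasDerivAt_integral_zero (hc : ContinuousOn h (Ioi 0))
    (hi : ∀ b, 0 ≤ b → IntervalIntegrable h volume 0 b) {r : ℝ} (hr : 0 < r) :
    HasDerivAt (fun r => ∫ s in (0 : ℝ)..r, h s) (h r) r :=
  intervalIntegral.integral_hasDerivAt_right (hi r hr.le)
    (hc.stronglyMeasurableAtFilter isOpen_Ioi r hr) (hc.continuousAt (Ioi_mem_nhds hr))

theorem continuousOn_integral_div (hc : ContinuousOn h (Ioi 0))
    (hi : ∀ b, 0 ≤ b → IntervalIntegrable h volume 0 b) :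
    ContinuousOn (fun r => (∫ s in (0 : ℝ)..r, h s) / r) (Ioi 0) := fun r (hr : 0 < r) =>
  ((hasDerivAt_integral_zero hc hi hr).continuousAt.div continuousAt_id
    hr.ne').continuousWithinAt

theorem abs_integral_div_le {r M : ℝ} (hr : 0 < r) (hM : ∀ s ∈ Ioc 0 r, |h s| ≤ M) :
    |(∫ s in (0 : ℝ)..r, h s) / r| ≤ M := by
  have hle := intervalIntegral.norm_integral_le_of_norm_le_const (f := h) (a := 0) (b := r)
    (C := M) fun x hx => hM x (by rwa [uIoc_of_le hr.le] at hx)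
  rw [sub_zero, abs_of_pos hr, Real.norm_eq_abs] at hle
  rwa [abs_div, abs_of_pos hr, div_le_iff₀ hr]

theorem integral_log_mul_eq (hc : ContinuousOn h (Ioi 0))
    (hi : ∀ b, 0 ≤ b → IntervalIntegrable h volume 0 b) {a b : ℝ} (ha : 0 < a) (hab : a < b) :
    ∫ r in a..b, (Real.log b - Real.log r) * h r =
      (∫ r in a..b, (∫ s in (0 : ℝ)..r, h s) / r)
        - (Real.log b - Real.log a) * ∫ s in (0 : ℝ)..a, h s := by
  have hpos {x : ℝ} (hx : x ∈ uIcc a b) : 0 < x := ha.trans_le (uIcc_of_le hab.le ▸ hx).1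
  have hparts := intervalIntegral.integral_mul_deriv_eq_deriv_mul
    (u := fun s => Real.log b - Real.log s) (u' := fun s => -s⁻¹) (v' := h)
    (fun x hx => by simpa using (Real.hasDerivAt_log (hpos hx).ne').const_sub (Real.log b))
    (fun x hx => hasDerivAt_integral_zero hc hi (hpos hx))
    (continuousOn_id.inv₀ fun x hx => (hpos hx).ne').neg.intervalIntegrable
    ((hi a ha.le).symm.trans (hi b (ha.trans hab).le))
  rw [hparts, sub_self, zero_mul, zero_sub, sub_eq_add_neg, add_comm,
    ← intervalIntegral.integral_neg]
  congr 1
  refine intervalIntegral.integral_congr fun x _ => ?_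
  ring

theorem integral_mul_logTest (hc : ContinuousOn h (Ioi 0))
    (hi : ∀ b, 0 ≤ b → IntervalIntegrable h volume 0 b) {a b : ℝ} (ha : 0 < a) (hab : a < b) :
    ∫ r in Ioi (0 : ℝ), h r * logTest a b r = ∫ r in a..b, (∫ s in (0 : ℝ)..r, h s) / r := by
  have hb := ha.trans hab
  have hφ := (lipschitzWith_logTest ha hab).continuous
  have hinner : ∫ r in (0 : ℝ)..a, h r * logTest a b r
      = (∫ r in (0 : ℝ)..a, h r) * (Real.log b - Real.log a) := by
    rw [← intervalIntegral.integral_mul_const]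
    refine intervalIntegral.integral_congr fun x hx => ?_
    rw [uIcc_of_le ha.le] at hx
    simp only [logTest_of_le hab hx.2]
  have hmiddle : ∫ r in a..b, h r * logTest a b r
      = ∫ r in a..b, (Real.log b - Real.log r) * h r := by
    refine intervalIntegral.integral_congr fun x hx => ?_
    rw [uIcc_of_le hab.le] at hx
    simp only [logTest_of_mem hx]
    ring
  calc ∫ r in Ioi (0 : ℝ), h r * logTest a b r
      = ∫ r in (0 : ℝ)..b, h r * logTest a b r := by
        rw [intervalIntegral.integral_of_le hb.le]
        refine setIntegral_eq_of_subset_of_forall_sdiff_eq_zero measurableSet_Ioi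
          Ioc_subset_Ioi_self fun x hx => ?_
        have hbx : b < x := not_le.1 fun hle => hx.2 ⟨hx.1, hle⟩
        rw [logTest_of_ge hbx.le, mul_zero]
    _ = (∫ r in (0 : ℝ)..a, h r * logTest a b r) + ∫ r in a..b, h r * logTest a b r :=
        (intervalIntegral.integral_add_adjacent_intervals
          ((hi a ha.le).mul_continuousOn hφ.continuousOn)
          (((hi a ha.le).symm.trans (hi b hb.le)).mul_continuousOn hφ.continuousOn)).symm
    _ = ∫ r in a..b, (∫ s in (0 : ℝ)..r, h s) / r := by
        rw [hinner, hmiddle, integral_log_mul_eq hc hi ha hab]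
        ring

theorem hasDerivAt_of_sub_eq_integral {f φ : ℝ → ℝ} (hφ : ContinuousOn φ (Ioi 0))
    (hf : ∀ a b, 0 < a → a < b → f a - f b = ∫ s in a..b, φ s) {r : ℝ} (hr : 0 < r) :
    HasDerivAt f (-φ r) r := by
  have hr₂ : 0 < r / 2 := half_pos hr
  have hφi : IntervalIntegrable φ volume (r / 2) r := by
    refine (hφ.mono fun x hx => ?_).intervalIntegrable
    rw [uIcc_of_le (half_le_self hr.le)] at hx
    exact hr₂.trans_le hx.1
  have hd : HasDerivAt (fun y => f (r / 2) - ∫ s in (r / 2)..y, φ s) (-φ r) r :=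
    (intervalIntegral.integral_hasDerivAt_right hφi
      (hφ.stronglyMeasurableAtFilter isOpen_Ioi r hr)
      (hφ.continuousAt (Ioi_mem_nhds hr))).const_sub _
  refine hd.congr_of_eventuallyEq ?_
  filter_upwards [lt_mem_nhds (half_lt_self hr)] with y hy
  rw [← hf _ _ hr₂ hy, sub_sub_cancel]

end IntegratedEquation

/-- `f` solves `f'' + f' / r - f + κ f³ = 0` on `(0, ∞)`, with derivative `p` vanishing at the
origin: the polar form of `Δu - u + κ u³ = 0` in the plane, for radial `u` regular at `0`. -/
structure IsRadialSolution (κ : ℝ) (f p : ℝ → ℝ) : Prop where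
  hasDerivAt : ∀ r, 0 < r → HasDerivAt f (p r) r
  hasDerivAt_deriv : ∀ r, 0 < r → HasDerivAt p (-p r / r + f r - κ * f r ^ 3) r
  tendsto_deriv : Tendsto p (𝓝[>] 0) (𝓝 0)

namespace HasProfileBounds

variable {f : ℝ → ℝ} {κ : ℝ}

theorem abs_source_le (hf : HasProfileBounds f) (hκ : 0 ≤ κ) {s : ℝ} (hs : 0 < s) :
    |s * (κ * f s ^ 3 - f s)| ≤ κ * (s + 16) + 2 := by
  have hnonneg := hf.nonneg s hs
  have hle := hf.le s hs
  have hquartic := (hf.quartic s hs).trans (quarticMajorant_le s)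
  have hcube : f s ^ 3 ≤ 1 + f s ^ 4 := by
    nlinarith [sq_nonneg (f s ^ 2 - f s), sq_nonneg (f s - 1), sq_nonneg (f s ^ 2 - 1)]
  have hcubic : κ * (s * f s ^ 3) ≤ κ * (s + 16) :=
    mul_le_mul_of_nonneg_left (by nlinarith) hκ
  have hcubic₀ : 0 ≤ κ * (s * f s ^ 3) := by positivity
  have hlinear₀ : 0 ≤ s * f s := by positivity
  rw [abs_le]
  constructor <;> nlinarith

theorem continuousOn_source (hf : HasProfileBounds f) :
    ContinuousOn (fun s => s * (κ * f s ^ 3 - f s)) (Ioi 0) := by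
  have := hf.continuousOn
  fun_prop

theorem intervalIntegrable_source (hf : HasProfileBounds f) (hκ : 0 ≤ κ) {b : ℝ} (hb : 0 ≤ b) :
    IntervalIntegrable (fun s => s * (κ * f s ^ 3 - f s)) volume 0 b := by
  rw [intervalIntegrable_iff_integrableOn_Ioc_of_le hb]
  refine IntegrableOn.of_bound measure_Ioc_lt_top
    ((hf.continuousOn_source.mono Ioc_subset_Ioi_self).aestronglyMeasurable measurableSet_Ioc)
    (κ * (b + 16) + 2) ?_
  filter_upwards [ae_restrict_mem measurableSet_Ioc] with s hs
  refine (hf.abs_source_le hκ hs.1).trans ?_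
  gcongr
  exact hs.2

theorem sub_eq_integral (hf : HasProfileBounds f) (hκ : 0 ≤ κ) (hEL : SolvesIntegrated κ f)
    {a b : ℝ} (ha : 0 < a) (hab : a < b) :
    f a - f b = ∫ r in a..b, (∫ s in (0 : ℝ)..r, s * (κ * f s ^ 3 - f s)) / r :=
  (hEL a b ha hab).trans (integral_mul_logTest hf.continuousOn_source
    (fun _ => hf.intervalIntegrable_source hκ) ha hab)

theorem le_of_solvesIntegrated (hf : HasProfileBounds f) (hκ : 0 ≤ κ)
    (hEL : SolvesIntegrated κ f) {r : ℝ} (hr : 0 < r) : f r ≤ f 1 + (κ * 17 + 2) := by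
  rcases lt_or_ge r 1 with h | h
  · have hle := intervalIntegral.norm_integral_le_of_norm_le_const (a := r) (b := 1)
      (f := fun r => (∫ s in (0 : ℝ)..r, s * (κ * f s ^ 3 - f s)) / r)
      (C := κ * 17 + 2) fun x hx => by
        rw [uIoc_of_le h.le] at hx
        refine abs_integral_div_le (hr.trans hx.1) fun s hs =>
          (hf.abs_source_le hκ hs.1).trans ?_
        have : s + 16 ≤ 17 := by linarith [hx.2, hs.2]
        gcongr
    rw [← hf.sub_eq_integral hκ hEL hr h, abs_of_pos (sub_pos.2 h), Real.norm_eq_abs] at hle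
    have hle₁ : (κ * 17 + 2) * (1 - r) ≤ κ * 17 + 2 :=
      mul_le_of_le_one_right (by positivity) (by linarith)
    linarith [(abs_le.1 hle).2]
  · have := hf.anti 1 r one_pos h
    have : 0 ≤ κ * 17 := by positivity
    linarith

theorem tendsto_integral_source_div (hf : HasProfileBounds f) (hκ : 0 ≤ κ) {B : ℝ}
    (hB : ∀ r, 0 < r → f r ≤ B) :
    Tendsto (fun r => (∫ s in (0 : ℝ)..r, s * (κ * f s ^ 3 - f s)) / r) (𝓝[>] 0) (𝓝 0) := by
  refine squeeze_zero_norm' (a := fun r => r * (κ * B ^ 3 + B)) ?_ ?_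
  · filter_upwards [self_mem_nhdsWithin] with r (hr : 0 < r)
    refine abs_integral_div_le hr fun s hs => ?_
    have hnonneg := hf.nonneg s hs.1
    have hle := hB s hs.1
    rw [abs_mul, abs_of_pos hs.1]
    have hcubic : κ * f s ^ 3 ≤ κ * B ^ 3 := by gcongr
    have hcubic₀ : 0 ≤ κ * f s ^ 3 := by positivity
    refine mul_le_mul hs.2 (abs_le.2 ?_) (abs_nonneg _) hr.le
    constructor <;> linarith
  · have h : Tendsto (fun r : ℝ => r * (κ * B ^ 3 + B)) (𝓝 0) (𝓝 (0 * (κ * B ^ 3 + B))) :=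
      tendsto_id.mul_const _
    rw [zero_mul] at h
    exact h.mono_left nhdsWithin_le_nhds

theorem exists_isRadialSolution (hf : HasProfileBounds f) (hκ : 0 ≤ κ)
    (hEL : SolvesIntegrated κ f) : ∃ p, IsRadialSolution κ f p := by
  have hc := hf.continuousOn_source (κ := κ)
  have hi (b : ℝ) (hb : 0 ≤ b) := hf.intervalIntegrable_source hκ hb
  refine ⟨fun r => -((∫ s in (0 : ℝ)..r, s * (κ * f s ^ 3 - f s)) / r), fun r hr =>
    hasDerivAt_of_sub_eq_integral (continuousOn_integral_div hc hi)
      (fun a b => hf.sub_eq_integral hκ hEL) hr, fun r hr => ?_, ?_⟩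
  · refine ((hasDerivAt_integral_zero hc hi hr).div (hasDerivAt_id r) hr.ne').neg.congr_deriv ?_
    simp only [id]
    field_simp
    ring
  · simpa only [neg_zero] using (hf.tendsto_integral_source_div hκ
      fun r hr => hf.le_of_solvesIntegrated hκ hEL hr).neg

end HasProfileBounds

section BackwardUniqueness

theorem eq_zero_of_neg_deriv_le {E E' : ℝ → ℝ} {a b K : ℝ} (hab : a ≤ b)
    (hd : ∀ r ∈ Icc a b, HasDerivAt E (E' r) r) (ha : 0 ≤ E a)
    (hE : ∀ r ∈ Icc a b, -E' r ≤ K * E r) (hb : E b = 0) : E a = 0 := by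
  have hd' (r : ℝ) (hr : r ∈ Icc a b) : HasDerivAt (fun r => E r * Real.exp (K * r))
      (E' r * Real.exp (K * r) + E r * (Real.exp (K * r) * K)) r :=
    (hd r hr).mul (by simpa using ((hasDerivAt_id r).const_mul K).exp)
  have hmono : MonotoneOn (fun r => E r * Real.exp (K * r)) (Icc a b) := by
    refine monotoneOn_of_deriv_nonneg (convex_Icc a b)
      (fun x hx => (hd' x hx).continuousAt.continuousWithinAt)
      (fun x hx => (hd' x (interior_subset hx)).differentiableAt.differentiableWithinAt)
      fun x hx => ?_
    have hnonneg : 0 ≤ (E' x + K * E x) * Real.exp (K * x) :=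
      mul_nonneg (by linarith [hE x (interior_subset hx)]) (Real.exp_pos _).le
    rw [(hd' x (interior_subset hx)).deriv]
    linarith
  have h := hmono (left_mem_Icc.2 hab) (right_mem_Icc.2 hab) hab
  simp only [hb, zero_mul] at h
  exact le_antisymm (nonpos_of_mul_nonpos_left h (Real.exp_pos _)) ha

variable {f p : ℝ → ℝ} {κ : ℝ}

theorem IsRadialSolution.hasDerivAt_sq_add_sq (h : IsRadialSolution κ f p) {r : ℝ}
    (hr : 0 < r) : HasDerivAt (fun r => f r ^ 2 + p r ^ 2)
      (2 * f r * p r + 2 * p r * (-p r / r + f r - κ * f r ^ 3)) r := by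
  refine (((h.hasDerivAt r hr).pow 2).add ((h.hasDerivAt_deriv r hr).pow 2)).congr_deriv ?_
  norm_num

theorem neg_sq_add_sq_deriv_le {a r x y B : ℝ} (hκ : 0 ≤ κ) (ha : 0 < a) (har : a ≤ r)
    (hx : 0 ≤ x) (hxB : x ≤ B) :
    -(2 * x * y + 2 * y * (-y / r + x - κ * x ^ 3)) ≤
      (2 / a + 2 + κ * B ^ 2) * (x ^ 2 + y ^ 2) := by
  have hfriction : y ^ 2 / r ≤ y ^ 2 / a := by gcongr
  have hmass : 0 ≤ x ^ 2 / a := by positivity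
  have hlinear : -2 * (x * y) ≤ x ^ 2 + y ^ 2 := by linarith [sq_nonneg (x + y)]
  have hcubic : κ * x ^ 2 * (2 * (x * y)) ≤ κ * B ^ 2 * (x ^ 2 + y ^ 2) :=
    calc κ * x ^ 2 * (2 * (x * y)) ≤ κ * x ^ 2 * (x ^ 2 + y ^ 2) :=
          mul_le_mul_of_nonneg_left (by linarith [sq_nonneg (x - y)]) (by positivity)
      _ ≤ κ * B ^ 2 * (x ^ 2 + y ^ 2) := by gcongr
  calc -(2 * x * y + 2 * y * (-y / r + x - κ * x ^ 3))
      = 2 * (y ^ 2 / r) + 2 * (-2 * (x * y)) + κ * x ^ 2 * (2 * (x * y)) := by ring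
    _ ≤ 2 * (x ^ 2 / a + y ^ 2 / a) + 2 * (x ^ 2 + y ^ 2) + κ * B ^ 2 * (x ^ 2 + y ^ 2) := by
        linarith
    _ = (2 / a + 2 + κ * B ^ 2) * (x ^ 2 + y ^ 2) := by ring

theorem HasProfileBounds.eq_zero_of_eq_zero (hf : HasProfileBounds f)
    (h : IsRadialSolution κ f p) (hκ : 0 ≤ κ) {b : ℝ} (hb : 0 < b) (hfb : f b = 0) {a : ℝ}
    (ha : 0 < a) : f a = 0 := by
  have hpb : p b = 0 := by
    refine IsLocalMin.hasDerivAt_eq_zero ?_ (h.hasDerivAt b hb)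
    filter_upwards [lt_mem_nhds hb] with r hr
    rw [hfb]
    exact hf.nonneg r hr
  rcases le_total b a with hab | hab
  · exact le_antisymm (hfb ▸ hf.anti b a hb hab) (hf.nonneg a ha)
  · have hE : f a ^ 2 + p a ^ 2 = 0 := eq_zero_of_neg_deriv_le
      (E := fun r => f r ^ 2 + p r ^ 2) hab
      (fun r hr => h.hasDerivAt_sq_add_sq (ha.trans_le hr.1)) (by positivity)
      (fun r hr => neg_sq_add_sq_deriv_le hκ ha hr.1 (hf.nonneg r (ha.trans_le hr.1))
        (hf.anti a r ha hr.1)) (by simp only [hfb, hpb]; norm_num)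
    exact pow_eq_zero_iff two_ne_zero |>.1
      (le_antisymm (by linarith [sq_nonneg (p a)]) (sq_nonneg _))

theorem HasProfileBounds.pos_of_integral_ne_zero (hf : HasProfileBounds f)
    (h : IsRadialSolution κ f p) (hκ : 0 ≤ κ)
    (hne : ∫ r in Ioi (0 : ℝ), r * f r ^ 4 ≠ 0) {r : ℝ} (hr : 0 < r) : 0 < f r := by
  refine (hf.nonneg r hr).lt_of_ne fun hzero => hne ?_
  refine setIntegral_eq_zero_of_forall_eq_zero fun s hs => ?_
  rw [hf.eq_zero_of_eq_zero h hκ hr hzero.symm hs, zero_pow four_ne_zero, mul_zero]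

end BackwardUniqueness

section KineticEnergy

theorem integrableOn_Ioi_of_hasDerivAt_of_le {g g' : ℝ → ℝ} {a M : ℝ}
    (hg : ∀ x, a ≤ x → HasDerivAt g (g' x) x) (hg' : ∀ x, a ≤ x → 0 ≤ g' x)
    (hM : ∀ x, a ≤ x → g x ≤ M) : IntegrableOn g' (Ioi a) := by
  have hmono : MonotoneOn g (Ici a) := by
    refine monotoneOn_of_deriv_nonneg (convex_Ici a)
      (fun x hx => (hg x hx).continuousAt.continuousWithinAt)
      (fun x hx => (hg x (interior_subset hx)).differentiableAt.differentiableWithinAt)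
      fun x hx => ?_
    rw [(hg x (interior_subset hx)).deriv]
    exact hg' x (interior_subset hx)
  have hmono' : Monotone fun x => g (max a x) := fun x y hxy =>
    hmono (le_max_left a x) (le_max_left a y) (max_le_max le_rfl hxy)
  have hlim := tendsto_atTop_ciSup hmono' ⟨M, forall_mem_range.2 fun x => hM _ (le_max_left _ _)⟩
  refine integrableOn_Ioi_deriv_of_nonneg' hg (fun x hx => hg' x (le_of_lt hx))
    (hlim.congr' ?_)
  filter_upwards [eventually_ge_atTop a] with x hx
  rw [max_eq_right hx]

theorem exists_forall_abs_le_of_tendsto_nhdsGT {φ : ℝ → ℝ} {c : ℝ}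
    (hφ : ContinuousOn φ (Ioi 0)) (h : Tendsto φ (𝓝[>] 0) (𝓝 c)) (R : ℝ) :
    ∃ B, ∀ r ∈ Ioc 0 R, |φ r| ≤ B := by
  obtain ⟨δ, hδ : 0 < δ, hle⟩ := mem_nhdsGT_iff_exists_Ioc_subset.1
    (h.abs.eventually_lt_const (lt_add_one |c|))
  obtain ⟨B, hB⟩ := isCompact_Icc.exists_bound_of_continuousOn
    (hφ.mono fun x (hx : x ∈ Icc δ R) => hδ.trans_le hx.1)
  refine ⟨max (|c| + 1) B, fun r hr => ?_⟩
  rcases le_total r δ with hrδ | hrδ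
  · exact le_max_of_le_left (le_of_lt (hle ⟨hr.1, hrδ⟩))
  · exact le_max_of_le_right (hB r ⟨hrδ, hr.2⟩)

namespace IsRadialSolution

variable {f p : ℝ → ℝ} {κ : ℝ}

theorem continuousOn (h : IsRadialSolution κ f p) : ContinuousOn f (Ioi 0) := fun r hr =>
  (h.hasDerivAt r hr).continuousAt.continuousWithinAt

theorem continuousOn_deriv (h : IsRadialSolution κ f p) : ContinuousOn p (Ioi 0) := fun r hr =>
  (h.hasDerivAt_deriv r hr).continuousAt.continuousWithinAt

theorem integrableOn_Ioc_deriv_sq (h : IsRadialSolution κ f p) (δ : ℝ) :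
    IntegrableOn (fun r => r * p r ^ 2) (Ioc 0 δ) := by
  obtain ⟨B, hB⟩ := exists_forall_abs_le_of_tendsto_nhdsGT h.continuousOn_deriv h.tendsto_deriv δ
  refine IntegrableOn.of_bound measure_Ioc_lt_top
    (((continuousOn_id.mul (h.continuousOn_deriv.pow 2)).mono
      Ioc_subset_Ioi_self).aestronglyMeasurable measurableSet_Ioc) (δ * B ^ 2) ?_
  filter_upwards [ae_restrict_mem measurableSet_Ioc] with r hr
  rw [norm_mul, Real.norm_of_nonneg hr.1.le, norm_pow, Real.norm_eq_abs]
  have := hB r hr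
  have := hr.2
  gcongr
  exact hr.1.le.trans hr.2

theorem hasDerivAt_mul_mul_deriv (h : IsRadialSolution κ f p) {r : ℝ} (hr : 0 < r) :
    HasDerivAt (fun r => r * (f r * p r)) (r * p r ^ 2 - r * (κ * f r ^ 4 - f r ^ 2)) r := by
  refine ((hasDerivAt_id r).mul ((h.hasDerivAt r hr).mul
    (h.hasDerivAt_deriv r hr))).congr_deriv ?_
  simp only [id, Pi.mul_apply]
  field_simp
  ring

theorem deriv_nonpos (h : IsRadialSolution κ f p) (hf : AntitoneOn f (Ioi 0)) {r : ℝ}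
    (hr : 0 < r) : p r ≤ 0 := by
  have := hf.derivWithin_nonpos (x := r)
  rwa [(h.hasDerivAt r hr).hasDerivWithinAt.derivWithin
    (isOpen_Ioi.uniqueDiffWithinAt hr)] at this

theorem integral_source_le (h : IsRadialSolution κ f p) (hκ : 0 ≤ κ)
    (hi : IntegrableOn (fun r => r * f r ^ 4) (Ioi 0)) {δ x : ℝ} (hδ : 0 < δ) (hx : δ ≤ x) :
    ∫ s in δ..x, s * (κ * f s ^ 4 - f s ^ 2) ≤ κ * ∫ s in Ioi (0 : ℝ), s * f s ^ 4 := by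
  have hint {φ : ℝ → ℝ} (hφ : ContinuousOn φ (Ioi 0)) : IntervalIntegrable φ volume δ x :=
    (hφ.mono fun y hy => hδ.trans_le (uIcc_of_le hx ▸ hy).1).intervalIntegrable
  have hc := h.continuousOn
  calc ∫ s in δ..x, s * (κ * f s ^ 4 - f s ^ 2)
      ≤ ∫ s in δ..x, κ * (s * f s ^ 4) := by
        refine intervalIntegral.integral_mono_on hx (hint (by fun_prop)) (hint (by fun_prop))
          fun s hs => ?_
        have : 0 ≤ s * f s ^ 2 := mul_nonneg (hδ.le.trans hs.1) (sq_nonneg _)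
        linarith
    _ = κ * ∫ s in Ioc δ x, s * f s ^ 4 := by
        rw [intervalIntegral.integral_const_mul, intervalIntegral.integral_of_le hx]
    _ ≤ κ * ∫ s in Ioi (0 : ℝ), s * f s ^ 4 := by
        refine mul_le_mul_of_nonneg_left (setIntegral_mono_set hi ?_
          (Eventually.of_forall fun y (hy : y ∈ Ioc δ x) => hδ.trans hy.1)) hκ
        filter_upwards [ae_restrict_mem measurableSet_Ioi] with s hs
        exact mul_nonneg (le_of_lt hs) (Even.pow_nonneg (by decide) _)

theorem integrableOn_deriv_sq (h : IsRadialSolution κ f p) (hκ : 0 ≤ κ)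
    (hf : ∀ r, 0 < r → 0 ≤ f r) (hanti : AntitoneOn f (Ioi 0))
    (hi : IntegrableOn (fun r => r * f r ^ 4) (Ioi 0)) :
    IntegrableOn (fun r => r * p r ^ 2) (Ioi 0) := by
  have hc : ContinuousOn (fun s => s * (κ * f s ^ 4 - f s ^ 2)) (Ioi 0) := by
    have := h.continuousOn
    fun_prop
  have hint {x : ℝ} (hx : 1 ≤ x) :
      IntervalIntegrable (fun s => s * (κ * f s ^ 4 - f s ^ 2)) volume 1 x :=
    (hc.mono fun y hy => one_pos.trans_le (uIcc_of_le hx ▸ hy).1).intervalIntegrable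
  rw [← Ioc_union_Ioi_eq_Ioi zero_le_one]
  refine (h.integrableOn_Ioc_deriv_sq 1).union (integrableOn_Ioi_of_hasDerivAt_of_le
    (g := fun r => r * (f r * p r) + ∫ s in (1 : ℝ)..r, s * (κ * f s ^ 4 - f s ^ 2))
    (M := κ * ∫ s in Ioi (0 : ℝ), s * f s ^ 4) (fun x hx => ?_) (fun x hx => by positivity)
    fun x hx => ?_)
  · have hx₀ : 0 < x := one_pos.trans_le hx
    exact ((h.hasDerivAt_mul_mul_deriv hx₀).add (intervalIntegral.integral_hasDerivAt_right
      (hint hx) (hc.stronglyMeasurableAtFilter isOpen_Ioi x hx₀)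
      (hc.continuousAt (Ioi_mem_nhds hx₀)))).congr_deriv (sub_add_cancel _ _)
  · have hx₀ : 0 < x := one_pos.trans_le hx
    have hboundary : x * (f x * p x) ≤ 0 := mul_nonpos_of_nonneg_of_nonpos hx₀.le
      (mul_nonpos_of_nonneg_of_nonpos (hf x hx₀) (h.deriv_nonpos hanti hx₀))
    linarith [h.integral_source_le hκ hi one_pos hx]

theorem sqrt_mul (h : IsRadialSolution κ f p) (hκ : 0 ≤ κ) :
    IsRadialSolution 1 (fun r => √κ * f r) (fun r => √κ * p r) where
  hasDerivAt r hr := (h.hasDerivAt r hr).const_mul _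
  hasDerivAt_deriv r hr := ((h.hasDerivAt_deriv r hr).const_mul _).congr_deriv <| by
    rw [mul_pow, pow_succ √κ, Real.sq_sqrt hκ]
    ring
  tendsto_deriv := by simpa using h.tendsto_deriv.const_mul √κ

end IsRadialSolution

end KineticEnergy

section GroundProfile

/-- A positive radial ground state `u` of `-Δu + u - u³ = 0` in the plane, in polar form: `p` is
the radial derivative, and mass, kinetic and quartic energies are finite. -/
structure IsGroundProfile (u p : ℝ → ℝ) : Prop extends IsRadialSolution 1 u p where
  pos : ∀ r, 0 < r → 0 < u r
  exists_tendsto : ∃ c, 0 < c ∧ Tendsto u (𝓝[>] 0) (𝓝 c)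
  integrableOn_sq : IntegrableOn (fun r => r * u r ^ 2) (Ioi 0)
  integrableOn_deriv_sq : IntegrableOn (fun r => r * p r ^ 2) (Ioi 0)
  integrableOn_quartic : IntegrableOn (fun r => r * u r ^ 4) (Ioi 0)

theorem exists_pos_tendsto_nhdsGT_of_antitoneOn {f : ℝ → ℝ} {B : ℝ}
    (hanti : AntitoneOn f (Ioi 0)) (hpos : ∀ r, 0 < r → 0 < f r) (hB : ∀ r, 0 < r → f r ≤ B) :
    ∃ c, 0 < c ∧ Tendsto f (𝓝[>] 0) (𝓝 c) := by
  have hlim := hanti.tendsto_nhdsGT ⟨B, forall_mem_image.2 hB⟩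
  refine ⟨_, (hpos 1 one_pos).trans_le (ge_of_tendsto hlim ?_), hlim⟩
  filter_upwards [Ioc_mem_nhdsGT one_pos] with r hr using hanti hr.1 (mem_Ioi.2 one_pos) hr.2

theorem exists_groundProfile {C₁ : ℝ} (hC₁ : 0 < C₁) (hnot : ¬ ProfileGN C₁) :
    ∃ L, C₁ < L ∧ ∃ u p, IsGroundProfile u p ∧ ∫ r in Ioi (0 : ℝ), r * u r ^ 2 ≤ 2 / L := by
  obtain ⟨L, hL, f, hf, hint, hmass, hquartic, hEL⟩ := exists_maximizer hC₁ hnot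
  have hL₀ : 0 < L := hC₁.trans hL
  have hκ : 0 < 2 / L := by positivity
  have hs : 0 < √(2 / L) := Real.sqrt_pos.2 hκ
  obtain ⟨p, h⟩ := hf.exists_isRadialSolution hκ.le hEL
  have hanti : AntitoneOn f (Ioi 0) := fun a ha b _ => hf.anti a b ha
  have hpos (r : ℝ) (hr : 0 < r) : 0 < f r :=
    hf.pos_of_integral_ne_zero h hκ.le (hquartic ▸ hL₀.ne') hr
  obtain ⟨c, hc, hlim⟩ := exists_pos_tendsto_nhdsGT_of_antitoneOn hanti hpos
    fun r hr => hf.le_of_solvesIntegrated hκ.le hEL hr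
  have hquartic_int := hf.integrableOn_mul_pow_four
  have hscale (g : ℝ → ℝ) (n : ℕ) (hg : IntegrableOn (fun r => r * g r ^ n) (Ioi 0)) :
      IntegrableOn (fun r => r * (√(2 / L) * g r) ^ n) (Ioi 0) := by
    simp only [mul_pow, mul_left_comm _ (√(2 / L) ^ n)]
    exact hg.const_mul _
  refine ⟨L, hL, fun r => √(2 / L) * f r, fun r => √(2 / L) * p r, ⟨h.sqrt_mul hκ.le,
    fun r hr => mul_pos hs (hpos r hr), ⟨_, mul_pos hs hc, hlim.const_mul _⟩, hscale f 2 hint,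
    hscale p 2 (h.integrableOn_deriv_sq hκ.le hf.nonneg hanti hquartic_int),
    hscale f 4 hquartic_int⟩, ?_⟩
  simp only [mul_pow, Real.sq_sqrt hκ.le, mul_left_comm _ (2 / L)]
  rw [integral_const_mul]
  exact mul_le_of_le_one_right hκ.le hmass

end GroundProfile

section StrictMonotonicity

theorem exists_sq_mul_lt {φ : ℝ → ℝ} (hφ : IntegrableOn (fun r => r * φ r) (Ioi 0)) {ε : ℝ}
    (hε : 0 < ε) (R : ℝ) : ∃ r, R < r ∧ 1 < r ∧ r ^ 2 * φ r < ε := by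
  by_contra! h
  refine not_integrableOn_Ioi_inv (a := max R 1) ?_
  have hint := (hφ.mono_set (Ioi_subset_Ioi (zero_le_one.trans (le_max_right R 1)))).const_mul ε⁻¹
  refine hint.mono' measurable_inv.aestronglyMeasurable ?_
  filter_upwards [ae_restrict_mem measurableSet_Ioi] with r hr
  obtain ⟨hRr, h1r⟩ := max_lt_iff.1 (mem_Ioi.1 hr)
  have hr₀ : 0 < r := one_pos.trans h1r
  rw [Real.norm_of_nonneg (by positivity), inv_eq_one_div, inv_mul_eq_div, div_le_div_iff₀ hr₀ hε]
  linarith [h r hRr h1r]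

theorem strictAntiOn_Ioc_of_hasDerivAt {f f' : ℝ → ℝ} {R : ℝ}
    (hf : ∀ r, 0 < r → r ≤ R → HasDerivAt f (f' r) r) (hf' : ∀ r, 0 < r → r < R → f' r < 0) :
    StrictAntiOn f (Ioc 0 R) := by
  refine strictAntiOn_of_deriv_neg (convex_Ioc 0 R)
    (fun x hx => (hf x hx.1 hx.2).continuousAt.continuousWithinAt) fun x hx => ?_
  rw [interior_Ioc] at hx
  rw [(hf x hx.1 hx.2.le).deriv]
  exact hf' x hx.1 hx.2

theorem le_of_antitoneOn_of_tendsto_nhdsGT {f : ℝ → ℝ} {R c : ℝ} (hf : AntitoneOn f (Ioc 0 R))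
    (hc : Tendsto f (𝓝[>] 0) (𝓝 c)) {r : ℝ} (hr : 0 < r) (hrR : r ≤ R) : f r ≤ c := by
  refine ge_of_tendsto hc ?_
  filter_upwards [Ioc_mem_nhdsGT hr] with s hs
  exact hf ⟨hs.1, hs.2.trans hrR⟩ ⟨hr, hrR⟩ hs.2

theorem lt_of_strictAntiOn_of_tendsto_nhdsGT {f : ℝ → ℝ} {R c : ℝ} (hf : StrictAntiOn f (Ioc 0 R))
    (hc : Tendsto f (𝓝[>] 0) (𝓝 c)) {r : ℝ} (hr : 0 < r) (hrR : r ≤ R) : f r < c :=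
  have hhalf : r / 2 ≤ R := (half_le_self hr.le).trans hrR
  (hf ⟨half_pos hr, hhalf⟩ ⟨hr, hrR⟩ (half_lt_self hr)).trans_le
    (le_of_antitoneOn_of_tendsto_nhdsGT hf.antitoneOn hc (half_pos hr) hhalf)

theorem neg_of_neg_of_forall_neg_imp_ne_zero {f : ℝ → ℝ} {a b : ℝ} (hf : ContinuousOn f (Icc a b))
    (ha : f a < 0) (hne : ∀ r ∈ Icc a b, (∀ s ∈ Ico a r, f s < 0) → f r ≠ 0) (hab : a ≤ b) :
    f b < 0 := by
  by_contra! hfb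
  have hclosed : IsClosed {r ∈ Icc a b | 0 ≤ f r} :=
    hf.preimage_isClosed_of_isClosed isClosed_Icc isClosed_Ici
  have hbdd : BddBelow {r ∈ Icc a b | 0 ≤ f r} := ⟨a, fun r hr => hr.1.1⟩
  obtain ⟨hR, hfR⟩ := hclosed.csInf_mem ⟨b, ⟨hab, le_rfl⟩, hfb⟩ hbdd
  set R := sInf {r ∈ Icc a b | 0 ≤ f r}
  have hbefore : ∀ s ∈ Ico a R, f s < 0 := fun s hs => by
    by_contra! hfs
    exact hs.2.not_ge (csInf_le hbdd ⟨⟨hs.1, hs.2.le.trans hR.2⟩, hfs⟩)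
  obtain ⟨z, hz, hfz⟩ := intermediate_value_Icc hR.1 (hf.mono (Icc_subset_Icc_right hR.2))
    ⟨ha.le, hfR⟩
  refine hne z ⟨hz.1, hz.2.trans hR.2⟩ (fun s hs => hbefore s ⟨hs.1, hs.2.trans_le hz.2⟩) hfz

end StrictMonotonicity

section Yanagida

/-- `r ^ (1 / 3)`, in powers of which the coefficients of `yanagida` are monomials. -/
noncomputable def cubeRoot (r : ℝ) : ℝ := r ^ (1 / 3 : ℝ)

theorem cubeRoot_pow_three {r : ℝ} (hr : 0 ≤ r) : cubeRoot r ^ 3 = r := by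
  rw [cubeRoot, ← Real.rpow_natCast, ← Real.rpow_mul hr]
  norm_num

theorem cubeRoot_pos {r : ℝ} (hr : 0 < r) : 0 < cubeRoot r := Real.rpow_pos_of_pos hr _

theorem one_le_cubeRoot {r : ℝ} (hr : 1 ≤ r) : 1 ≤ cubeRoot r :=
  Real.one_le_rpow hr (by norm_num)

theorem hasDerivAt_cubeRoot {r : ℝ} (hr : 0 < r) :
    HasDerivAt cubeRoot (1 / (3 * cubeRoot r ^ 2)) r := by
  refine (Real.hasDerivAt_rpow_const (p := 1 / 3) (Or.inl hr.ne')).congr_deriv ?_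
  have hsq : cubeRoot r ^ 2 = r ^ (2 / 3 : ℝ) := by
    rw [cubeRoot, ← Real.rpow_natCast, ← Real.rpow_mul hr.le]
    norm_num
  rw [hsq, show (1 / 3 - 1 : ℝ) = -(2 / 3) by norm_num, Real.rpow_neg hr.le]
  field_simp

theorem tendsto_cubeRoot : Tendsto cubeRoot (𝓝[>] 0) (𝓝 0) := by
  have hcont : Continuous cubeRoot := Real.continuous_rpow_const (by norm_num)
  have h := hcont.tendsto 0
  rw [cubeRoot, Real.zero_rpow (by norm_num)] at h
  exact h.mono_left nhdsWithin_le_nhds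

/-- Yanagida's Pohozaev-type functional for `u'' + u' / r - u + u³ = 0`, with `p = u'`. The powers
of `r ^ (1 / 3)` are those for which its derivative is a multiple of `u²` alone. -/
noncomputable def yanagida (u p : ℝ → ℝ) (r : ℝ) : ℝ :=
  1 / 2 * cubeRoot r ^ 4 * p r ^ 2 + cubeRoot r / 3 * (p r * u r)
    + 1 / (9 * cubeRoot r ^ 2) * u r ^ 2 - 1 / 2 * cubeRoot r ^ 4 * u r ^ 2
    + 1 / 4 * cubeRoot r ^ 4 * u r ^ 4

theorem abs_yanagida_le (u p : ℝ → ℝ) {r : ℝ} (hr : 1 ≤ r) :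
    |yanagida u p r| ≤ r ^ 2 * (u r ^ 2 + p r ^ 2 + u r ^ 4) := by
  have hs := one_le_cubeRoot hr
  have hs₀ : 0 < cubeRoot r := one_pos.trans_le hs
  have hr₂ : r ^ 2 = cubeRoot r ^ 6 := by
    rw [← cubeRoot_pow_three (zero_le_one.trans hr), ← pow_mul,
      cubeRoot_pow_three (zero_le_one.trans hr)]
  have hprod : |p r * u r| ≤ (u r ^ 2 + p r ^ 2) / 2 := by
    rw [abs_le]
    constructor <;> nlinarith [sq_nonneg (u r + p r), sq_nonneg (u r - p r)]
  calc |yanagida u p r|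
      ≤ 1 / 2 * cubeRoot r ^ 4 * p r ^ 2 + cubeRoot r / 3 * |p r * u r|
          + 1 / (9 * cubeRoot r ^ 2) * u r ^ 2 + 1 / 2 * cubeRoot r ^ 4 * u r ^ 2
          + 1 / 4 * cubeRoot r ^ 4 * u r ^ 4 := by
        refine (abs_add_le _ _).trans (add_le_add ((abs_sub _ _).trans (add_le_add
          ((abs_add_le _ _).trans (add_le_add ((abs_add_le _ _).trans (add_le_add ?_ ?_)) ?_))
            ?_)) ?_)
        · exact (abs_of_nonneg (by positivity)).le
        · rw [abs_mul, abs_of_pos (by positivity)]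
        all_goals exact (abs_of_nonneg (by positivity)).le
    _ ≤ 1 / 2 * cubeRoot r ^ 6 * p r ^ 2 + cubeRoot r ^ 6 / 3 * ((u r ^ 2 + p r ^ 2) / 2)
          + 1 / 9 * cubeRoot r ^ 6 * u r ^ 2 + 1 / 2 * cubeRoot r ^ 6 * u r ^ 2
          + 1 / 4 * cubeRoot r ^ 6 * u r ^ 4 := by
        have hinv : 1 / (9 * cubeRoot r ^ 2) ≤ 1 / 9 * cubeRoot r ^ 6 := by
          rw [div_le_iff₀ (by positivity)]
          linarith [one_le_pow₀ hs (n := 8)]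
        have hpow : cubeRoot r ^ 4 ≤ cubeRoot r ^ 6 := pow_le_pow_right₀ hs (by norm_num)
        have hself : cubeRoot r ≤ cubeRoot r ^ 6 := le_self_pow₀ hs (by norm_num)
        gcongr
    _ ≤ r ^ 2 * (u r ^ 2 + p r ^ 2 + u r ^ 4) := by
        rw [hr₂]
        have := mul_nonneg (pow_pos hs₀ 6).le (sq_nonneg (u r))
        have := mul_nonneg (pow_pos hs₀ 6).le (sq_nonneg (p r))
        have : 0 ≤ cubeRoot r ^ 6 * u r ^ 4 := by positivity
        linarith

theorem IsRadialSolution.hasDerivAt_yanagida {u p : ℝ → ℝ} (h : IsRadialSolution 1 u p) {r : ℝ}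
    (hr : 0 < r) :
    HasDerivAt (yanagida u p) (-(cubeRoot r / 3 + 2 / (27 * cubeRoot r ^ 5)) * u r ^ 2) r := by
  have hs := hasDerivAt_cubeRoot hr
  have hs₀ := cubeRoot_pos hr
  have hu := h.hasDerivAt r hr
  have hp := h.hasDerivAt_deriv r hr
  have hinv := (hasDerivAt_const r (1 : ℝ)).div ((hs.pow 2).const_mul 9)
    (mul_pos (by norm_num) (pow_pos hs₀ 2)).ne'
  refine ((((((hs.pow 4).const_mul (1 / 2)).mul (hp.pow 2)).add
    ((hs.div_const 3).mul (hp.mul hu))).add (hinv.mul (hu.pow 2))).sub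
    (((hs.pow 4).const_mul (1 / 2)).mul (hu.pow 2))).add
    (((hs.pow 4).const_mul (1 / 4)).mul (hu.pow 4)) |>.congr_deriv ?_
  simp only [Pi.mul_apply, Pi.pow_apply, Pi.div_apply]
  rw [show -p r / r = -p r / cubeRoot r ^ 3 by rw [cubeRoot_pow_three hr.le]]
  field_simp
  ring

namespace IsGroundProfile

variable {u p : ℝ → ℝ}

theorem integrableOn_energy (h : IsGroundProfile u p) :
    IntegrableOn (fun r => r * (u r ^ 2 + p r ^ 2 + u r ^ 4)) (Ioi 0) := by
  simp only [mul_add]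
  exact (h.integrableOn_sq.add h.integrableOn_deriv_sq).add h.integrableOn_quartic

theorem strictAntiOn_yanagida (h : IsGroundProfile u p) (R : ℝ) :
    StrictAntiOn (yanagida u p) (Ioc 0 R) :=
  strictAntiOn_Ioc_of_hasDerivAt (fun _ hr _ => h.hasDerivAt_yanagida hr) fun r hr _ => by
    have := cubeRoot_pos hr
    have := h.pos r hr
    rw [neg_mul, neg_lt_zero]
    positivity

-- The functional decreases, and tends to `0` along a sequence because the energies are finite.
theorem yanagida_pos (h : IsGroundProfile u p) {r : ℝ} (hr : 0 < r) : 0 < yanagida u p r := by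
  have hnonneg : 0 ≤ yanagida u p (r + 1) := by
    refine le_of_forall_pos_lt_add fun ε hε => ?_
    obtain ⟨t, ht, ht₁, htε⟩ := exists_sq_mul_lt h.integrableOn_energy hε (r + 1)
    have := h.strictAntiOn_yanagida t ⟨by linarith, ht.le⟩ ⟨by linarith, le_rfl⟩ ht
    linarith [neg_abs_le (yanagida u p t), abs_yanagida_le u p ht₁.le]
  exact hnonneg.trans_lt
    (h.strictAntiOn_yanagida (r + 1) ⟨hr, by linarith⟩ ⟨by linarith, le_rfl⟩ (by linarith))

end IsGroundProfile

end Yanagida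

section Comparison

/-- The Wronskian `r (v' u - u' v)` of two radial functions, with `p = u'` and `q = v'`. -/
def wronskian (u p v q : ℝ → ℝ) (r : ℝ) : ℝ := r * (q r * u r - p r * v r)

/-- Yanagida's comparison function of two radial functions, with `p = u'` and `q = v'`. -/
noncomputable def comparison (u p v q : ℝ → ℝ) (r : ℝ) : ℝ :=
  (v r / u r) ^ 2 * yanagida u p r - yanagida v q r

theorem comparison_eq {u p v q : ℝ → ℝ} {r : ℝ} (hr : 0 < r) (hu : u r ≠ 0) :
    comparison u p v q r = 1 / 2 * cubeRoot r ^ 4 * ((v r / u r * p r) ^ 2 - q r ^ 2)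
      + cubeRoot r / 3 * v r * (v r / u r * p r - q r)
      + 1 / 4 * cubeRoot r ^ 4 * v r ^ 2 * (u r ^ 2 - v r ^ 2) := by
  have := cubeRoot_pos hr
  rw [comparison, yanagida, yanagida]
  field

namespace IsGroundProfile

variable {u p v q : ℝ → ℝ}

theorem hasDerivAt_wronskian (hu : IsGroundProfile u p) (hv : IsGroundProfile v q) {r : ℝ}
    (hr : 0 < r) :
    HasDerivAt (wronskian u p v q) (r * (u r * v r) * (u r ^ 2 - v r ^ 2)) r := by
  refine ((hasDerivAt_id r).mul (((hv.hasDerivAt_deriv r hr).mul (hu.hasDerivAt r hr)).sub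
    ((hu.hasDerivAt_deriv r hr).mul (hv.hasDerivAt r hr)))).congr_deriv ?_
  simp only [Pi.mul_apply, Pi.sub_apply, id]
  field

theorem hasDerivAt_quotient (hu : IsGroundProfile u p) (hv : IsGroundProfile v q) {r : ℝ}
    (hr : 0 < r) :
    HasDerivAt (fun r => v r / u r) (wronskian u p v q r / (r * u r ^ 2)) r := by
  have := (hu.pos r hr).ne'
  refine ((hv.hasDerivAt r hr).div (hu.hasDerivAt r hr) this).congr_deriv ?_
  rw [wronskian]
  field

theorem hasDerivAt_comparison (hu : IsGroundProfile u p) (hv : IsGroundProfile v q) {r : ℝ}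
    (hr : 0 < r) : HasDerivAt (comparison u p v q)
      (2 * (v r / u r) * (wronskian u p v q r / (r * u r ^ 2)) * yanagida u p r) r := by
  refine ((((hu.hasDerivAt_quotient hv hr).pow 2).mul (hu.hasDerivAt_yanagida hr)).sub
    (hv.hasDerivAt_yanagida hr)).congr_deriv ?_
  have := (hu.pos r hr).ne'
  have := cubeRoot_pos hr
  simp only [Pi.pow_apply, Nat.add_one_sub_one, pow_one, Nat.cast_ofNat]
  field

theorem tendsto_wronskian (hu : IsGroundProfile u p) (hv : IsGroundProfile v q) :
    Tendsto (wronskian u p v q) (𝓝[>] 0) (𝓝 0) := by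
  obtain ⟨c, -, hc⟩ := hu.exists_tendsto
  obtain ⟨d, -, hd⟩ := hv.exists_tendsto
  have hid : Tendsto (fun r : ℝ => r) (𝓝[>] 0) (𝓝 0) := tendsto_id.mono_left nhdsWithin_le_nhds
  exact (hid.mul ((hv.tendsto_deriv.mul hc).sub (hu.tendsto_deriv.mul hd))).trans_eq (by simp)

-- In `comparison_eq` the singular terms `u² / (9 r ^ (2 / 3))` have cancelled.
theorem tendsto_comparison (hu : IsGroundProfile u p) (hv : IsGroundProfile v q) :
    Tendsto (comparison u p v q) (𝓝[>] 0) (𝓝 0) := by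
  obtain ⟨c, hc₀, hc⟩ := hu.exists_tendsto
  obtain ⟨d, -, hd⟩ := hv.exists_tendsto
  have hp := hu.tendsto_deriv
  have hq := hv.tendsto_deriv
  have hs := tendsto_cubeRoot
  have hw := (hd.div hc hc₀.ne').mul hp
  have h := ((((hs.pow 4).const_mul (1 / 2)).mul ((hw.pow 2).sub (hq.pow 2))).add
    (((hs.div_const 3).mul hd).mul (hw.sub hq))).add
    ((((hs.pow 4).const_mul (1 / 4)).mul (hd.pow 2)).mul ((hc.pow 2).sub (hd.pow 2)))
  simp only [ne_eq, OfNat.ofNat_ne_zero, not_false_eq_true, zero_pow, mul_zero, zero_mul,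
    zero_div, add_zero] at h
  refine h.congr' ?_
  filter_upwards [self_mem_nhdsWithin] with r hr
  exact (comparison_eq hr (hu.pos r hr).ne').symm

theorem strictAntiOn_quotient (hu : IsGroundProfile u p) (hv : IsGroundProfile v q) {R : ℝ}
    (hW : ∀ r, 0 < r → r < R → wronskian u p v q r < 0) :
    StrictAntiOn (fun r => v r / u r) (Ioc 0 R) :=
  strictAntiOn_Ioc_of_hasDerivAt (fun _ hr _ => hu.hasDerivAt_quotient hv hr) fun r hr hrR => by
    have := hu.pos r hr
    exact div_neg_of_neg_of_pos (hW r hr hrR) (by positivity)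

theorem strictAntiOn_comparison (hu : IsGroundProfile u p) (hv : IsGroundProfile v q) {R : ℝ}
    (hW : ∀ r, 0 < r → r < R → wronskian u p v q r < 0) :
    StrictAntiOn (comparison u p v q) (Ioc 0 R) :=
  strictAntiOn_Ioc_of_hasDerivAt (fun _ hr _ => hu.hasDerivAt_comparison hv hr) fun r hr hrR => by
    have hur := hu.pos r hr
    have hvr := hv.pos r hr
    exact mul_neg_of_neg_of_pos (mul_neg_of_pos_of_neg (by positivity)
      (div_neg_of_neg_of_pos (hW r hr hrR) (by positivity))) (hu.yanagida_pos hr)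

end IsGroundProfile

end Comparison

section Uniqueness

namespace IsGroundProfile

variable {u p v q : ℝ → ℝ}

theorem wronskian_neg_of_lt (hu : IsGroundProfile u p) (hv : IsGroundProfile v q) {R : ℝ}
    (hR : 0 < R) (h : ∀ r, 0 < r → r < R → u r < v r) : wronskian u p v q R < 0 := by
  refine lt_of_strictAntiOn_of_tendsto_nhdsGT
    (strictAntiOn_Ioc_of_hasDerivAt (fun _ hr _ => hu.hasDerivAt_wronskian hv hr)
      fun r hr hrR => ?_) (hu.tendsto_wronskian hv) hR le_rfl
  have hur := hu.pos r hr
  have hvr := hv.pos r hr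
  have hsq : u r ^ 2 < v r ^ 2 := pow_lt_pow_left₀ (h r hr hrR) hur.le two_ne_zero
  exact mul_neg_of_pos_of_neg (by positivity) (sub_neg.2 hsq)

-- At a zero of the Wronskian the comparison function has the sign of `u² - v²`.
theorem lt_of_wronskian_eq_zero (hu : IsGroundProfile u p) (hv : IsGroundProfile v q) {R : ℝ}
    (hR : 0 < R) (hW : ∀ r, 0 < r → r < R → wronskian u p v q r < 0)
    (hWR : wronskian u p v q R = 0) : u R < v R := by
  have huR := hu.pos R hR
  have hvR := hv.pos R hR
  have hcomparison : comparison u p v q R < 0 := lt_of_strictAntiOn_of_tendsto_nhdsGT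
    (hu.strictAntiOn_comparison hv hW) (hu.tendsto_comparison hv) hR le_rfl
  have hq : v R / u R * p R = q R := by
    have : q R * u R - p R * v R = 0 := (mul_eq_zero.1 hWR).resolve_left hR.ne'
    field_simp
    linarith
  rw [comparison_eq hR huR.ne', hq, sub_self, sub_self, mul_zero, mul_zero, zero_add,
    zero_add] at hcomparison
  by_contra! hle
  have : 0 ≤ u R ^ 2 - v R ^ 2 := sub_nonneg.2 (pow_le_pow_left₀ hvR.le hle 2)
  exact hcomparison.not_ge (mul_nonneg (by have := cubeRoot_pos hR; positivity) this)

theorem wronskian_ne_zero (hu : IsGroundProfile u p) (hv : IsGroundProfile v q) {R : ℝ}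
    (hR : 0 < R) (hW : ∀ r, 0 < r → r < R → wronskian u p v q r < 0) :
    wronskian u p v q R ≠ 0 := by
  intro hWR
  refine (hu.wronskian_neg_of_lt hv hR fun r hr hrR => ?_).ne hWR
  have hlt : 1 < v R / u R := (one_lt_div (hu.pos R hR)).2 (hu.lt_of_wronskian_eq_zero hv hR hW hWR)
  exact (one_lt_div (hu.pos r hr)).1
    (hlt.trans (hu.strictAntiOn_quotient hv hW ⟨hr, hrR.le⟩ ⟨hR, le_rfl⟩ hrR))

theorem wronskian_neg (hu : IsGroundProfile u p) (hv : IsGroundProfile v q) {c d : ℝ}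
    (hc : Tendsto u (𝓝[>] 0) (𝓝 c)) (hd : Tendsto v (𝓝[>] 0) (𝓝 d)) (hcd : c < d) {R : ℝ}
    (hR : 0 < R) : wronskian u p v q R < 0 := by
  obtain ⟨δ, hδ : 0 < δ, hlt⟩ := mem_nhdsGT_iff_exists_Ioc_subset.1 (hc.eventually_lt hd hcd)
  have hnear {r : ℝ} (hr : 0 < r) (hrδ : r ≤ δ) : wronskian u p v q r < 0 :=
    hu.wronskian_neg_of_lt hv hr fun s hs hsr => hlt ⟨hs, hsr.le.trans hrδ⟩
  rcases le_total R δ with hRδ | hδR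
  · exact hnear hR hRδ
  refine neg_of_neg_of_forall_neg_imp_ne_zero (fun r hr => (hu.hasDerivAt_wronskian hv
    (hδ.trans_le hr.1)).continuousAt.continuousWithinAt) (hnear hδ le_rfl)
    (fun r hr hneg => hu.wronskian_ne_zero hv (hδ.trans_le hr.1) fun s hs hsr => ?_) hδR
  rcases le_total s δ with hsδ | hδs
  · exact hnear hs hsδ
  · exact hneg s ⟨hδs, hsr⟩

theorem abs_comparison_le {B : ℝ} {r : ℝ} (hr : 1 ≤ r) (h₀ : 0 ≤ v r / u r) (hB : v r / u r ≤ B) :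
    |comparison u p v q r| ≤ r ^ 2 * (B ^ 2 * (u r ^ 2 + p r ^ 2 + u r ^ 4)
      + (v r ^ 2 + q r ^ 2 + v r ^ 4)) :=
  calc |comparison u p v q r|
      ≤ (v r / u r) ^ 2 * |yanagida u p r| + |yanagida v q r| := by
        refine (abs_sub _ _).trans_eq ?_
        rw [abs_mul, abs_of_nonneg (sq_nonneg (v r / u r))]
    _ ≤ B ^ 2 * (r ^ 2 * (u r ^ 2 + p r ^ 2 + u r ^ 4))
          + r ^ 2 * (v r ^ 2 + q r ^ 2 + v r ^ 4) := by
        gcongr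
        · exact abs_yanagida_le u p hr
        · exact abs_yanagida_le v q hr
    _ = _ := by ring

-- Otherwise the comparison function decreases from `0`, yet tends to `0` along a sequence.
theorem not_lt_of_tendsto (hu : IsGroundProfile u p) (hv : IsGroundProfile v q) {c d : ℝ}
    (hc₀ : 0 < c) (hc : Tendsto u (𝓝[>] 0) (𝓝 c)) (hd : Tendsto v (𝓝[>] 0) (𝓝 d)) :
    ¬ c < d := by
  intro hcd
  have hW (r : ℝ) (hr : 0 < r) : wronskian u p v q r < 0 := hu.wronskian_neg hv hc hd hcd hr
  have hanti (R : ℝ) : StrictAntiOn (comparison u p v q) (Ioc 0 R) :=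
    hu.strictAntiOn_comparison hv fun r hr _ => hW r hr
  have hquot (r : ℝ) (hr : 0 < r) : v r / u r ≤ d / c := le_of_antitoneOn_of_tendsto_nhdsGT
    (hu.strictAntiOn_quotient hv fun r hr _ => hW r hr).antitoneOn (hd.div hc hc₀.ne') hr le_rfl
  have hone : comparison u p v q 1 < 0 := lt_of_strictAntiOn_of_tendsto_nhdsGT (hanti 1)
    (hu.tendsto_comparison hv) one_pos le_rfl
  have hint : IntegrableOn (fun r => r * ((d / c) ^ 2 * (u r ^ 2 + p r ^ 2 + u r ^ 4)
      + (v r ^ 2 + q r ^ 2 + v r ^ 4))) (Ioi 0) := by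
    simp only [mul_add _ (_ * _), mul_left_comm _ ((d / c) ^ 2)]
    exact (hu.integrableOn_energy.const_mul _).add hv.integrableOn_energy
  obtain ⟨t, -, ht, htε⟩ := exists_sq_mul_lt hint (neg_pos.2 hone) 0
  have ht₀ : 0 < t := one_pos.trans ht
  have hdecr := hanti t ⟨one_pos, ht.le⟩ ⟨ht₀, le_rfl⟩ ht
  have hsmall := abs_comparison_le (p := p) (q := q) ht.le
    (div_pos (hv.pos t ht₀) (hu.pos t ht₀)).le (hquot t ht₀)
  linarith [neg_abs_le (comparison u p v q t)]

end IsGroundProfile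

theorem nonpos_of_deriv_le_mul_of_tendsto {g g' : ℝ → ℝ} {K R : ℝ}
    (hg : ∀ r, 0 < r → r ≤ R → HasDerivAt g (g' r) r)
    (hle : ∀ r, 0 < r → r ≤ R → g' r ≤ K * g r) (h₀ : Tendsto g (𝓝[>] 0) (𝓝 0)) (hR : 0 < R) :
    g R ≤ 0 := by
  have hderiv (r : ℝ) (hr : r ∈ Ioc 0 R) : HasDerivAt (fun r => g r * Real.exp (-K * r))
      ((g' r - K * g r) * Real.exp (-K * r)) r :=
    ((hg r hr.1 hr.2).mul ((hasDerivAt_id r).const_mul (-K)).exp).congr_deriv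
      (by simp only [id]; ring)
  have hanti : AntitoneOn (fun r => g r * Real.exp (-K * r)) (Ioc 0 R) := by
    refine antitoneOn_of_deriv_nonpos (convex_Ioc 0 R)
      (fun r hr => (hderiv r hr).continuousAt.continuousWithinAt)
      (fun r hr => (hderiv r (interior_subset hr)).differentiableAt.differentiableWithinAt)
      fun r hr => ?_
    have hr := interior_subset hr
    rw [(hderiv r hr).deriv]
    exact mul_nonpos_of_nonpos_of_nonneg (sub_nonpos.2 (hle r hr.1 hr.2)) (Real.exp_pos _).le
  have hexp : Tendsto (fun r => Real.exp (-K * r)) (𝓝[>] 0) (𝓝 (Real.exp (-K * 0))) :=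
    (Continuous.tendsto (by fun_prop) 0).mono_left nhdsWithin_le_nhds
  have hlim := h₀.mul hexp
  rw [zero_mul] at hlim
  exact nonpos_of_mul_nonpos_left (le_of_antitoneOn_of_tendsto_nhdsGT hanti hlim hR le_rfl)
    (Real.exp_pos _)

namespace IsRadialSolution

variable {u p v q : ℝ → ℝ} {κ : ℝ}

theorem hasDerivAt_dist_sq (hu : IsRadialSolution κ u p) (hv : IsRadialSolution κ v q) {r : ℝ}
    (hr : 0 < r) : HasDerivAt (fun r => (u r - v r) ^ 2 + (p r - q r) ^ 2)
      ((2 - κ * (u r ^ 2 + u r * v r + v r ^ 2)) * (2 * ((u r - v r) * (p r - q r)))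
        - 2 * (p r - q r) ^ 2 / r) r := by
  refine ((((hu.hasDerivAt r hr).sub (hv.hasDerivAt r hr)).pow 2).add
    (((hu.hasDerivAt_deriv r hr).sub (hv.hasDerivAt_deriv r hr)).pow 2)).congr_deriv ?_
  simp only [Pi.sub_apply, Nat.add_one_sub_one, pow_one, Nat.cast_ofNat]
  field_simp
  ring

theorem eq_of_tendsto (hu : IsRadialSolution κ u p) (hv : IsRadialSolution κ v q) {c : ℝ}
    (huc : Tendsto u (𝓝[>] 0) (𝓝 c)) (hvc : Tendsto v (𝓝[>] 0) (𝓝 c)) {R : ℝ} (hR : 0 < R) :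
    u R = v R := by
  obtain ⟨K, hK⟩ := exists_forall_abs_le_of_tendsto_nhdsGT (R := R)
    (φ := fun r => 2 - κ * (u r ^ 2 + u r * v r + v r ^ 2))
    (by have := hu.continuousOn; have := hv.continuousOn; fun_prop)
    (tendsto_const_nhds.sub ((((huc.pow 2).add (huc.mul hvc)).add (hvc.pow 2)).const_mul κ))
  have hlim := ((huc.sub hvc).pow 2).add ((hu.tendsto_deriv.sub hv.tendsto_deriv).pow 2)
  simp only [sub_self, ne_eq, OfNat.ofNat_ne_zero, not_false_eq_true, zero_pow, add_zero] at hlim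
  have hdist : (u R - v R) ^ 2 + (p R - q R) ^ 2 ≤ 0 := by
    refine nonpos_of_deriv_le_mul_of_tendsto
      (g := fun r => (u r - v r) ^ 2 + (p r - q r) ^ 2) (K := K)
      (fun r hr _ => hu.hasDerivAt_dist_sq hv hr) (fun r hr hrR => ?_) hlim hR
    have hprod : |2 * ((u r - v r) * (p r - q r))| ≤ (u r - v r) ^ 2 + (p r - q r) ^ 2 := by
      rw [abs_le]
      constructor <;> nlinarith [sq_nonneg ((u r - v r) + (p r - q r)),
        sq_nonneg ((u r - v r) - (p r - q r))]
    have hmul := mul_le_mul (hK r ⟨hr, hrR⟩) hprod (abs_nonneg _)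
      ((abs_nonneg _).trans (hK r ⟨hr, hrR⟩))
    rw [← abs_mul] at hmul
    have : 0 ≤ 2 * (p r - q r) ^ 2 / r := by positivity
    linarith [le_abs_self ((2 - κ * (u r ^ 2 + u r * v r + v r ^ 2))
      * (2 * ((u r - v r) * (p r - q r))))]
  exact sub_eq_zero.1 (pow_eq_zero_iff two_ne_zero |>.1 (by nlinarith [sq_nonneg (u R - v R)]))

end IsRadialSolution

namespace IsGroundProfile

variable {u p v q : ℝ → ℝ}

theorem eq (hu : IsGroundProfile u p) (hv : IsGroundProfile v q) {r : ℝ} (hr : 0 < r) :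
    u r = v r := by
  obtain ⟨c, hc₀, hc⟩ := hu.exists_tendsto
  obtain ⟨d, hd₀, hd⟩ := hv.exists_tendsto
  obtain rfl : c = d := le_antisymm (not_lt.1 (hv.not_lt_of_tendsto hu hd₀ hd hc))
    (not_lt.1 (hu.not_lt_of_tendsto hv hc₀ hc hd))
  exact hu.toIsRadialSolution.eq_of_tendsto hv.toIsRadialSolution hc hd hr

theorem mass_pos (h : IsGroundProfile u p) : 0 < ∫ r in Ioi (0 : ℝ), r * u r ^ 2 := by
  have hsupport : Ioi 0 ⊆ Function.support fun r => r * u r ^ 2 := fun r (hr : 0 < r) =>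
    (mul_pos hr (pow_pos (h.pos r hr) 2)).ne'
  rw [setIntegral_pos_iff_support_of_nonneg_ae ?_ h.integrableOn_sq,
    inter_eq_right.2 hsupport, Real.volume_Ioi]
  · exact ENNReal.coe_lt_top
  · filter_upwards [ae_restrict_mem measurableSet_Ioi] with r hr
    exact mul_nonneg (le_of_lt hr) (sq_nonneg _)

theorem profileGN (h : IsGroundProfile u p) : ProfileGN (2 / ∫ r in Ioi (0 : ℝ), r * u r ^ 2) := by
  have hmass := h.mass_pos
  by_contra hnot
  obtain ⟨L, hL, v, q, hv, hle⟩ := exists_groundProfile (by positivity) hnot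
  have heq : ∫ r in Ioi (0 : ℝ), r * v r ^ 2 = ∫ r in Ioi (0 : ℝ), r * u r ^ 2 :=
    setIntegral_congr_fun measurableSet_Ioi fun r hr => by simp only [hv.eq h hr]
  have hL₀ : 0 < L := lt_trans (by positivity) hL
  rw [heq, le_div_iff₀ hL₀] at hle
  rw [div_lt_iff₀ hmass] at hL
  linarith

end IsGroundProfile

end Uniqueness

section Pohozaev

theorem tendsto_atTop_zero_of_integrableOn_of_abs_le {g g' φ : ℝ → ℝ}
    (hd : ∀ r, 0 < r → HasDerivAt g (g' r) r) (hg' : IntegrableOn g' (Ioi 0))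
    (hφ : IntegrableOn (fun r => r * φ r) (Ioi 0)) (hle : ∀ r, 1 < r → |g r| ≤ r ^ 2 * φ r) :
    Tendsto g atTop (𝓝 0) := by
  have hlim := tendsto_limUnder_of_hasDerivAt_of_integrableOn_Ioi (fun r hr => hd r hr) hg'
  suffices limUnder atTop g = 0 by rwa [this] at hlim
  by_contra hne
  have hhalf := half_pos (abs_pos.2 hne)
  obtain ⟨R, hR⟩ := eventually_atTop.1
    (hlim.abs.eventually_const_lt (half_lt_self (abs_pos.2 hne)))
  obtain ⟨t, htR, ht, hlt⟩ := exists_sq_mul_lt hφ hhalf R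
  linarith [hR t htR.le, hle t ht]

theorem integral_Ioi_eq_zero_of_hasDerivAt {g g' φ : ℝ → ℝ}
    (hd : ∀ r, 0 < r → HasDerivAt g (g' r) r) (hg' : IntegrableOn g' (Ioi 0))
    (h₀ : Tendsto g (𝓝[>] 0) (𝓝 0)) (hφ : IntegrableOn (fun r => r * φ r) (Ioi 0))
    (hle : ∀ r, 1 < r → |g r| ≤ r ^ 2 * φ r) : ∫ r in Ioi (0 : ℝ), g' r = 0 := by
  have h := integral_Ioi_deriv_mul_eq_sub (a := 0) (v := fun _ => 1) (v' := fun _ => 0)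
    (a' := 0) (b' := 0) (u := g) (fun r hr => hd r hr) (fun r _ => hasDerivAt_const r 1)
    (by simpa [Pi.mul_def, Pi.add_def] using hg') (by simpa [Pi.mul_def] using h₀)
    (by simpa [Pi.mul_def] using tendsto_atTop_zero_of_integrableOn_of_abs_le hd hg' hφ hle)
  simpa only [mul_one, mul_zero, add_zero, sub_zero] using h

namespace IsGroundProfile

variable {u p : ℝ → ℝ}

-- Multiply the equation by `r² u'`.
theorem integral_quartic (h : IsGroundProfile u p) :
    ∫ r in Ioi (0 : ℝ), r * u r ^ 4 = 2 * ∫ r in Ioi (0 : ℝ), r * u r ^ 2 := by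
  obtain ⟨c, -, hc⟩ := h.exists_tendsto
  have hquartic := h.integrableOn_quartic.const_mul (1 / 2)
  have hzero : ∫ r in Ioi (0 : ℝ), (1 / 2 * (r * u r ^ 4) - r * u r ^ 2) = 0 := by
    refine integral_Ioi_eq_zero_of_hasDerivAt
      (g := fun r => r ^ 2 * (1 / 2 * p r ^ 2 - 1 / 2 * u r ^ 2 + 1 / 4 * u r ^ 4))
      (fun r hr => ?_) (hquartic.sub h.integrableOn_sq) ?_ h.integrableOn_energy fun r _ => ?_
    · have hu := h.hasDerivAt r hr
      refine (((hasDerivAt_id r).pow 2).mul (((((h.hasDerivAt_deriv r hr).pow 2).const_mul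
        (1 / 2)).sub ((hu.pow 2).const_mul (1 / 2))).add
        ((hu.pow 4).const_mul (1 / 4)))).congr_deriv ?_
      simp only [Pi.sub_apply, Pi.add_apply, Pi.pow_apply, id, Nat.add_one_sub_one, pow_one,
        Nat.cast_ofNat]
      field_simp
      ring
    · have hid : Tendsto (fun r : ℝ => r) (𝓝[>] 0) (𝓝 0) := tendsto_id.mono_left nhdsWithin_le_nhds
      exact ((hid.pow 2).mul ((((h.tendsto_deriv.pow 2).const_mul (1 / 2)).sub
        ((hc.pow 2).const_mul (1 / 2))).add ((hc.pow 4).const_mul (1 / 4)))).trans_eq (by simp)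
    · rw [abs_mul, abs_of_nonneg (sq_nonneg r)]
      refine mul_le_mul_of_nonneg_left ?_ (sq_nonneg r)
      have : 0 ≤ u r ^ 4 := by positivity
      rw [abs_le]
      constructor <;> linarith [sq_nonneg (u r), sq_nonneg (p r)]
  rw [integral_sub hquartic h.integrableOn_sq, integral_const_mul] at hzero
  linarith

-- Multiply the equation by `r u`.
theorem integral_deriv_sq (h : IsGroundProfile u p) :
    ∫ r in Ioi (0 : ℝ), r * p r ^ 2 = ∫ r in Ioi (0 : ℝ), r * u r ^ 2 := by
  obtain ⟨c, -, hc⟩ := h.exists_tendsto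
  have hdiff : IntegrableOn (fun r => r * u r ^ 4 - r * u r ^ 2) (Ioi 0) :=
    h.integrableOn_quartic.sub h.integrableOn_sq
  have hzero : ∫ r in Ioi (0 : ℝ), (r * p r ^ 2 - (r * u r ^ 4 - r * u r ^ 2)) = 0 := by
    refine integral_Ioi_eq_zero_of_hasDerivAt (fun r hr => (h.hasDerivAt_mul_mul_deriv
      hr).congr_deriv (by ring)) (h.integrableOn_deriv_sq.sub hdiff) ?_ h.integrableOn_energy
      fun r hr => ?_
    · have hid : Tendsto (fun r : ℝ => r) (𝓝[>] 0) (𝓝 0) := tendsto_id.mono_left nhdsWithin_le_nhds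
      exact (hid.mul (hc.mul h.tendsto_deriv)).trans_eq (by simp)
    · have hr₀ : 0 < r := one_pos.trans hr
      rw [abs_mul, abs_of_pos hr₀]
      refine mul_le_mul (le_self_pow₀ hr.le two_ne_zero) ?_ (abs_nonneg _) (sq_nonneg r)
      have : 0 ≤ u r ^ 4 := by positivity
      rw [abs_le]
      constructor <;> nlinarith [sq_nonneg (u r + p r), sq_nonneg (u r - p r), sq_nonneg (u r),
        sq_nonneg (p r)]
  rw [integral_sub h.integrableOn_deriv_sq hdiff,
    integral_sub h.integrableOn_quartic h.integrableOn_sq, h.integral_quartic] at hzero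
  linarith

end IsGroundProfile

end Pohozaev

section RadialLaplacian

variable {f : ℝ → ℝ}

theorem hasFDerivAt_norm {E : Type*} [NormedAddCommGroup E] [InnerProductSpace ℝ E] {x : E}
    (hx : x ≠ 0) : HasFDerivAt (fun y : E => ‖y‖) (‖x‖⁻¹ • innerSL ℝ x) x := by
  have hsqrt := (hasStrictFDerivAt_norm_sq x).hasFDerivAt.sqrt
    (pow_ne_zero 2 (norm_ne_zero_iff.2 hx))
  simp only [Real.sqrt_sq (norm_nonneg _)] at hsqrt
  refine hsqrt.congr_fderiv ?_
  ext v
  simp only [smul_apply]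
  module

theorem fderiv_comp_norm_single {x : ℝ²} (hf : DifferentiableAt ℝ f ‖x‖) (hx : x ≠ 0)
    (i : Fin 2) : fderiv ℝ (fun y : ℝ² => f ‖y‖) x (EuclideanSpace.single i 1) =
      deriv f ‖x‖ / ‖x‖ * x i := by
  have h := (hf.hasDerivAt.comp_hasFDerivAt x (hasFDerivAt_norm hx)).fderiv
  rw [Function.comp_def] at h
  rw [h]
  simp [EuclideanSpace.inner_single_right, div_eq_mul_inv, mul_assoc]

theorem lap2_comp_norm (hf : ContDiff ℝ 2 f) {x : ℝ²} (hx : x ≠ 0) :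
    lap2 (fun y => f ‖y‖) x = deriv (deriv f) ‖x‖ + deriv f ‖x‖ / ‖x‖ := by
  have hr := norm_ne_zero_iff.2 hx
  have hf' : DifferentiableAt ℝ (deriv f) ‖x‖ :=
    (contDiff_succ_iff_deriv (n := 1).1 hf).2.2.differentiable one_ne_zero _
  have hquot := (hf'.hasDerivAt.div (hasDerivAt_id ‖x‖) hr).comp_hasFDerivAt x (hasFDerivAt_norm hx)
  have hsecond (i : Fin 2) : fderiv ℝ (fun y => fderiv ℝ (fun y : ℝ² => f ‖y‖) y
      (EuclideanSpace.single i 1)) x (EuclideanSpace.single i 1) =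
      deriv f ‖x‖ / ‖x‖ + (deriv (deriv f) ‖x‖ * ‖x‖ - deriv f ‖x‖) / ‖x‖ ^ 3 * x i ^ 2 := by
    have hfirst : (fun y => fderiv ℝ (fun y : ℝ² => f ‖y‖) y (EuclideanSpace.single i 1))
        =ᶠ[𝓝 x] fun y => deriv f ‖y‖ / ‖y‖ * y i := by
      filter_upwards [eventually_ne_nhds hx] with y hy
      exact fderiv_comp_norm_single (hf.differentiable two_ne_zero _) hy i
    rw [((hquot.mul (EuclideanSpace.proj i).hasFDerivAt).congr_of_eventuallyEq hfirst).fderiv]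
    simp only [Function.comp_apply, Pi.div_apply, id_eq, PiLp.proj_apply, mul_one, add_apply,
      smul_apply, PiLp.single_eq_same, smul_eq_mul, coe_innerSL_apply,
      EuclideanSpace.inner_single_right, Real.ringHom_apply, one_mul, add_right_inj]
    field_simp
  rw [lap2, Finset.sum_congr rfl fun i _ => hsecond i, Fin.sum_univ_two, ← add_add_add_comm,
    ← mul_add, ← Fin.sum_univ_two fun i => x i ^ 2, ← EuclideanSpace.real_norm_sq_eq]
  field_simp
  ring

end RadialLaplacian

section RadialPart

/-- The restriction of a function on the plane to the first coordinate axis; it determines a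
radial function. -/
noncomputable def radialPart (Q : ℝ² → ℝ) (r : ℝ) : ℝ := Q (EuclideanSpace.single 0 r)

theorem norm_gradient {E : Type*} [NormedAddCommGroup E] [InnerProductSpace ℝ E] [CompleteSpace E]
    (u : E → ℝ) (x : E) : ‖gradient u x‖ = ‖fderiv ℝ u x‖ :=
  (InnerProductSpace.toDual ℝ E).symm.norm_map _

variable {Q : ℝ² → ℝ}

theorem contDiff_radialPart {n : WithTop ℕ∞} (hQ : ContDiff ℝ n Q) :
    ContDiff ℝ n (radialPart Q) := by
  refine hQ.comp (contDiff_euclidean.2 fun i => ?_)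
  fin_cases i
  · simpa using contDiff_fun_id
  · simpa using contDiff_const

theorem comp_norm_radialPart (hQ : ∀ x y : ℝ², ‖x‖ = ‖y‖ → Q x = Q y) :
    (fun x => radialPart Q ‖x‖) = Q :=
  funext fun x => hQ _ _ (by simp)

theorem deriv_radialPart_zero (hQ : ∀ x y : ℝ², ‖x‖ = ‖y‖ → Q x = Q y) :
    deriv (radialPart Q) 0 = 0 := by
  have heven : (fun r => radialPart Q (-r)) = radialPart Q := funext fun r => hQ _ _ (by simp)
  have hneg := deriv_comp_neg (radialPart Q) 0
  rw [heven, neg_zero] at hneg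
  linarith

theorem integral_pow_eq_radialPart (hQ : ∀ x y : ℝ², ‖x‖ = ‖y‖ → Q x = Q y) (k : ℕ) :
    ∫ x, Q x ^ k = 2 * Real.pi * ∫ r in Ioi (0 : ℝ), r * radialPart Q r ^ k := by
  rw [← integral_radial fun r => radialPart Q r ^ k]
  exact integral_congr_ae (Eventually.of_forall fun x => by
    simp only [congrFun (comp_norm_radialPart hQ) x])

theorem integral_sq_norm_gradient_eq_radialPart (hQ : ∀ x y : ℝ², ‖x‖ = ‖y‖ → Q x = Q y) :
    ∫ x, ‖gradient Q x‖ ^ 2 = 2 * Real.pi * ∫ r in Ioi (0 : ℝ), r * deriv (radialPart Q) r ^ 2 := by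
  simp only [norm_gradient, ← integral_sq_norm_fderiv_radial, comp_norm_radialPart hQ]

theorem integrable_pow_iff_radialPart (hQ : ∀ x y : ℝ², ‖x‖ = ‖y‖ → Q x = Q y) (k : ℕ) :
    Integrable (fun x => Q x ^ k) ↔ IntegrableOn (fun r => r * radialPart Q r ^ k) (Ioi 0) := by
  rw [← integrable_radial_iff fun r => radialPart Q r ^ k]
  simp only [congrFun (comp_norm_radialPart hQ) _]

theorem integrable_sq_norm_gradient_iff_radialPart
    (hQ : ∀ x y : ℝ², ‖x‖ = ‖y‖ → Q x = Q y) : Integrable (fun x => ‖gradient Q x‖ ^ 2) ↔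
      IntegrableOn (fun r => r * deriv (radialPart Q) r ^ 2) (Ioi 0) := by
  rw [← integrable_radial_iff fun r => deriv (radialPart Q) r ^ 2]
  refine integrable_congr ?_
  filter_upwards [compl_mem_ae_iff.2 (measure_singleton (0 : ℝ²))] with x hx
  rw [norm_gradient, ← sq_abs (deriv _ _), ← norm_fderiv_comp_norm hx, comp_norm_radialPart hQ]

theorem isRadialSolution_radialPart (hQ : ∀ x y : ℝ², ‖x‖ = ‖y‖ → Q x = Q y)
    (hsmooth : ContDiff ℝ 2 Q) {κ : ℝ} (hpde : ∀ x, -lap2 Q x + Q x - κ * Q x ^ 3 = 0) :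
    IsRadialSolution κ (radialPart Q) (deriv (radialPart Q)) := by
  have hC₂ := contDiff_radialPart hsmooth
  have hC₁ : ContDiff ℝ 1 (deriv (radialPart Q)) := (contDiff_succ_iff_deriv (n := 1).1 hC₂).2.2
  refine ⟨fun r _ => (hC₂.differentiable two_ne_zero r).hasDerivAt, fun r hr => ?_, ?_⟩
  · have hnorm : ‖EuclideanSpace.single (0 : Fin 2) r‖ = r := by simp [hr.le]
    have hlap := lap2_comp_norm hC₂ (norm_pos_iff.1 (hnorm.symm ▸ hr))
    rw [comp_norm_radialPart hQ, hnorm] at hlap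
    refine (hC₁.differentiable one_ne_zero r).hasDerivAt.congr_deriv ?_
    have := hpde (EuclideanSpace.single 0 r)
    rw [hlap] at this
    rw [radialPart, neg_div]
    linarith
  · exact (deriv_radialPart_zero hQ ▸ hC₁.continuous.tendsto 0).mono_left nhdsWithin_le_nhds

theorem isGroundProfile_radialPart (hpos : ∀ x, 0 < Q x)
    (hQ : ∀ x y : ℝ², ‖x‖ = ‖y‖ → Q x = Q y) (hsmooth : ContDiff ℝ 2 Q)
    (hL2 : Integrable fun x => Q x ^ 2) (hgrad : Integrable fun x => ‖gradient Q x‖ ^ 2)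
    (hL4 : Integrable fun x => Q x ^ 4) (hpde : ∀ x, -lap2 Q x + Q x - Q x ^ 3 = 0) :
    IsGroundProfile (radialPart Q) (deriv (radialPart Q)) where
  toIsRadialSolution := isRadialSolution_radialPart hQ hsmooth (by simpa only [one_mul] using hpde)
  pos _ _ := hpos _
  exists_tendsto := ⟨_, hpos _,
    ((contDiff_radialPart hsmooth).continuous.tendsto 0).mono_left nhdsWithin_le_nhds⟩
  integrableOn_sq := (integrable_pow_iff_radialPart hQ 2).1 hL2
  integrableOn_deriv_sq := (integrable_sq_norm_gradient_iff_radialPart hQ).1 hgrad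
  integrableOn_quartic := (integrable_pow_iff_radialPart hQ 4).1 hL4

end RadialPart

section Mollification

theorem norm_integral_smul_sq_le {α F : Type*} [MeasurableSpace α] {μ : Measure α}
    [NormedAddCommGroup F] [NormedSpace ℝ F] {w : α → ℝ} {f : α → F} (hw₀ : ∀ x, 0 ≤ w x)
    (hw : Integrable w μ) (hw₁ : ∫ x, w x ∂μ = 1) (hf : Integrable (fun x => w x • f x) μ)
    (hf₂ : Integrable (fun x => w x * ‖f x‖ ^ 2) μ) :
    ‖∫ x, w x • f x ∂μ‖ ^ 2 ≤ ∫ x, w x * ‖f x‖ ^ 2 ∂μ := by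
  have hnorm (x : α) : ‖w x • f x‖ = w x * ‖f x‖ := by
    rw [norm_smul, Real.norm_of_nonneg (hw₀ x)]
  set m := ∫ x, w x * ‖f x‖ ∂μ with hm
  have hint : Integrable (fun x => w x * ‖f x‖) μ := by simpa only [hnorm] using hf.norm
  have hle : ‖∫ x, w x • f x ∂μ‖ ≤ m :=
    (norm_integral_le_integral_norm _).trans_eq (by simp only [hnorm, hm])
  have hvariance : 0 ≤ ∫ x, w x * ‖f x‖ ^ 2 - 2 * m * (w x * ‖f x‖) + m ^ 2 * w x ∂μ :=
    integral_nonneg fun x => by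
      have := mul_nonneg (hw₀ x) (sq_nonneg (‖f x‖ - m))
      simp only [Pi.zero_apply]
      linarith
  rw [integral_add (by exact hf₂.sub (hint.const_mul _)) (hw.const_mul _),
    integral_sub hf₂ (hint.const_mul _), integral_const_mul, integral_const_mul, hw₁,
    ← hm] at hvariance
  linarith [pow_le_pow_left₀ (norm_nonneg _) hle 2]

theorem locallyIntegrable_of_integrable_norm_sq {X F : Type*} [TopologicalSpace X]
    [MeasurableSpace X] {μ : Measure X} [IsLocallyFiniteMeasure μ] [NormedAddCommGroup F]
    {g : X → F} (hm : AEStronglyMeasurable g μ) (hg : Integrable (fun x => ‖g x‖ ^ 2) μ) :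
    LocallyIntegrable g μ := by
  refine ((locallyIntegrable_const (1 : ℝ)).add hg.locallyIntegrable).mono hm
    (Eventually.of_forall fun x => ?_)
  rw [Pi.add_apply, Real.norm_of_nonneg (by positivity)]
  nlinarith [sq_nonneg (‖g x‖ - 1), norm_nonneg (g x)]

theorem fderiv_comp_const_sub {E F : Type*} [NormedAddCommGroup E] [NormedSpace ℝ E]
    [NormedAddCommGroup F] [NormedSpace ℝ F] {v : E → F} (hv : Differentiable ℝ v) (x y : E) :
    fderiv ℝ (fun z => v (x - z)) y = -fderiv ℝ v (x - y) := by
  have h : fderiv ℝ (fun z => v (x - z)) y = _ :=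
    ((hv (x - y)).hasFDerivAt.comp y ((hasFDerivAt_id y).const_sub x)).fderiv
  rw [h]
  ext
  simp

variable {E F : Type*} [NormedAddCommGroup E] [InnerProductSpace ℝ E] [FiniteDimensional ℝ E]
  [MeasurableSpace E] [BorelSpace E] [NormedAddCommGroup F] [NormedSpace ℝ F]

/-- The convolution of `g` with a bump function normalised to have integral one. -/
noncomputable def mollify (φ : ContDiffBump (0 : E)) (g : E → F) : E → F :=
  φ.normed volume ⋆[ContinuousLinearMap.lsmul ℝ ℝ, volume] g

variable (φ : ContDiffBump (0 : E)) {g : E → F} {v : E → ℝ}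

theorem integrable_normed_smul_comp_sub (hg : LocallyIntegrable g) (x : E) :
    Integrable (fun y => φ.normed volume y • g (x - y)) :=
  φ.hasCompactSupport_normed.convolutionExists_left (ContinuousLinearMap.lsmul ℝ ℝ)
    φ.continuous_normed hg x

theorem integrable_mollify (hg : Integrable g) : Integrable (mollify φ g) :=
  φ.integrable_normed.integrable_convolution _ hg

theorem integral_mollify [CompleteSpace F] (hg : Integrable g) :
    ∫ x, mollify φ g x = ∫ x, g x := by
  simpa [φ.integral_normed, mollify] using integral_convolution (ContinuousLinearMap.lsmul ℝ ℝ)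
    (φ.integrable_normed (μ := volume)) hg

theorem continuous_mollify (hg : LocallyIntegrable g) : Continuous (mollify φ g) :=
  φ.hasCompactSupport_normed.continuous_convolution_left _ φ.continuous_normed hg

theorem contDiff_mollify {n : ℕ∞} (hg : LocallyIntegrable g) : ContDiff ℝ n (mollify φ g) :=
  φ.hasCompactSupport_normed.contDiff_convolution_left _ φ.contDiff_normed hg

theorem norm_mollify_sq_le (hm : AEStronglyMeasurable g) (hg : Integrable fun x => ‖g x‖ ^ 2)
    (x : E) : ‖mollify φ g x‖ ^ 2 ≤ mollify φ (fun y => ‖g y‖ ^ 2) x :=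
  norm_integral_smul_sq_le (fun y => φ.nonneg_normed y) φ.integrable_normed φ.integral_normed
    (integrable_normed_smul_comp_sub φ (locallyIntegrable_of_integrable_norm_sq hm hg) x)
    (integrable_normed_smul_comp_sub φ hg.locallyIntegrable x)

theorem integral_norm_mollify_sq_le (hm : AEStronglyMeasurable g)
    (hg : Integrable fun x => ‖g x‖ ^ 2) : ∫ x, ‖mollify φ g x‖ ^ 2 ≤ ∫ x, ‖g x‖ ^ 2 := by
  have hle := norm_mollify_sq_le φ hm hg
  have hint := integrable_mollify φ hg
  refine (integral_mono (hint.mono' ?_ (Eventually.of_forall fun x => ?_)) hint hle).trans_eq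
    (integral_mollify φ hg)
  · exact ((continuous_mollify φ
      (locallyIntegrable_of_integrable_norm_sq hm hg)).norm.pow 2).aestronglyMeasurable
  · exact (Real.norm_of_nonneg (sq_nonneg _)).trans_le (hle x)

theorem integral_fderiv_mul_comp_sub {ψ : E → ℝ} (hψ : ContDiff ℝ 1 ψ) (hcs : HasCompactSupport ψ)
    (hv : Differentiable ℝ v) (hv' : LocallyIntegrable (fderiv ℝ v)) (x e : E) :
    ∫ y, fderiv ℝ ψ y e * v (x - y) = ∫ y, ψ y * fderiv ℝ v (x - y) e := by
  have hvl := hv.continuous.locallyIntegrable (μ := volume)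
  have hψ' : Continuous fun y => fderiv ℝ ψ y e :=
    (hψ.continuous_fderiv one_ne_zero).clm_apply continuous_const
  have hint : Integrable fun y => ψ y * fderiv ℝ v (x - y) e :=
    (hcs.convolutionExists_left (ContinuousLinearMap.lsmul ℝ ℝ) hψ.continuous hv'
      x).apply_continuousLinearMap e
  have hparts := integral_mul_fderiv_eq_neg_fderiv_mul_of_integrable (μ := (volume : Measure E))
    (f := ψ) (g := fun y => v (x - y)) (v := e)
    ((hcs.fderiv_apply (𝕜 := ℝ) e).convolutionExists_left (ContinuousLinearMap.lsmul ℝ ℝ) hψ' hvl x)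
    (by simpa only [fderiv_comp_const_sub hv, neg_apply, mul_neg] using! hint.neg)
    (hcs.convolutionExists_left (ContinuousLinearMap.lsmul ℝ ℝ) hψ.continuous hvl x)
    (fun y _ => hψ.differentiable one_ne_zero y)
    (fun y _ => (hv (x - y)).comp y (differentiableAt_id.const_sub x))
  simp only [fderiv_comp_const_sub hv, neg_apply, mul_neg, integral_neg,
    neg_inj] at hparts
  exact hparts.symm

theorem fderiv_mollify (hv : Differentiable ℝ v) (hv' : LocallyIntegrable (fderiv ℝ v)) :
    fderiv ℝ (mollify φ v) = mollify φ (fderiv ℝ v) := by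
  have hvl := hv.continuous.locallyIntegrable (μ := volume)
  have hψ : ContDiff ℝ 1 (φ.normed (volume : Measure E)) := φ.contDiff_normed
  have hcs : HasCompactSupport (φ.normed (volume : Measure E)) := φ.hasCompactSupport_normed
  ext x e
  have hconv := hcs.hasFDerivAt_convolution_left (ContinuousLinearMap.lsmul ℝ ℝ) hψ hvl x
  have hexists := (hcs.fderiv (𝕜 := ℝ)).convolutionExists_left
    ((ContinuousLinearMap.lsmul ℝ ℝ : ℝ →L[ℝ] ℝ →L[ℝ] ℝ).precompL E)
    (hψ.continuous_fderiv one_ne_zero) hvl x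
  rw [mollify, mollify, hconv.fderiv, convolution_def, convolution_lsmul,
    ContinuousLinearMap.integral_apply hexists,
    ContinuousLinearMap.integral_apply (integrable_normed_smul_comp_sub φ hv' x)]
  simpa using integral_fderiv_mul_comp_sub hψ hcs hv hv' x e

end Mollification

section Cutoff

theorem exists_seq_contDiffBump_rOut_tendsto_zero {E : Type*} [NormedAddCommGroup E] :
    ∃ φ : ℕ → ContDiffBump (0 : E), Tendsto (fun n => (φ n).rOut) atTop (𝓝 0) :=
  ⟨fun n => ⟨1 / ((n : ℝ) + 1) / 2, 1 / ((n : ℝ) + 1), by positivity,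
    half_lt_self (by positivity)⟩, tendsto_one_div_add_atTop_nhds_zero_nat⟩

theorem integrable_pow_of_hasCompactSupport {X : Type*} [TopologicalSpace X] [MeasurableSpace X]
    [OpensMeasurableSpace X] {μ : Measure X} [IsFiniteMeasureOnCompacts μ] {u : X → ℝ}
    (hu : Continuous u) (hcs : HasCompactSupport u) {k : ℕ} (hk : k ≠ 0) :
    Integrable (fun x => u x ^ k) μ :=
  (hu.pow k).integrable_of_hasCompactSupport (hcs.comp_left (g := (· ^ k)) (zero_pow hk))

variable {E : Type*} [NormedAddCommGroup E] [InnerProductSpace ℝ E]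

theorem exists_seq_cutoff [FiniteDimensional ℝ E] : ∃ (χ : ℕ → E → ℝ) (a : ℕ → ℝ),
    (∀ n, Differentiable ℝ (χ n)) ∧ (∀ n, HasCompactSupport (χ n)) ∧
      (∀ n x, χ n x ∈ Icc 0 1) ∧ (∀ n x, ‖fderiv ℝ (χ n) x‖ ≤ a n) ∧
      (∀ x, Tendsto (fun n => χ n x) atTop (𝓝 1)) ∧ Tendsto a atTop (𝓝 0) := by
  let φ : ContDiffBump (0 : E) := ⟨1, 2, one_pos, one_lt_two⟩
  have hφ : ContDiff ℝ 1 φ := φ.contDiff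
  obtain ⟨K, hK⟩ := hφ.lipschitzWith_of_hasCompactSupport φ.hasCompactSupport one_ne_zero
  let s : ℕ → ℝ := fun n => 1 / ((n : ℝ) + 1)
  have hs : Tendsto s atTop (𝓝 0) := tendsto_one_div_add_atTop_nhds_zero_nat
  have hs₀ (n : ℕ) : 0 < s n := by positivity
  refine ⟨fun n x => φ (s n • x), fun n => K * s n, fun n => ?_, fun n => ?_, fun n x => ?_,
    fun n x => ?_, fun x => ?_, by simpa using hs.const_mul (K : ℝ)⟩
  · exact (hφ.differentiable one_ne_zero).comp (differentiable_id.const_smul (s n))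
  · exact φ.hasCompactSupport.comp_smul (hs₀ n).ne'
  · exact ⟨φ.nonneg, φ.le_one⟩
  · have hlip : LipschitzWith (K * ‖s n‖₊) fun x => φ (s n • x) :=
      hK.comp (lipschitzWith_smul (s n))
    have h := norm_fderiv_le_of_lipschitz ℝ hlip (x₀ := x)
    rwa [NNReal.coe_mul, coe_nnnorm, Real.norm_of_nonneg (hs₀ n).le] at h
  · have hsx : Tendsto (fun n => s n • x) atTop (𝓝 0) := by simpa using hs.smul_const x
    have h := (hφ.continuous.tendsto 0).comp hsx
    rwa [φ.one_of_mem_closedBall (Metric.mem_closedBall_self φ.rIn_pos.le)] at h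

variable {u χ : E → ℝ} {a : ℝ}

theorem norm_fderiv_mul_sq_le {x : E} (hu : DifferentiableAt ℝ u x) (hχ : DifferentiableAt ℝ χ x)
    (hχ₁ : |χ x| ≤ 1) (ha : ‖fderiv ℝ χ x‖ ≤ a) : ‖fderiv ℝ (fun x => χ x * u x) x‖ ^ 2 ≤
      (1 + a) * ‖fderiv ℝ u x‖ ^ 2 + (a + a ^ 2) * u x ^ 2 := by
  have ha₀ : 0 ≤ a := (norm_nonneg _).trans ha
  have hle : ‖fderiv ℝ (fun x => χ x * u x) x‖ ≤ ‖fderiv ℝ u x‖ + a * |u x| := by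
    rw [fderiv_fun_mul hχ hu]
    refine (norm_add_le _ _).trans ?_
    rw [norm_smul, norm_smul, Real.norm_eq_abs, Real.norm_eq_abs, mul_comm a]
    gcongr
    exact mul_le_of_le_one_left (norm_nonneg _) hχ₁
  calc _ ≤ (‖fderiv ℝ u x‖ + a * |u x|) ^ 2 := pow_le_pow_left₀ (norm_nonneg _) hle 2
    _ ≤ _ := by
      nlinarith [mul_nonneg ha₀ (sq_nonneg (‖fderiv ℝ u x‖ - |u x|)), sq_abs (u x)]

variable [MeasurableSpace E] [BorelSpace E] {μ : Measure E}

theorem integrable_and_integral_norm_fderiv_mul_sq_le (hu : Differentiable ℝ u)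
    (hi : Integrable (fun x => u x ^ 2) μ) (hi' : Integrable (fun x => ‖fderiv ℝ u x‖ ^ 2) μ)
    (hχ : Differentiable ℝ χ) (hχ₁ : ∀ x, |χ x| ≤ 1) (ha : ∀ x, ‖fderiv ℝ χ x‖ ≤ a) :
    Integrable (fun x => ‖fderiv ℝ (fun x => χ x * u x) x‖ ^ 2) μ ∧
      ∫ x, ‖fderiv ℝ (fun x => χ x * u x) x‖ ^ 2 ∂μ ≤
        (1 + a) * (∫ x, ‖fderiv ℝ u x‖ ^ 2 ∂μ) + (a + a ^ 2) * ∫ x, u x ^ 2 ∂μ := by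
  have hle (x : E) := norm_fderiv_mul_sq_le (hu x) (hχ x) (hχ₁ x) (ha x)
  have hbound := (hi'.const_mul (1 + a)).add (hi.const_mul (a + a ^ 2))
  have hint : Integrable (fun x => ‖fderiv ℝ (fun x => χ x * u x) x‖ ^ 2) μ :=
    hbound.mono' ((measurable_fderiv ℝ _).norm.pow_const 2).aestronglyMeasurable
      (Eventually.of_forall fun x => (Real.norm_of_nonneg (sq_nonneg _)).trans_le (hle x))
  refine ⟨hint, (integral_mono hint hbound hle).trans_eq ?_⟩
  simp only [Pi.add_apply]
  rw [integral_add (hi'.const_mul _) (hi.const_mul _), integral_const_mul, integral_const_mul]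

end Cutoff

namespace ProfileGN

variable {C : ℝ} {u : ℝ² → ℝ}

theorem integral_le_of_hasCompactSupport (hC : ProfileGN C) (hC₀ : 0 ≤ C)
    (hu : Differentiable ℝ u) (hcs : HasCompactSupport u)
    (hu' : Integrable fun x => ‖fderiv ℝ u x‖ ^ 2) :
    ∫ x, u x ^ 4 ≤ C / (2 * Real.pi) * (∫ x, ‖fderiv ℝ u x‖ ^ 2) * ∫ x, u x ^ 2 := by
  have hsq := integrable_pow_of_hasCompactSupport (μ := volume) hu.continuous.norm hcs.norm
    two_ne_zero
  have hm' : AEStronglyMeasurable (fderiv ℝ u) := (measurable_fderiv ℝ u).aestronglyMeasurable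
  have hfderiv (φ : ContDiffBump (0 : ℝ²)) :=
    fderiv_mollify φ hu (locallyIntegrable_of_integrable_norm_sq hm' hu')
  obtain ⟨φ, hφ⟩ := exists_seq_contDiffBump_rOut_tendsto_zero (E := ℝ²)
  have hw (n : ℕ) : ContDiff ℝ 1 (mollify (φ n) u) :=
    contDiff_mollify _ hu.continuous.locallyIntegrable
  have hwc (n : ℕ) : HasCompactSupport (mollify (φ n) u) :=
    (φ n).hasCompactSupport_normed.convolution _ hcs
  refine (integral_le_of_tendsto_of_nonneg (G := fun n x => mollify (φ n) u x ^ 4)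
    (fun n => integrable_pow_of_hasCompactSupport (hw n).continuous (hwc n) four_ne_zero)
    (fun n => Eventually.of_forall fun x => Even.pow_nonneg (by decide) _)
    (Eventually.of_forall fun x => (ContDiffBump.convolution_tendsto_right_of_continuous hφ
      hu.continuous x).pow 4) (fun n => ?_) tendsto_const_nhds).2
  obtain ⟨K, hK⟩ := (hw n).lipschitzWith_of_hasCompactSupport (hwc n) one_ne_zero
  have hmass := integral_norm_mollify_sq_le (φ n) hu.continuous.aestronglyMeasurable hsq
  have henergy := integral_norm_mollify_sq_le (φ n) hm' hu'
  simp only [Real.norm_eq_abs, sq_abs] at hmass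
  rw [← hfderiv] at henergy
  refine (hC.integral_le_of_lipschitz hC₀ hK (hwc n)).trans ?_
  gcongr

theorem integral_le_of_differentiable (hC : ProfileGN C) (hC₀ : 0 ≤ C)
    (hu : Differentiable ℝ u) (hi : Integrable fun x => u x ^ 2)
    (hi' : Integrable fun x => ‖fderiv ℝ u x‖ ^ 2) :
    ∫ x, u x ^ 4 ≤ C / (2 * Real.pi) * (∫ x, ‖fderiv ℝ u x‖ ^ 2) * ∫ x, u x ^ 2 := by
  obtain ⟨χ, a, hχ, hχc, hχ₁, hχa, hχlim, ha⟩ := exists_seq_cutoff (E := ℝ²)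
  have hc (n : ℕ) : HasCompactSupport fun x => χ n x * u x := (hχc n).mul_right
  have hd (n : ℕ) : Differentiable ℝ fun x => χ n x * u x := (hχ n).mul hu
  have hmass (n : ℕ) : ∫ x, (χ n x * u x) ^ 2 ≤ ∫ x, u x ^ 2 := by
    refine integral_mono (integrable_pow_of_hasCompactSupport (hd n).continuous (hc n)
      two_ne_zero) hi fun x => ?_
    simp only [mul_pow]
    exact mul_le_of_le_one_left (sq_nonneg _) (pow_le_one₀ (hχ₁ n x).1 (hχ₁ n x).2)
  refine (integral_le_of_tendsto_of_nonneg (G := fun n x => (χ n x * u x) ^ 4)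
    (c := fun n => C / (2 * Real.pi) * ((1 + a n) * (∫ x, ‖fderiv ℝ u x‖ ^ 2) +
      (a n + a n ^ 2) * ∫ x, u x ^ 2) * ∫ x, u x ^ 2)
    (fun n => integrable_pow_of_hasCompactSupport (hd n).continuous (hc n) four_ne_zero)
    (fun n => Eventually.of_forall fun x => Even.pow_nonneg (by decide) _)
    (Eventually.of_forall fun x => ?_) (fun n => ?_) ?_).2
  · simpa only [one_mul] using ((hχlim x).mul_const (u x)).pow 4
  · obtain ⟨hint, henergy⟩ := integrable_and_integral_norm_fderiv_mul_sq_le hu hi hi' (hχ n)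
      (fun x => abs_le.2 ⟨by linarith [(hχ₁ n x).1], (hχ₁ n x).2⟩) (hχa n)
    refine (hC.integral_le_of_hasCompactSupport hC₀ (hd n) (hc n) hint).trans ?_
    have henergy₀ := (integral_nonneg fun x => sq_nonneg _).trans henergy
    gcongr ?_ * ?_
    · exact mul_le_mul_of_nonneg_left henergy (by positivity)
    · exact hmass n
  · have h := ((((ha.const_add 1).mul_const (∫ x, ‖fderiv ℝ u x‖ ^ 2)).add
      ((ha.add (ha.pow 2)).mul_const (∫ x, u x ^ 2))).const_mul
        (C / (2 * Real.pi))).mul_const (∫ x, u x ^ 2)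
    simpa using h

end ProfileGN

/-- The sharp Gagliardo–Nirenberg (Weinstein) inequality in 2D:
`∫|u|⁴ ≤ (2/a*) (∫|∇u|²)(∫|u|²)` where `a* = ‖Q‖²_{L²}` and `Q` is the positive radial
solution of `−ΔQ + Q − Q³ = 0`; the constant is sharp (equality holds for `Q`). -/
theorem stmt_11 (Q : EuclideanSpace ℝ (Fin 2) → ℝ)
    (hQpos : ∀ x, 0 < Q x)
    (hQrad : ∀ x y : EuclideanSpace ℝ (Fin 2), ‖x‖ = ‖y‖ → Q x = Q y)
    (hQsmooth : ContDiff ℝ 2 Q)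
    (hQL2 : Integrable (fun x => Q x ^ 2))
    (hQgrad : Integrable (fun x => ‖gradient Q x‖ ^ 2))
    (hQ4 : Integrable (fun x => Q x ^ 4))
    (hpde : ∀ x, -lap2 Q x + Q x - Q x ^ 3 = 0)
    (astar : ℝ) (hastar : astar = ∫ x, Q x ^ 2) :
    (∀ u : EuclideanSpace ℝ (Fin 2) → ℝ, Differentiable ℝ u →
      Integrable (fun x => u x ^ 2) → Integrable (fun x => ‖gradient u x‖ ^ 2) →
      Integrable (fun x => u x ^ 4) →
      (∫ x, u x ^ 4) ≤ (2 / astar) * (∫ x, ‖gradient u x‖ ^ 2) * (∫ x, u x ^ 2)) ∧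
    (∫ x, Q x ^ 4) = (2 / astar) * (∫ x, ‖gradient Q x‖ ^ 2) * (∫ x, Q x ^ 2) := by
  have hQ := isGroundProfile_radialPart hQpos hQrad hQsmooth hQL2 hQgrad hQ4 hpde
  have hmass := hQ.mass_pos
  have hastar' := hastar.trans (integral_pow_eq_radialPart hQrad 2)
  refine ⟨fun u hu hi hi' _ => ?_, ?_⟩
  · simp only [norm_gradient] at hi' ⊢
    refine (hQ.profileGN.integral_le_of_differentiable (by positivity) hu hi hi').trans_eq ?_
    rw [hastar', div_div, mul_comm (2 * Real.pi)]
  · rw [integral_pow_eq_radialPart hQrad 4, integral_pow_eq_radialPart hQrad 2,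
      integral_sq_norm_gradient_eq_radialPart hQrad, hQ.integral_quartic, hQ.integral_deriv_sq,
      hastar']
    field_simp
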